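/- Let k ≥ 4 be an even integer such that every plane graph H with Δ*(H) ≤ k has a cyclic colouring using at most (3/2)k colours. Then for every planar simple graph G satisfying χ_k(G) ≤ ⌊(Δ(G) − 1)/k⌋ + 3, we have χ(G²) = χ_1(G) ≤ ⌊(3/2)·Δ(G)⌋ + (9/2)k − 1. -/

import Mathlib

open SimpleGraph

/-- A drawing of a simple graph in the plane: vertices are mapped to distinct points,
edges to arcs (injective continuous curves parametrised on `[0,1]`) joining the images of
their endpoints, whose interiors avoid the vertex points and each other. -/
structure PlaneEmbedding {V : Type*} (G : SimpleGraph V) where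
  pos : V → ℝ × ℝ
  inj : Function.Injective pos
  arc : G.edgeSet → ℝ → ℝ × ℝ
  arc_cont : ∀ e, ContinuousOn (arc e) (Set.Icc 0 1)
  arc_inj : ∀ e, Set.InjOn (arc e) (Set.Icc 0 1)
  arc_ends : ∀ e : G.edgeSet, ∃ u v : V, (e : Sym2 V) = s(u, v) ∧
      arc e 0 = pos u ∧ arc e 1 = pos v
  arc_avoid : ∀ e : G.edgeSet, ∀ t ∈ Set.Ioo (0:ℝ) 1, arc e t ∉ Set.range pos
  arc_disjoint : ∀ e f : G.edgeSet, e ≠ f → ∀ s ∈ Set.Ioo (0:ℝ) 1, ∀ t ∈ Set.Ioo (0:ℝ) 1,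
      arc e s ≠ arc f t

/-- A graph is planar if it admits a drawing in the plane. -/
def SimpleGraph.IsPlanar {V : Type*} (G : SimpleGraph V) : Prop :=
  Nonempty (PlaneEmbedding G)

/-- A `k`-frugal colouring: a proper vertex colouring in which no colour appears more than
`k` times in the neighbourhood of any vertex. -/
def SimpleGraph.IsFrugalColoring {V α : Type*} (G : SimpleGraph V) (k : ℕ) (c : V → α) : Prop :=
  (∀ u v, G.Adj u v → c u ≠ c v) ∧
  ∀ (v : V) (a : α), {u | u ∈ G.neighborSet v ∧ c u = a}.ncard ≤ k

/-- The `k`-frugal chromatic number `χ_k(G)`: the least number of colours in a `k`-frugal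
colouring of `G`. -/
noncomputable def SimpleGraph.frugalChromaticNumber {V : Type*} (G : SimpleGraph V) (k : ℕ) : ℕ :=
  sInf {n : ℕ | ∃ c : V → ℕ, (∀ v, c v < n) ∧ G.IsFrugalColoring k c}

/-- The square of a graph: two distinct vertices are adjacent iff they are at distance
at most two in `G`. -/
def SimpleGraph.square {V : Type*} (G : SimpleGraph V) : SimpleGraph V :=
  SimpleGraph.fromRel (fun u v => G.Adj u v ∨ ∃ w, G.Adj u w ∧ G.Adj w v)

/-- The set of points of the plane used by a drawing of a graph. -/
def PlaneEmbedding.drawing {V : Type*} {G : SimpleGraph V} (emb : PlaneEmbedding G) :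
    Set (ℝ × ℝ) :=
  Set.range emb.pos ∪ ⋃ e : G.edgeSet, emb.arc e '' Set.Icc 0 1

/-- A face of a plane drawing: a connected component of the complement of the drawing. -/
def PlaneEmbedding.IsFace {V : Type*} {G : SimpleGraph V} (emb : PlaneEmbedding G)
    (F : Set (ℝ × ℝ)) : Prop :=
  ∃ x ∉ emb.drawing, F = connectedComponentIn emb.drawingᶜ x

/-- A vertex is incident with a face if its point lies on the boundary (closure) of
the face. -/
def PlaneEmbedding.IncidentFace {V : Type*} {G : SimpleGraph V} (emb : PlaneEmbedding G)
    (v : V) (F : Set (ℝ × ℝ)) : Prop :=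
  emb.pos v ∈ closure F

/-- `Δ*(emb) ≤ k` : every face of the plane drawing is incident with at most `k` vertices. -/
def PlaneEmbedding.MaxFaceSizeLE {V : Type*} {G : SimpleGraph V} (emb : PlaneEmbedding G)
    (k : ℕ) : Prop :=
  ∀ F, emb.IsFace F → {v : V | emb.IncidentFace v F}.ncard ≤ k

/-- A cyclic colouring of a plane graph with at most `n` colours: any two distinct vertices
incident with a common face get distinct colours. -/
def PlaneEmbedding.HasCyclicColoring {V : Type*} {G : SimpleGraph V} (emb : PlaneEmbedding G)
    (n : ℕ) : Prop :=
  ∃ c : V → ℕ, (∀ v, c v < n) ∧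
    ∀ F, emb.IsFace F → ∀ u v, u ≠ v →
      emb.IncidentFace u F → emb.IncidentFace v F → c u ≠ c v

/-!
The classes of a `k`-frugal coloring of `G` are independent sets containing at most `k` neighbors
of each vertex, so it suffices to color each class with `3 * k / 2` colors such that vertices with
a common neighbor get different colors: the square of `G` then needs at most `χ_k(G) * (3 * k / 2)`
colors.

The members of a class, with the arcs leaving them, are disjoint stars in the plane. Thicken every
neighbor to an open square and every star to a connected set of points of a fine lattice, and let
the other lattice points on the boundaries of the squares join these sets. With auxiliary labels at
the lattice points still left, this labels a finite lattice region by the vertices of the class; the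
face formed by the square of a neighbor `t` touches exactly the labels of vertices adjacent to `t`,
and no other face touches more than four labels. It remains to color the labels so that those
touching a common face differ.

To find it, cut the labeled map along closed lattice curves through at most two labels until no such
curve exists; both sides of a cut carry these labels, so their colorings can be matched. Then the
edges within each labeled set form a tree, and shrinking these trees to points, one leaf edge at a
time, turns the map into a plane graph on the labels whose faces are incident with the labels that
touched the corresponding faces. A cyclic coloring of this plane graph is a coloring of the map.
-/

/-- The subgraph of the edges of `G` whose two ends carry the same label. -/
def sameLabel {V X : Type*} (G : SimpleGraph V) (l : V → X) : SimpleGraph V where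
  Adj a b := G.Adj a b ∧ l a = l b
  symm := ⟨fun _ _ h => ⟨h.1.symm, h.2.symm⟩⟩
  loopless := ⟨fun _ h => h.1.ne rfl⟩

namespace GridMap

/-- Two points of the integer lattice at distance one. -/
def LatticeAdj (u v : ℤ × ℤ) : Prop :=
  (u.1 = v.1 ∧ (v.2 = u.2 + 1 ∨ u.2 = v.2 + 1)) ∨ (u.2 = v.2 ∧ (v.1 = u.1 + 1 ∨ u.1 = v.1 + 1))

/-- `w` is a corner of the unit cell `p`; a unit cell is named by its lower left corner. -/
def Corner (p w : ℤ × ℤ) : Prop :=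
  (w.1 = p.1 ∨ w.1 = p.1 + 1) ∧ (w.2 = p.2 ∨ w.2 = p.2 + 1)

/-- The unit cells `p` and `q` share the lattice edge `ab`. Each edge occurs with only one
orientation and one order of its two cells. -/
inductive Across : ℤ × ℤ → ℤ × ℤ → ℤ × ℤ → ℤ × ℤ → Prop
  | right (i j : ℤ) : Across (i, j) (i + 1, j) (i + 1, j) (i + 1, j + 1)
  | up (i j : ℤ) : Across (i, j) (i, j + 1) (i, j + 1) (i + 1, j + 1)

/-- One can step from the cell `p` to the cell `q` without crossing an edge of `D`. -/
def CellStep (D : SimpleGraph (ℤ × ℤ)) (p q : ℤ × ℤ) : Prop :=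
  ∃ a b, Across p q a b ∧ ¬ D.Adj a b

/-- The cells `p` and `q` lie in the same face of `D`. -/
def SameFace (D : SimpleGraph (ℤ × ℤ)) : ℤ × ℤ → ℤ × ℤ → Prop :=
  Relation.EqvGen (CellStep D)

theorem LatticeAdj.symm {u v : ℤ × ℤ} (h : LatticeAdj u v) : LatticeAdj v u := by
  unfold LatticeAdj at *; omega

theorem LatticeAdj.exists_across {u v : ℤ × ℤ} (h : LatticeAdj u v) :
    ∃ p q, Across p q u v ∨ Across p q v u := by
  obtain ⟨a, b⟩ := u
  obtain ⟨c, d⟩ := v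
  simp only [LatticeAdj] at h
  rcases h with ⟨rfl, rfl | rfl⟩ | ⟨rfl, rfl | rfl⟩
  · exact ⟨_, _, Or.inl (by simpa using Across.right (a - 1) b)⟩
  · exact ⟨_, _, Or.inr (by simpa using Across.right (a - 1) d)⟩
  · exact ⟨_, _, Or.inl (by simpa using Across.up a (b - 1))⟩
  · exact ⟨_, _, Or.inr (by simpa using Across.up c (b - 1))⟩

theorem Across.corner {p q a b : ℤ × ℤ} (h : Across p q a b) :
    Corner p a ∧ Corner p b ∧ Corner q a ∧ Corner q b := by
  cases h <;> simp [Corner]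

theorem Across.latticeAdj {p q a b : ℤ × ℤ} (h : Across p q a b) : LatticeAdj a b := by
  cases h <;> simp [LatticeAdj]

theorem across_iff {p q a b : ℤ × ℤ} : Across p q a b ↔
    (q.1 = p.1 + 1 ∧ q.2 = p.2 ∧ a.1 = p.1 + 1 ∧ a.2 = p.2 ∧ b.1 = p.1 + 1 ∧ b.2 = p.2 + 1) ∨
    (q.1 = p.1 ∧ q.2 = p.2 + 1 ∧ a.1 = p.1 ∧ a.2 = p.2 + 1 ∧ b.1 = p.1 + 1 ∧ b.2 = p.2 + 1) := by
  constructor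
  · intro h
    cases h <;> simp
  · obtain ⟨i, j⟩ := p
    obtain ⟨i', j'⟩ := q
    obtain ⟨c, d⟩ := a
    obtain ⟨c', d'⟩ := b
    dsimp only
    rintro (⟨rfl, rfl, rfl, rfl, rfl, rfl⟩ | ⟨rfl, rfl, rfl, rfl, rfl, rfl⟩)
    · exact Across.right _ _
    · exact Across.up _ _

theorem Across.eq_of_sym2_eq {p q p' q' a b a' b' : ℤ × ℤ} (h : Across p q a b)
    (h' : Across p' q' a' b') (he : s(a, b) = s(a', b')) : p = p' ∧ q = q' := by
  rw [across_iff] at h h'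
  simp only [Sym2.eq_iff, Prod.ext_iff] at he ⊢
  omega

theorem Corner.apply_eq {α : Type*} {f : ℤ × ℤ → α} {q w : ℤ × ℤ} (hq : Corner q w)
    (hf : ∀ p q a b, Across p q a b → w = a ∨ w = b → f p = f q) : f q = f w := by
  obtain ⟨i, j⟩ := w
  obtain ⟨i', j'⟩ := q
  have left := hf _ _ _ _ (Across.right (i - 1) j) (Or.inl (by simp))
  have lowerLeft := hf _ _ _ _ (Across.up (i - 1) (j - 1)) (Or.inr (by simp))
  have lower := hf _ _ _ _ (Across.up i (j - 1)) (Or.inl (by simp))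
  simp only [sub_add_cancel] at left lower lowerLeft
  simp only [Corner] at hq
  obtain ⟨rfl | rfl, rfl | rfl⟩ := hq
  · rfl
  · simpa using lower
  · simpa using left
  · simpa using lowerLeft.trans (by simpa using left)

theorem SameFace.apply_eq {α : Type*} {D : SimpleGraph (ℤ × ℤ)} {f : ℤ × ℤ → α}
    (hf : ∀ p q, CellStep D p q → f p = f q) {p q : ℤ × ℤ} (h : SameFace D p q) : f p = f q := by
  induction h with
  | rel _ _ h => exact hf _ _ h
  | refl => rfl
  | symm _ _ _ ih => exact ih.symm
  | trans _ _ _ _ _ ih₁ ih₂ => exact ih₁.trans ih₂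

theorem SameFace.anti {D D' : SimpleGraph (ℤ × ℤ)} (h : D ≤ D') {p q : ℤ × ℤ}
    (hpq : SameFace D' p q) : SameFace D p q :=
  hpq.mono fun _ _ ⟨a, b, hacr, hab⟩ => ⟨a, b, hacr, fun hD => hab (h hD)⟩

/-! ### Parity of a closed lattice walk -/

/-- Contribution of the lattice edge `uv` to the number, modulo two, of crossings with a leftward
ray from the center of the cell `p`. -/
def crossing (u v p : ℤ × ℤ) : ZMod 2 :=
  if u.1 = v.1 ∧ min u.2 v.2 = p.2 ∧ u.1 ≤ p.1 then 1 else 0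

/-- Indicator of the leftward lattice ray from `(i, j)`; it corrects the count of `crossing` for
walks that are not closed. -/
def rayIndicator (i j : ℤ) (v : ℤ × ℤ) : ZMod 2 := if v.1 ≤ i ∧ v.2 = j then 1 else 0

theorem crossing_right {u v : ℤ × ℤ} (h : LatticeAdj u v) (i j : ℤ) :
    crossing u v (i, j) + crossing u v (i + 1, j) =
      if s(u, v) = s((i + 1, j), (i + 1, j + 1)) then 1 else 0 := by
  obtain ⟨a, b⟩ := u
  obtain ⟨c, d⟩ := v
  simp only [LatticeAdj, crossing, Sym2.eq_iff, Prod.mk.injEq] at *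
  split_ifs <;> first | omega | decide

theorem crossing_up {u v : ℤ × ℤ} (h : LatticeAdj u v) (i j : ℤ) :
    crossing u v (i, j) + crossing u v (i, j + 1) =
      rayIndicator i (j + 1) u + rayIndicator i (j + 1) v +
      if s(u, v) = s((i, j + 1), (i + 1, j + 1)) then 1 else 0 := by
  obtain ⟨a, b⟩ := u
  obtain ⟨c, d⟩ := v
  simp only [LatticeAdj, crossing, rayIndicator, Sym2.eq_iff, Prod.mk.injEq] at *
  split_ifs <;> first | omega | decide

theorem exists_parity_of_reachable {Γ : SimpleGraph (ℤ × ℤ)}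
    (hΓ : ∀ u v, Γ.Adj u v → LatticeAdj u v) {u v : ℤ × ℤ} (h : Γ.Reachable u v) :
    ∃ P : ℤ × ℤ → ZMod 2,
      (∀ i j, ¬ Γ.Adj (i + 1, j) (i + 1, j + 1) → P (i, j) + P (i + 1, j) = 0) ∧
      (∀ i j, ¬ Γ.Adj (i, j + 1) (i + 1, j + 1) →
        P (i, j) + P (i, j + 1) = rayIndicator i (j + 1) u + rayIndicator i (j + 1) v) := by
  induction h.some with
  | nil => exact ⟨0, by simp, by simp [CharTwo.add_self_eq_zero]⟩
  | @cons a b c hab w ih =>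
    obtain ⟨P, hr, hu⟩ := ih w.reachable
    refine ⟨fun p => P p + crossing a b p, fun i j hij => ?_, fun i j hij => ?_⟩
    · have hcross := crossing_right (hΓ _ _ hab) i j
      rw [if_neg fun h => hij (by rw [← mem_edgeSet, ← h]; exact hab)] at hcross
      linear_combination hr i j hij + hcross
    · have hcross := crossing_up (hΓ _ _ hab) i j
      rw [if_neg fun h => hij (by rw [← mem_edgeSet, ← h]; exact hab)] at hcross
      linear_combination hu i j hij + hcross +
        CharTwo.add_self_eq_zero (rayIndicator i (j + 1) b)

/-- The combinatorial half of the Jordan curve theorem: `uv` closes up a walk of `Γ`, and `P` counts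
modulo two how often the closed walk winds around a cell. -/
theorem exists_sides_of_reachable {Γ : SimpleGraph (ℤ × ℤ)}
    (hΓ : ∀ u v, Γ.Adj u v → LatticeAdj u v)
    {u v : ℤ × ℤ} (huv : LatticeAdj u v) (hr : Γ.Reachable u v) :
    ∃ P : ℤ × ℤ → ZMod 2, ∀ p q a b, Across p q a b → ¬ Γ.Adj a b →
      (P p ≠ P q ↔ s(u, v) = s(a, b)) := by
  obtain ⟨P, hP, hP'⟩ := exists_parity_of_reachable hΓ hr
  have ne_iff_add : ∀ x y : ZMod 2, x ≠ y ↔ x + y = 1 := by decide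
  refine ⟨fun p => P p + crossing u v p, fun p q a b hpq hab => ?_⟩
  rw [ne_iff_add]
  cases hpq with
  | right i j =>
    have hsum : P (i, j) + crossing u v (i, j) + (P (i + 1, j) + crossing u v (i + 1, j)) =
        if s(u, v) = s((i + 1, j), (i + 1, j + 1)) then 1 else 0 := by
      linear_combination hP i j hab + crossing_right huv i j
    rw [hsum]; split_ifs <;> simp_all
  | up i j =>
    have hsum : P (i, j) + crossing u v (i, j) + (P (i, j + 1) + crossing u v (i, j + 1)) =
        if s(u, v) = s((i, j + 1), (i + 1, j + 1)) then 1 else 0 := by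
      linear_combination hP' i j hab + crossing_up huv i j +
        CharTwo.add_self_eq_zero (rayIndicator i (j + 1) u) +
        CharTwo.add_self_eq_zero (rayIndicator i (j + 1) v)
    rw [hsum]; split_ifs <;> simp_all

end GridMap

/-- A drawing in the integer lattice of a graph whose vertices are blobs of lattice points: the
vertices of the graph are the labels in `X`, the points of the finite set `W` are labeled by
`lab`, and the points with a given label are connected by edges of `D` among them. The edges of
`D` joining points with different labels are the edges of the graph. -/
structure GridMap (X : Type*) where
  W : Set (ℤ × ℤ)
  D : SimpleGraph (ℤ × ℤ)
  lab : ℤ × ℤ → X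
  finite : W.Finite
  lattice : ∀ u v, D.Adj u v → GridMap.LatticeAdj u v
  mem_left : ∀ u v, D.Adj u v → u ∈ W
  conn : ∀ u ∈ W, ∀ v ∈ W, lab u = lab v → (sameLabel D lab).Reachable u v

namespace GridMap

variable {X : Type*} (M : GridMap X)

/-- The edges inside the blobs. -/
abbrev mono : SimpleGraph (ℤ × ℤ) := sameLabel M.D M.lab

/-- The labels touched by the face containing the cell `p`. -/
def touched (p : ℤ × ℤ) : Set X :=
  {x | ∃ q, SameFace M.D p q ∧ ∃ w ∈ M.W, Corner q w ∧ M.lab w = x}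

/-- `M` has a cyclic coloring with `n` colors. -/
def Colorable (n : ℕ) : Prop := ∃ c : X → Fin n, ∀ p, Set.InjOn c (M.touched p)

/-- The edges of `D`, other than `uv`, inside the union of the blobs of `u` and `v`. -/
def joinGraph (u v : ℤ × ℤ) : SimpleGraph (ℤ × ℤ) where
  Adj a b := M.D.Adj a b ∧ s(u, v) ≠ s(a, b) ∧
    M.lab a ∈ ({M.lab u, M.lab v} : Set X) ∧ M.lab b ∈ ({M.lab u, M.lab v} : Set X)
  symm := ⟨fun _ _ h => ⟨h.1.symm, fun he => h.2.1 (he.trans Sym2.eq_swap), h.2.2.2, h.2.2.1⟩⟩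
  loopless := ⟨fun _ h => h.1.ne rfl⟩

/-- `M` is irreducible if no edge of `D` closes a cycle through the blobs of its ends. In other
words, contracting the blobs creates neither loops nor multiple edges. -/
def Irreducible : Prop := ∀ u v, M.D.Adj u v → ¬ (M.joinGraph u v).Reachable u v

variable {M}

theorem mem_right {u v : ℤ × ℤ} (h : M.D.Adj u v) : v ∈ M.W := M.mem_left _ _ h.symm

theorem finite_edgeSet : M.D.edgeSet.Finite := by
  refine ((M.finite.prod M.finite).image fun p => s(p.1, p.2)).subset fun e he => ?_
  induction e with
  | _ u v => exact ⟨(u, v), ⟨M.mem_left _ _ he, mem_right he⟩, rfl⟩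

theorem finite_touched (p : ℤ × ℤ) : (M.touched p).Finite :=
  (M.finite.image M.lab).subset fun _ ⟨_, _, w, hw, _, h⟩ => ⟨w, hw, h⟩

variable (M) in
/-- A closed curve in `M`: an edge `uv` together with a walk through the blobs of its ends, recorded
by the function `P` telling on which side of the curve a cell lies. Cutting `M` along the curve is
the inductive step of the reduction to irreducible maps. -/
structure Cut where
  u : ℤ × ℤ
  v : ℤ × ℤ
  adj : M.D.Adj u v
  reachable : (M.joinGraph u v).Reachable u v
  P : ℤ × ℤ → ZMod 2
  ne_iff : ∀ p q a b, Across p q a b → ¬ (M.joinGraph u v).Adj a b →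
    (P p ≠ P q ↔ s(u, v) = s(a, b))

theorem nonempty_cut_of_not_irreducible (h : ¬ M.Irreducible) : Nonempty M.Cut := by
  unfold Irreducible at h
  push Not at h
  obtain ⟨u, v, huv, hreach⟩ := h
  obtain ⟨P, hP⟩ :=
    exists_sides_of_reachable (Γ := M.joinGraph u v) (fun a b h => M.lattice a b h.1)
      (M.lattice u v huv) hreach
  exact ⟨⟨u, v, huv, hreach, P, hP⟩⟩

namespace Cut

variable (K : M.Cut) {ε : ZMod 2} {p q a b w : ℤ × ℤ}

/-- The labels of the two blobs through which the cutting curve runs. -/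
def labels : Set X := {M.lab K.u, M.lab K.v}

/-- The lattice points kept on the side `ε`: those of the two blobs on the curve and those on the
side `ε` of it. The value of `P` at the cell `w` is the side of the point `w`, by
`Cut.P_eq_of_corner`. -/
def Keeps (ε : ZMod 2) (w : ℤ × ℤ) : Prop := M.lab w ∈ K.labels ∨ K.P w = ε

theorem lab_u_mem_labels : M.lab K.u ∈ K.labels := Set.mem_insert _ _

theorem lab_v_mem_labels : M.lab K.v ∈ K.labels := Set.mem_insert_of_mem _ rfl

theorem P_ne_iff_of_lab_notMem (hpq : Across p q a b)
    (h : M.lab a ∉ K.labels ∨ M.lab b ∉ K.labels) : K.P p ≠ K.P q ↔ s(K.u, K.v) = s(a, b) :=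
  K.ne_iff p q a b hpq fun hab => h.elim (fun h => h hab.2.2.1) (fun h => h hab.2.2.2)

theorem P_eq_of_corner (hw : M.lab w ∉ K.labels) (hq : Corner q w) : K.P q = K.P w := by
  refine hq.apply_eq fun p q a b hpq hwab => ?_
  have hab : M.lab a ∉ K.labels ∨ M.lab b ∉ K.labels :=
    hwab.imp (fun h => by rwa [← h]) (fun h => by rwa [← h])
  by_contra hne
  rcases Sym2.eq_iff.1 ((K.P_ne_iff_of_lab_notMem hpq hab).1 hne) with ⟨rfl, rfl⟩ | ⟨rfl, rfl⟩ <;>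
    rcases hab with h | h <;>
    first | exact h K.lab_u_mem_labels | exact h K.lab_v_mem_labels

theorem keeps_of_corner (hq : Corner q w) : K.Keeps (K.P q) w := by
  by_cases hw : M.lab w ∈ K.labels
  · exact Or.inl hw
  · exact Or.inr (K.P_eq_of_corner hw hq).symm

theorem P_eq_of_mono_adj (h : M.mono.Adj a b) (ha : M.lab a ∉ K.labels) : K.P a = K.P b := by
  obtain ⟨p, q, hpq⟩ := (M.lattice a b h.1).exists_across
  have hcorner : Corner p a ∧ Corner p b := by rcases hpq with h | h <;> have := h.corner <;> tauto
  rw [← K.P_eq_of_corner ha hcorner.1, K.P_eq_of_corner (h.2 ▸ ha) hcorner.2]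

theorem P_eq_of_cellStep (h : CellStep M.D p q) : K.P p = K.P q := by
  obtain ⟨a, b, hpq, hab⟩ := h
  by_contra hne
  have he := (K.ne_iff p q a b hpq fun h => hab h.1).1 hne
  exact hab (by rw [← mem_edgeSet, ← he]; exact K.adj)

theorem P_eq_of_lab_eq {w w' : ℤ × ℤ} (hw : w ∈ M.W) (hw' : w' ∈ M.W) (h : M.lab w = M.lab w')
    (hlab : M.lab w ∉ K.labels) : K.P w = K.P w' := by
  obtain ⟨r⟩ := M.conn w hw w' hw' h
  clear hw hw' h
  induction r with
  | nil => rfl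
  | cons h _ ih => exact (K.P_eq_of_mono_adj h hlab).trans (ih (h.2 ▸ hlab))

/-- The edges of `D` kept on the side `ε`; the edge `uv` is deleted. -/
def sideGraph (ε : ZMod 2) : SimpleGraph (ℤ × ℤ) where
  Adj a b := M.D.Adj a b ∧ s(K.u, K.v) ≠ s(a, b) ∧ K.Keeps ε a ∧ K.Keeps ε b
  symm := ⟨fun _ _ h => ⟨h.1.symm, fun he => h.2.1 (he.trans Sym2.eq_swap), h.2.2.2, h.2.2.1⟩⟩
  loopless := ⟨fun _ h => h.1.ne rfl⟩

theorem sideGraph_le (ε : ZMod 2) : K.sideGraph ε ≤ M.D := fun _ _ h => h.1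

theorem joinGraph_le_sideGraph (ε : ZMod 2) : M.joinGraph K.u K.v ≤ K.sideGraph ε :=
  fun _ _ h => ⟨h.1, h.2.1, Or.inl h.2.2.1, Or.inl h.2.2.2⟩

theorem keeps_of_mono_adj (h : M.mono.Adj a b) (ha : K.Keeps ε a) : K.Keeps ε b := by
  by_cases hlab : M.lab a ∈ K.labels
  · exact Or.inl (h.2 ▸ hlab)
  · exact Or.inr (K.P_eq_of_mono_adj h hlab ▸ ha.resolve_left hlab)

theorem reachable_of_mono_adj (h : M.mono.Adj a b) (ha : K.Keeps ε a) :
    (sameLabel (K.sideGraph ε) M.lab).Reachable a b := by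
  by_cases he : s(K.u, K.v) = s(a, b)
  · have huv : M.lab K.u = M.lab K.v := by
      rcases Sym2.eq_iff.1 he with ⟨hu, hv⟩ | ⟨hu, hv⟩
      · rw [hu, hv, h.2]
      · rw [hu, hv, h.2]
    have hle : M.joinGraph K.u K.v ≤ sameLabel (K.sideGraph ε) M.lab := fun c d hcd => by
      refine ⟨K.joinGraph_le_sideGraph ε hcd, ?_⟩
      have hlab := hcd.2.2
      rw [huv, Set.pair_eq_singleton] at hlab
      exact hlab.1.trans hlab.2.symm
    have hreach := K.reachable.mono hle
    rcases Sym2.eq_iff.1 he with ⟨hu, hv⟩ | ⟨hu, hv⟩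
    · exact hu ▸ hv ▸ hreach
    · exact (hu ▸ hv ▸ hreach).symm
  · exact Adj.reachable ⟨⟨h.1, he, ha, K.keeps_of_mono_adj h ha⟩, h.2⟩

/-- The part of `M` on the side `ε` of the curve. -/
def side (ε : ZMod 2) : GridMap X where
  W := {w ∈ M.W | K.Keeps ε w}
  D := K.sideGraph ε
  lab := M.lab
  finite := M.finite.subset fun _ h => h.1
  lattice a b h := M.lattice a b h.1
  mem_left a b h := ⟨M.mem_left a b h.1, h.2.2.1⟩
  conn := by
    rintro a ⟨ha, hkeeps⟩ b ⟨hb, -⟩ hab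
    obtain ⟨w⟩ := M.conn a ha b hb hab
    clear ha hb hab
    induction w with
    | nil => rfl
    | cons h _ ih =>
      exact (K.reachable_of_mono_adj h hkeeps).trans (ih (K.keeps_of_mono_adj h hkeeps))

theorem ncard_edgeSet_side_lt (ε : ZMod 2) :
    (K.side ε).D.edgeSet.ncard < M.D.edgeSet.ncard := by
  refine Set.ncard_lt_ncard ⟨edgeSet_mono (K.sideGraph_le ε), fun h => ?_⟩ finite_edgeSet
  have huv : (K.sideGraph ε).Adj K.u K.v := h (M.D.mem_edgeSet.2 K.adj)
  exact huv.2.1 rfl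

theorem touched_subset_touched_side (p : ℤ × ℤ) : M.touched p ⊆ (K.side (K.P p)).touched p := by
  rintro x ⟨q, hpq, w, hw, hqw, rfl⟩
  have hside : K.P p = K.P q := hpq.apply_eq fun _ _ => K.P_eq_of_cellStep
  exact ⟨q, hpq.anti (K.sideGraph_le _), w, ⟨hw, hside ▸ K.keeps_of_corner hqw⟩, hqw, rfl⟩

theorem exists_edgeCell (ε : ZMod 2) : ∃ r, Corner r K.u ∧ Corner r K.v ∧ ∀ p q a b,
    Across p q a b → s(K.u, K.v) = s(a, b) → (K.P p = ε → p = r) ∧ (K.P q = ε → q = r) := by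
  have eq_or_eq : ∀ x y : ZMod 2, x ≠ y → x = ε ∨ y = ε := by revert ε; decide
  obtain ⟨p₀, q₀, a₀, b₀, hacr, he⟩ : ∃ p q a b, Across p q a b ∧ s(K.u, K.v) = s(a, b) := by
    obtain ⟨p, q, h | h⟩ := (M.lattice _ _ K.adj).exists_across
    · exact ⟨p, q, _, _, h, rfl⟩
    · exact ⟨p, q, _, _, h, Sym2.eq_swap⟩
  have hcorner : Corner p₀ K.u ∧ Corner p₀ K.v ∧ Corner q₀ K.u ∧ Corner q₀ K.v := by
    have := hacr.corner
    rcases Sym2.eq_iff.1 he with ⟨hu, hv⟩ | ⟨hu, hv⟩ <;> rw [hu, hv] <;> tauto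
  have hne : K.P p₀ ≠ K.P q₀ := (K.ne_iff _ _ _ _ hacr fun h => h.2.1 he).2 he
  rcases eq_or_eq _ _ hne with h | h
  · refine ⟨p₀, hcorner.1, hcorner.2.1, fun p q a b hpq hab => ?_⟩
    obtain ⟨rfl, rfl⟩ := hacr.eq_of_sym2_eq hpq (he.symm.trans hab)
    exact ⟨fun _ => rfl, fun h' => (hne (h.trans h'.symm)).elim⟩
  · refine ⟨q₀, hcorner.2.2.1, hcorner.2.2.2, fun p q a b hpq hab => ?_⟩
    obtain ⟨rfl, rfl⟩ := hacr.eq_of_sym2_eq hpq (he.symm.trans hab)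
    exact ⟨fun h' => (hne (h'.trans h.symm)).elim, fun _ => rfl⟩

/-- The cell on the side `ε` of the edge `uv`. -/
noncomputable def edgeCell (ε : ZMod 2) : ℤ × ℤ := (K.exists_edgeCell ε).choose

theorem corner_edgeCell_u : Corner (K.edgeCell ε) K.u := (K.exists_edgeCell ε).choose_spec.1

theorem corner_edgeCell_v : Corner (K.edgeCell ε) K.v := (K.exists_edgeCell ε).choose_spec.2.1

theorem eq_edgeCell_of_across (hpq : Across p q a b) (he : s(K.u, K.v) = s(a, b)) :
    (K.P p = ε → p = K.edgeCell ε) ∧ (K.P q = ε → q = K.edgeCell ε) :=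
  (K.exists_edgeCell ε).choose_spec.2.2 p q a b hpq he

/-- The retraction of the cells onto the side `ε` of the curve, collapsing the other side to the
cell at the edge `uv`: in `K.side ε` the whole other side belongs to the face containing it. -/
noncomputable def retract (ε : ZMod 2) (p : ℤ × ℤ) : ℤ × ℤ :=
  if K.P p = ε then p else K.edgeCell ε

theorem sameFace_retract_of_cellStep (h : CellStep (K.side ε).D p q) :
    SameFace M.D (K.retract ε p) (K.retract ε q) := by
  obtain ⟨a, b, hpq, hab⟩ := h
  have hcross : K.P p ≠ K.P q → s(K.u, K.v) = s(a, b) :=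
    (K.ne_iff p q a b hpq fun h => hab (K.joinGraph_le_sideGraph ε h)).1
  unfold retract
  split_ifs with hp hq hq
  · refine .rel _ _ ⟨a, b, hpq, fun hD => hab ⟨hD, fun he => ?_, ?_, ?_⟩⟩
    · exact (K.ne_iff p q a b hpq fun h => h.2.1 he).2 he (hp.trans hq.symm)
    · exact hp ▸ K.keeps_of_corner hpq.corner.1
    · exact hp ▸ K.keeps_of_corner hpq.corner.2.1
  · rw [← (K.eq_edgeCell_of_across hpq (hcross fun h => hq (h ▸ hp))).1 hp]
    exact .refl _
  · rw [← (K.eq_edgeCell_of_across hpq (hcross fun h => hp (h ▸ hq))).2 hq]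
    exact .refl _
  · exact .refl _

theorem sameFace_retract (h : SameFace (K.side ε).D p q) :
    SameFace M.D (K.retract ε p) (K.retract ε q) := by
  induction h with
  | rel _ _ h => exact K.sameFace_retract_of_cellStep h
  | refl => exact .refl _
  | symm _ _ _ ih => exact ih.symm
  | trans _ _ _ _ _ ih₁ ih₂ => exact ih₁.trans _ _ _ ih₂

theorem touched_side_subset (ε : ZMod 2) (p : ℤ × ℤ) :
    (K.side ε).touched p ⊆ M.touched (K.retract ε p) := by
  rintro x ⟨q, hpq, w, ⟨hw, hkeeps⟩, hqw, rfl⟩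
  have hface := K.sameFace_retract hpq
  by_cases hq : K.P q = ε
  · rw [retract, retract, if_pos hq] at hface
    exact ⟨q, hface, w, hw, hqw, rfl⟩
  rw [retract, retract, if_neg hq] at hface
  by_cases hlab : M.lab w ∈ K.labels
  · rcases hlab with h | h
    · exact ⟨_, hface, K.u, M.mem_left _ _ K.adj, K.corner_edgeCell_u, h.symm⟩
    · exact ⟨_, hface, K.v, mem_right K.adj, K.corner_edgeCell_v, Eq.symm h⟩
  · exact (hq ((K.P_eq_of_corner hlab hqw).trans (hkeeps.resolve_left hlab))).elim

theorem labels_subset_touched_side (ε : ZMod 2) : K.labels ⊆ (K.side ε).touched (K.edgeCell ε) := by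
  rintro x (rfl | rfl)
  · exact ⟨_, .refl _, K.u, ⟨M.mem_left _ _ K.adj, Or.inl K.lab_u_mem_labels⟩,
      K.corner_edgeCell_u, rfl⟩
  · exact ⟨_, .refl _, K.v, ⟨mem_right K.adj, Or.inl K.lab_v_mem_labels⟩,
      K.corner_edgeCell_v, rfl⟩

/-- The labels of the blobs off the curve lying on the side `1`. -/
def inner : Set X := {x | x ∉ K.labels ∧ ∃ w ∈ M.W, M.lab w = x ∧ K.P w = 1}

theorem lab_mem_inner_iff (hw : w ∈ M.W) (hqw : Corner q w) :
    M.lab w ∈ K.inner ↔ M.lab w ∉ K.labels ∧ K.P q = 1 := by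
  refine and_congr_right fun hlab => ?_
  rw [K.P_eq_of_corner hlab hqw]
  constructor
  · rintro ⟨w', hw', he, h⟩
    rw [K.P_eq_of_lab_eq hw hw' he.symm hlab, h]
  · exact fun h => ⟨w, hw, rfl, h⟩

end Cut

theorem exists_perm_apply_eq {α : Type*} {a b a' b' : α} (h : a = b ↔ a' = b') :
    ∃ π : Equiv.Perm α, π a = a' ∧ π b = b' := by
  classical
  by_cases hab : a = b
  · obtain rfl := hab
    obtain rfl := h.1 rfl
    exact ⟨Equiv.swap a a', by simp⟩
  · exact MulAction.is_two_pretransitive_iff.1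
      (Equiv.Perm.isMultiplyPretransitive α 2) hab (mt h.2 hab)

/-- The two sides share only the colors of the two blobs on the curve, which are distinct in both
colorings if the blobs are, so the colors of one side can be permuted to match. -/
theorem Cut.colorable {n : ℕ} (K : M.Cut) (h : ∀ ε, (K.side ε).Colorable n) : M.Colorable n := by
  choose c hc using h
  have hcuv : ∀ ε, c ε (M.lab K.u) = c ε (M.lab K.v) ↔ M.lab K.u = M.lab K.v := fun ε =>
    ((hc ε _).mono (K.labels_subset_touched_side ε)).eq_iff K.lab_u_mem_labels K.lab_v_mem_labels
  obtain ⟨π, hπu, hπv⟩ := exists_perm_apply_eq ((hcuv 1).trans (hcuv 0).symm)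
  have hπ : ∀ x ∈ K.labels, π (c 1 x) = c 0 x := by
    rintro x (rfl | rfl)
    exacts [hπu, hπv]
  classical
  let d : X → Fin n := fun x => if x ∈ K.inner then π (c 1 x) else c 0 x
  have hd : ∀ p, ∀ x ∈ M.touched p, d x = if K.P p = 1 then π (c 1 x) else c 0 x := by
    rintro p x ⟨q, hpq, w, hw, hqw, rfl⟩
    have hside : K.P p = K.P q := hpq.apply_eq fun _ _ => K.P_eq_of_cellStep
    simp only [d, K.lab_mem_inner_iff hw hqw, hside]
    by_cases hlab : M.lab w ∈ K.labels <;> simp [hlab, hπ]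
  refine ⟨d, fun p x hx y hy hxy => ?_⟩
  have eq_zero : ∀ ε : ZMod 2, ε ≠ 1 → ε = 0 := by decide
  have hx' := K.touched_subset_touched_side p hx
  have hy' := K.touched_subset_touched_side p hy
  rw [hd p x hx, hd p y hy] at hxy
  split_ifs at hxy with h1
  · rw [h1] at hx' hy'
    exact hc 1 p hx' hy' (π.injective hxy)
  · rw [eq_zero _ h1] at hx' hy'
    exact hc 0 p hx' hy' hxy

theorem colorable_of_forall_irreducible {k n : ℕ}
    (hirr : ∀ M : GridMap X, M.Irreducible → (∀ p, (M.touched p).ncard ≤ k) → M.Colorable n)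
    (M : GridMap X) (hM : ∀ p, (M.touched p).ncard ≤ k) : M.Colorable n := by
  induction hm : M.D.edgeSet.ncard using Nat.strong_induction_on generalizing M with
  | _ m ih =>
  by_cases hI : M.Irreducible
  · exact hirr M hI hM
  obtain ⟨K⟩ := nonempty_cut_of_not_irreducible hI
  refine K.colorable fun ε => ih _ (hm ▸ K.ncard_edgeSet_side_lt ε) (K.side ε) (fun p => ?_) rfl
  exact (Set.ncard_le_ncard (K.touched_side_subset ε p) (finite_touched _)).trans (hM _)

end GridMap

/-! ### Collapsing lattice forests in the plane -/

namespace GridMap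

/-- The point of the plane with the given integer coordinates. -/
def pt (u : ℤ × ℤ) : ℝ × ℝ := ((u.1 : ℝ), (u.2 : ℝ))

/-- The lattice edge `ab`, as a set of points of the plane. -/
abbrev seg (a b : ℤ × ℤ) : Set (ℝ × ℝ) := segment ℝ (pt a) (pt b)

theorem pt_injective : Function.Injective pt := fun u v h => by
  simpa [pt, Prod.ext_iff] using h

theorem mem_segment_prod {x y z : ℝ × ℝ} : z ∈ segment ℝ x y ↔
    ∃ t : ℝ, 0 ≤ t ∧ t ≤ 1 ∧ z.1 = x.1 + t * (y.1 - x.1) ∧ z.2 = x.2 + t * (y.2 - x.2) := by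
  rw [segment_eq_image']
  constructor
  · rintro ⟨t, ⟨h0, h1⟩, rfl⟩
    exact ⟨t, h0, h1, by simp, by simp⟩
  · rintro ⟨t, h0, h1, e1, e2⟩
    exact ⟨t, ⟨h0, h1⟩, by ext <;> simp [e1, e2]⟩

theorem eq_of_mem_Ioo_of_mem_Icc {m n : ℤ} {x : ℝ} (hm : x ∈ Set.Ioo (m : ℝ) (m + 1))
    (hn : x ∈ Set.Icc (n : ℝ) (n + 1)) : n = m := by
  have hlt : n < m + 1 := by rify; linarith [hm.2, hn.1]
  have hgt : m < n + 1 := by rify; linarith [hm.1, hn.2]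
  omega

theorem intCast_notMem_Ioo (m n : ℤ) : (n : ℝ) ∉ Set.Ioo (m : ℝ) (m + 1) := fun ⟨hm, hm'⟩ => by
  norm_cast at hm hm'
  omega

theorem mem_seg_cases {a b : ℤ × ℤ} (hab : a = b ∨ LatticeAdj a b) {z : ℝ × ℝ}
    (hz : z ∈ seg a b) :
    (z = pt a ∨ z = pt b) ∨
    (∃ i j : ℤ, z.1 = i ∧ z.2 ∈ Set.Ioo (j : ℝ) (j + 1) ∧ s(a, b) = s((i, j), (i, j + 1))) ∨
    ∃ i j : ℤ, z.1 ∈ Set.Ioo (i : ℝ) (i + 1) ∧ z.2 = j ∧ s(a, b) = s((i, j), (i + 1, j)) := by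
  obtain ⟨a₁, a₂⟩ := a
  obtain ⟨b₁, b₂⟩ := b
  obtain ⟨z₁, z₂⟩ := z
  obtain ⟨t, h0, h1, e1, e2⟩ := mem_segment_prod.1 hz
  simp only [pt, LatticeAdj, Prod.mk.injEq] at *
  rcases h0.eq_or_lt with rfl | h0
  · left; left; constructor <;> linarith
  rcases h1.eq_or_lt with rfl | h1
  · left; right; constructor <;> linarith
  rcases hab with ⟨rfl, rfl⟩ | ⟨rfl, rfl | rfl⟩ | ⟨rfl, rfl | rfl⟩ <;> push_cast at e1 e2
  · left; left; constructor <;> linarith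
  · exact Or.inr (Or.inl ⟨a₁, a₂, by linarith, ⟨by linarith, by linarith⟩, rfl⟩)
  · exact Or.inr (Or.inl ⟨a₁, b₂, by linarith, ⟨by linarith, by linarith⟩, Sym2.eq_swap⟩)
  · exact Or.inr (Or.inr ⟨a₁, a₂, ⟨by linarith, by linarith⟩, by linarith, rfl⟩)
  · exact Or.inr (Or.inr ⟨b₁, a₂, ⟨by linarith, by linarith⟩, by linarith, Sym2.eq_swap⟩)

theorem eq_or_eq_of_pt_mem_seg {a b u : ℤ × ℤ} (hab : a = b ∨ LatticeAdj a b)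
    (h : pt u ∈ seg a b) : u = a ∨ u = b := by
  rcases mem_seg_cases hab h with h | ⟨_, _, _, h, _⟩ | ⟨_, _, h, _⟩
  · exact h.imp (@pt_injective _ _) (@pt_injective _ _)
  · exact absurd h (intCast_notMem_Ioo _ _)
  · exact absurd h (intCast_notMem_Ioo _ _)

/-- A monotone map of the line collapsing `[0, 1]` and fixing the points outside `(0, 3/2)`. -/
noncomputable def squash (x : ℝ) : ℝ := min x (max 0 (3 * (x - 1)))

theorem squash_mono {x y : ℝ} (h : x ≤ y) : squash x ≤ squash y := by
  unfold squash; gcongr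

theorem squash_le (x : ℝ) : squash x ≤ x := min_le_left _ _

theorem sub_one_le_squash (x : ℝ) : x - 1 ≤ squash x := by
  unfold squash
  rcases le_total 1 x with h | h
  · exact le_min (by linarith) ((by linarith : x - 1 ≤ 3 * (x - 1)).trans (le_max_right _ _))
  · exact le_min (by linarith) (le_trans (by linarith) (le_max_left _ _))

theorem squash_eq_self {x : ℝ} (h : x ≤ 0 ∨ 3 / 2 ≤ x) : squash x = x := by
  unfold squash
  rcases h with h | h
  · exact min_eq_left (h.trans (le_max_left _ _))
  · exact min_eq_left (le_trans (by linarith) (le_max_right _ _))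

theorem squash_eq_zero {x : ℝ} (hx : x ∈ Set.Icc 0 1) : squash x = 0 := by
  unfold squash
  rw [max_eq_left (by linarith [hx.2]), min_eq_right hx.1]

theorem nonneg_and_le_one_of_squash_eq {x y : ℝ} (hxy : x < y) (h : squash x = squash y) :
    0 ≤ x ∧ y ≤ 1 := by
  unfold squash at h
  rcases min_cases x (max 0 (3 * (x - 1))) with ⟨h1, h1'⟩ | ⟨h1, h1'⟩ <;>
  rcases min_cases y (max 0 (3 * (y - 1))) with ⟨h2, -⟩ | ⟨h2, -⟩ <;>
  rcases max_cases 0 (3 * (x - 1)) with ⟨h3, -⟩ | ⟨h3, h3'⟩ <;>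
  rcases max_cases 0 (3 * (y - 1)) with ⟨h4, h4'⟩ | ⟨h4, h4'⟩ <;>
  constructor <;> linarith

/-- A map of the plane collapsing the segment from `(0, 0)` to `(1, 0)` to the origin. It
interpolates between `squash` on the horizontal axis and the identity at height `1/4`. -/
noncomputable def collapse (z : ℝ × ℝ) : ℝ × ℝ :=
  (z.1 + (1 - min 1 (4 * |z.2|)) * (squash z.1 - z.1), z.2)

theorem continuous_collapse : Continuous collapse := by
  unfold collapse squash
  fun_prop

theorem dist_collapse_le (z : ℝ × ℝ) : dist (collapse z) z ≤ 1 := by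
  rw [Prod.dist_eq, max_le_iff, Real.dist_eq, Real.dist_eq]
  have hnonneg : 0 ≤ 1 - min 1 (4 * |z.2|) := by simp
  have hle : 1 - min 1 (4 * |z.2|) ≤ 1 := by
    have : 0 ≤ min 1 (4 * |z.2|) := by positivity
    linarith
  refine ⟨?_, by simp [collapse]⟩
  simp only [collapse, add_sub_cancel_left]
  rw [abs_mul, abs_of_nonneg hnonneg]
  refine mul_le_one₀ hle (abs_nonneg _) (abs_le.2 ⟨?_, ?_⟩)
  · linarith [sub_one_le_squash z.1]
  · linarith [squash_le z.1]

theorem eq_zero_and_mem_of_collapse_eq {x x' y : ℝ} (hx : x < x')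
    (h : collapse (x, y) = collapse (x', y)) : y = 0 ∧ 0 ≤ x ∧ x' ≤ 1 := by
  simp only [collapse, Prod.mk.injEq, and_true] at h
  have hs := squash_mono hx.le
  have hτ : 0 ≤ min 1 (4 * |y|) := by positivity
  have hτ1 : min 1 (4 * |y|) ≤ 1 := min_le_left _ _
  have h0 : min 1 (4 * |y|) = 0 := by nlinarith
  have hy : y = 0 := by
    rcases min_choice 1 (4 * |y|) with e | e <;> rw [h0] at e
    · norm_num at e
    · exact abs_eq_zero.1 (by linarith)
  rw [h0] at h
  exact ⟨hy, nonneg_and_le_one_of_squash_eq hx (by linarith)⟩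

theorem collapse_eq_iff {z w : ℝ × ℝ} : collapse z = collapse w ↔ z = w ∨
    (z.2 = 0 ∧ z.1 ∈ Set.Icc 0 1) ∧ (w.2 = 0 ∧ w.1 ∈ Set.Icc 0 1) := by
  constructor
  · obtain ⟨x, y⟩ := z
    obtain ⟨x', y'⟩ := w
    intro h
    obtain rfl : y = y' := (Prod.ext_iff.1 h).2
    rcases lt_trichotomy x x' with hx | rfl | hx
    · obtain ⟨rfl, h0, h1⟩ := eq_zero_and_mem_of_collapse_eq hx h
      exact Or.inr ⟨⟨rfl, h0, hx.le.trans h1⟩, rfl, h0.trans hx.le, h1⟩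
    · exact Or.inl rfl
    · obtain ⟨rfl, h0, h1⟩ := eq_zero_and_mem_of_collapse_eq hx h.symm
      exact Or.inr ⟨⟨rfl, h0.trans hx.le, h1⟩, rfl, h0, hx.le.trans h1⟩
  · rintro (rfl | ⟨⟨hz, hz'⟩, hw, hw'⟩)
    · rfl
    · simp [collapse, hz, hw, squash_eq_zero hz', squash_eq_zero hw']

theorem collapse_surjective : Function.Surjective collapse := by
  rintro ⟨x, y⟩
  have hcont : Continuous fun s : ℝ => (collapse (s, y)).1 :=
    continuous_fst.comp (continuous_collapse.comp (by fun_prop))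
  have hdist : ∀ s : ℝ, |(collapse (s, y)).1 - s| ≤ 1 := fun s =>
    (le_max_left _ _).trans (dist_collapse_le (s, y))
  obtain ⟨s, -, hs⟩ := intermediate_value_Icc (by linarith : x - 1 ≤ x + 1) hcont.continuousOn
    (show x ∈ Set.Icc _ _ from
      ⟨by linarith [(abs_le.1 (hdist (x - 1))).2], by linarith [(abs_le.1 (hdist (x + 1))).1]⟩)
  exact ⟨(s, y), Prod.ext hs rfl⟩

theorem collapse_eq_self {z : ℝ × ℝ} (h : z.1 ≤ 0 ∨ 3 / 2 ≤ z.1 ∨ 1 / 4 ≤ |z.2|) :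
    collapse z = z := by
  refine Prod.ext ?_ rfl
  rcases or_assoc.2 h with h | h
  · simp [collapse, squash_eq_self h]
  · simp [collapse, min_eq_left (by linarith : 1 ≤ 4 * |z.2|)]

theorem isClosedMap_collapse : IsClosedMap collapse := by
  refine IsProperMap.isClosedMap (isProperMap_iff_isCompact_preimage.2
    ⟨continuous_collapse, fun K hK => ?_⟩)
  refine Metric.isCompact_of_isClosed_isBounded (hK.isClosed.preimage continuous_collapse) ?_
  obtain ⟨R, hR⟩ := hK.isBounded.subset_closedBall 0
  refine (Metric.isBounded_closedBall (x := (0 : ℝ × ℝ)) (r := R + 1)).subset fun z hz => ?_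
  have hzR : dist (collapse z) 0 ≤ R := hR hz
  rw [Metric.mem_closedBall]
  linarith [dist_triangle_left z 0 (collapse z), dist_collapse_le z]

/-- `f` is a quotient map of the plane onto itself whose only nontrivial identifications are those
of the points related by `r`. -/
structure IsCollapse (f : ℝ × ℝ → ℝ × ℝ) (r : ℝ × ℝ → ℝ × ℝ → Prop) : Prop where
  continuous : Continuous f
  surjective : Function.Surjective f
  isClosedMap : IsClosedMap f
  eq_iff : ∀ z w, f z = f w ↔ z = w ∨ r z w

/-- Rectangular coordinates with origin `p` and first unit vector `d`. -/
def frame (p d : ℤ × ℤ) (hd : d.1 ^ 2 + d.2 ^ 2 = 1) : (ℝ × ℝ) ≃ₜ (ℝ × ℝ) where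
  toFun z := ((z.1 - p.1) * d.1 + (z.2 - p.2) * d.2, -(z.1 - p.1) * d.2 + (z.2 - p.2) * d.1)
  invFun z := (p.1 + z.1 * d.1 - z.2 * d.2, p.2 + z.1 * d.2 + z.2 * d.1)
  left_inv z := by
    have hd' : (d.1 : ℝ) ^ 2 + (d.2 : ℝ) ^ 2 = 1 := by exact_mod_cast hd
    ext
    · linear_combination (z.1 - p.1) * hd'
    · linear_combination (z.2 - p.2) * hd'
  right_inv z := by
    have hd' : (d.1 : ℝ) ^ 2 + (d.2 : ℝ) ^ 2 = 1 := by exact_mod_cast hd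
    ext
    · linear_combination z.1 * hd'
    · linear_combination z.2 * hd'
  continuous_toFun := by fun_prop
  continuous_invFun := by fun_prop

theorem mem_seg_iff_frame {p d : ℤ × ℤ} (hd : d.1 ^ 2 + d.2 ^ 2 = 1) {z : ℝ × ℝ} :
    z ∈ seg p (p + d) ↔ (frame p d hd z).2 = 0 ∧ (frame p d hd z).1 ∈ Set.Icc 0 1 := by
  have hd' : (d.1 : ℝ) ^ 2 + (d.2 : ℝ) ^ 2 = 1 := by exact_mod_cast hd
  simp only [mem_segment_prod, pt, Prod.fst_add, Prod.snd_add, Int.cast_add, add_sub_cancel_left]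
  constructor
  · rintro ⟨t, h0, h1, e1, e2⟩
    have hfst : (frame p d hd z).1 = t := by
      change (z.1 - p.1) * d.1 + (z.2 - p.2) * d.2 = t
      rw [e1, e2]; linear_combination t * hd'
    have hsnd : (frame p d hd z).2 = 0 := by
      change -(z.1 - p.1) * d.2 + (z.2 - p.2) * d.1 = 0
      rw [e1, e2]; ring
    exact ⟨hsnd, hfst ▸ h0, hfst ▸ h1⟩
  · rintro ⟨h0, h1, h2⟩
    have hsymm := (frame p d hd).symm_apply_apply z
    generalize frame p d hd z = x at *
    obtain rfl := hsymm
    exact ⟨x.1, h1, h2, by simp [frame, h0], by simp [frame, h0]⟩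

/-- The coordinates of the lattice points in `frame p d`. -/
def latticeFrame (p d a : ℤ × ℤ) : ℤ × ℤ :=
  ((a.1 - p.1) * d.1 + (a.2 - p.2) * d.2, -(a.1 - p.1) * d.2 + (a.2 - p.2) * d.1)

theorem frame_pt {p d : ℤ × ℤ} (hd : d.1 ^ 2 + d.2 ^ 2 = 1) (a : ℤ × ℤ) :
    frame p d hd (pt a) = pt (latticeFrame p d a) := by
  simp [frame, latticeFrame, pt]

theorem eq_add_of_latticeFrame_eq {p d a : ℤ × ℤ} (hd : d.1 ^ 2 + d.2 ^ 2 = 1)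
    (h : latticeFrame p d a = (1, 0)) : a = p + d := by
  simp only [latticeFrame, Prod.mk.injEq] at h
  refine Prod.ext ?_ ?_ <;> simp only [Prod.fst_add, Prod.snd_add]
  · linear_combination d.1 * h.1 - d.2 * h.2 - (a.1 - p.1) * hd
  · linear_combination d.2 * h.1 + d.1 * h.2 - (a.2 - p.2) * hd

theorem latticeAdj_add_iff {p d : ℤ × ℤ} : LatticeAdj p (p + d) ↔
    (d.1 = 0 ∧ (d.2 = 1 ∨ d.2 = -1)) ∨ (d.2 = 0 ∧ (d.1 = 1 ∨ d.1 = -1)) := by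
  simp only [LatticeAdj, Prod.fst_add, Prod.snd_add]
  omega

theorem LatticeAdj.latticeFrame {p d a b : ℤ × ℤ} (hd : LatticeAdj p (p + d))
    (h : LatticeAdj a b) : LatticeAdj (latticeFrame p d a) (latticeFrame p d b) := by
  rw [latticeAdj_add_iff] at hd
  simp only [LatticeAdj, GridMap.latticeFrame] at h ⊢
  rcases hd with ⟨h₁, h₂ | h₂⟩ | ⟨h₁, h₂ | h₂⟩ <;> rw [h₁, h₂] <;> omega

theorem frame_mem_segment {p d : ℤ × ℤ} (hd : d.1 ^ 2 + d.2 ^ 2 = 1) {x y z : ℝ × ℝ}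
    (hz : z ∈ segment ℝ x y) : frame p d hd z ∈ segment ℝ (frame p d hd x) (frame p d hd y) := by
  obtain ⟨t, h0, h1, e1, e2⟩ := mem_segment_prod.1 hz
  refine mem_segment_prod.2 ⟨t, h0, h1, ?_, ?_⟩ <;> simp only [frame, Homeomorph.homeomorph_mk_coe,
    Equiv.coe_fn_mk, e1, e2] <;> ring

theorem collapse_eq_self_of_mem_seg {a b : ℤ × ℤ} (hab : a = b ∨ LatticeAdj a b) (ha : a ≠ (1, 0))
    (hb : b ≠ (1, 0)) {z : ℝ × ℝ} (hz : z ∈ seg a b) : collapse z = z := by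
  refine collapse_eq_self ?_
  obtain ⟨t, h0, h1, e1, e2⟩ := mem_segment_prod.1 hz
  have hsep : (a.1 ≤ 0 ∧ b.1 ≤ 0) ∨ (2 ≤ a.1 ∧ 2 ≤ b.1) ∨ (1 ≤ a.2 ∧ 1 ≤ b.2) ∨
      (a.2 ≤ -1 ∧ b.2 ≤ -1) := by
    simp only [LatticeAdj, ne_eq, Prod.ext_iff] at hab ha hb
    omega
  simp only [pt] at e1 e2
  rify at hsep
  rcases hsep with ⟨h, h'⟩ | ⟨h, h'⟩ | ⟨h, h'⟩ | ⟨h, h'⟩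
  · left; nlinarith
  · right; left; nlinarith
  · right; right; exact le_trans (by nlinarith) (le_abs_self _)
  · right; right; exact le_trans (by nlinarith) (neg_le_abs _)

theorem exists_collapse_edge {p q : ℤ × ℤ} (hpq : LatticeAdj p q) :
    ∃ ψ : ℝ × ℝ → ℝ × ℝ, IsCollapse ψ (fun z w => z ∈ seg p q ∧ w ∈ seg p q) ∧
      ∀ a b, (a = b ∨ LatticeAdj a b) → a ≠ q → b ≠ q → ∀ z ∈ seg a b, ψ z = z := by
  obtain ⟨d, rfl⟩ : ∃ d, q = p + d := ⟨q - p, by simp⟩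
  have hd : d.1 ^ 2 + d.2 ^ 2 = 1 := by
    rcases latticeAdj_add_iff.1 hpq with ⟨h₁, h₂ | h₂⟩ | ⟨h₁, h₂ | h₂⟩ <;> rw [h₁, h₂] <;> norm_num
  let Φ := frame p d hd
  refine ⟨fun z => Φ.symm (collapse (Φ z)), ⟨?_, ?_, ?_, fun z w => ?_⟩,
    fun a b hab ha hb z hz => ?_⟩
  · exact Φ.symm.continuous.comp (continuous_collapse.comp Φ.continuous)
  · exact Φ.symm.surjective.comp (collapse_surjective.comp Φ.surjective)
  · exact Φ.symm.isClosedMap.comp (isClosedMap_collapse.comp Φ.isClosedMap)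
  · rw [Φ.symm.injective.eq_iff, collapse_eq_iff, Φ.injective.eq_iff, mem_seg_iff_frame hd,
      mem_seg_iff_frame hd]
  · have hz' := frame_mem_segment (p := p) hd hz
    rw [frame_pt, frame_pt] at hz'
    rw [Φ.symm_apply_eq]
    exact collapse_eq_self_of_mem_seg (hab.imp (congrArg _) hpq.latticeFrame)
      (mt (eq_add_of_latticeFrame_eq hd) ha) (mt (eq_add_of_latticeFrame_eq hd) hb) hz'

theorem exists_adj_forall_eq_of_isAcyclic {V : Type*} {F : SimpleGraph V} (hF : F.IsAcyclic)
    (hfin : F.edgeSet.Finite) {a b : V} (hab : F.Adj a b) :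
    ∃ p q, F.Adj p q ∧ ∀ r, F.Adj q r → r = p := by
  classical
  let S : Set ℕ := {n | ∃ (u v : V) (w : F.Walk u v), w.IsPath ∧ w.length = n}
  have hS : BddAbove S := by
    refine ⟨F.edgeSet.ncard, ?_⟩
    rintro n ⟨u, v, w, hw, rfl⟩
    rw [← Walk.length_edges, ← List.toFinset_card_of_nodup hw.isTrail.edges_nodup,
      ← Set.ncard_coe_finset]
    exact Set.ncard_le_ncard (fun e he => w.edges_subset_edgeSet (by simpa using he)) hfin
  have hone : 1 ∈ S := ⟨a, b, hab.toWalk, by simp [hab.ne], rfl⟩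
  obtain ⟨u, v, w, hw, hlen⟩ := Nat.sSup_mem ⟨1, hone⟩ hS
  have hpos : 1 ≤ w.length := by rw [hlen]; exact le_csSup hS hone
  have hnil : ¬ w.Nil := by rw [← Walk.length_eq_zero_iff]; omega
  refine ⟨w.penultimate, v, w.adj_penultimate hnil, fun r hr => ?_⟩
  by_cases hmem : r ∈ w.support
  · exact hF.eq_penultimate_of_adj_end hw hr hmem
  · have : (w.concat hr).length ≤ sSup S := le_csSup hS ⟨u, r, _, hw.concat hmem hr, rfl⟩
    rw [Walk.length_concat] at this
    omega

/-- The union of the edges of the component of `u` in `F`, together with the point `u`. -/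
def blob (F : SimpleGraph (ℤ × ℤ)) (u : ℤ × ℤ) : Set (ℝ × ℝ) :=
  {z | ∃ a b, F.Reachable u a ∧ (a = b ∨ F.Adj a b) ∧ z ∈ seg a b}

section Leaf

variable {F : SimpleGraph (ℤ × ℤ)} {p q u v : ℤ × ℤ} {z w : ℝ × ℝ}

theorem blob_eq_of_reachable (h : F.Reachable u v) : blob F u = blob F v := by
  ext z
  exact ⟨fun ⟨a, b, hr, hz⟩ => ⟨a, b, h.symm.trans hr, hz⟩,
    fun ⟨a, b, hr, hz⟩ => ⟨a, b, h.trans hr, hz⟩⟩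

theorem pt_mem_blob (h : F.Reachable u v) : pt v ∈ blob F u :=
  ⟨v, v, h, Or.inl rfl, left_mem_segment _ _ _⟩

theorem seg_subset_blob (h : F.Adj p q) : seg p q ⊆ blob F p := fun _ hz =>
  ⟨p, q, .rfl, Or.inr h, hz⟩

theorem eq_of_reachable_of_forall_not_adj (hu : ∀ v, ¬ F.Adj u v) (h : F.Reachable u v) :
    v = u := by
  obtain ⟨_ | ⟨h, _⟩⟩ := h
  · rfl
  · exact (hu _ h).elim

theorem blob_eq_singleton (hu : ∀ v, ¬ F.Adj u v) : blob F u = {pt u} := by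
  refine Set.Subset.antisymm ?_ (Set.singleton_subset_iff.2 (pt_mem_blob .rfl))
  rintro z ⟨a, b, hr, hab, hz⟩
  obtain rfl := eq_of_reachable_of_forall_not_adj hu hr
  obtain rfl := hab.resolve_right (hu _)
  rwa [seg, segment_same] at hz

theorem isCollapse_id (hF : ∀ u v, ¬ F.Adj u v) :
    IsCollapse id fun z w => ∃ u, z ∈ blob F u ∧ w ∈ blob F u where
  continuous := continuous_id
  surjective := Function.surjective_id
  isClosedMap := IsClosedMap.id
  eq_iff z w := by
    refine ⟨Or.inl, ?_⟩
    rintro (h | ⟨u, hz, hw⟩)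
    · exact h
    · rw [blob_eq_singleton (hF u)] at hz hw
      exact hz.trans hw.symm

theorem reachable_deleteIncidenceSet (hleaf : ∀ r, F.Adj q r → r = p) (h : F.Reachable u v)
    (hu : u ≠ q) (hv : v ≠ q) : (F.deleteIncidenceSet q).Reachable u v := by
  let ρ : ℤ × ℤ → ℤ × ℤ := fun v => if v = q then p else v
  suffices (F.deleteIncidenceSet q).Reachable (ρ u) (ρ v) by simpa [ρ, hu, hv] using this
  obtain ⟨w⟩ := h
  clear hu hv
  induction w with
  | nil => rfl
  | @cons a b c hab _ ih =>
    refine .trans ?_ ih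
    by_cases ha : a = q
    · obtain rfl := ha
      obtain rfl := hleaf b hab
      simp [ρ]
    by_cases hb : b = q
    · obtain rfl := hb
      obtain rfl := hleaf a hab.symm
      simp [ρ]
    · simpa [ρ, ha, hb] using (deleteIncidenceSet_adj.2 ⟨hab, ha, hb⟩).reachable

variable {ψ f : ℝ × ℝ → ℝ × ℝ}

theorem mem_blob_of_apply_mem_blob (hlat : ∀ u v, F.Adj u v → LatticeAdj u v) (hpq : F.Adj p q)
    (hψ : IsCollapse ψ (fun z w => z ∈ seg p q ∧ w ∈ seg p q))
    (hfix : ∀ a b, (a = b ∨ LatticeAdj a b) → a ≠ q → b ≠ q → ∀ z ∈ seg a b, ψ z = z)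
    (hu : u ≠ q) (h : ψ z ∈ blob (F.deleteIncidenceSet q) u) : z ∈ blob F u := by
  have hle : F.deleteIncidenceSet q ≤ F := F.deleteIncidenceSet_le q
  obtain ⟨a, b, hr, hab, hz⟩ := h
  have ha : a ≠ q := by
    rintro rfl
    exact hu (eq_of_reachable_of_forall_not_adj (fun _ h => (deleteIncidenceSet_adj.1 h).2.1 rfl)
      hr.symm)
  have hb : b ≠ q := by
    rcases hab with rfl | h
    exacts [ha, (deleteIncidenceSet_adj.1 h).2.2]
  have hab' : a = b ∨ LatticeAdj a b := hab.imp_right fun h => hlat _ _ (hle h)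
  rcases (hψ.eq_iff _ _).1 (hfix a b hab' ha hb _ hz) with h | ⟨-, h⟩
  · exact ⟨a, b, hr.mono hle, hab.imp_right fun h => hle h, h ▸ hz⟩
  · suffices F.Reachable u p from blob_eq_of_reachable this ▸ seg_subset_blob hpq h
    have hψz : ψ z = pt p :=
      ((hψ.eq_iff z (pt p)).2 (Or.inr ⟨h, left_mem_segment _ _ _⟩)).trans
        (hfix p p (Or.inl rfl) hpq.ne hpq.ne _ (left_mem_segment _ _ _))
    rw [hψz] at hz
    rcases eq_or_eq_of_pt_mem_seg hab' hz with rfl | rfl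
    · exact hr.mono hle
    · rcases hab with rfl | h
      · exact hr.mono hle
      · exact (hr.mono hle).trans (hle h).reachable

theorem apply_mem_blob (hlat : ∀ u v, F.Adj u v → LatticeAdj u v) (hpq : F.Adj p q)
    (hleaf : ∀ r, F.Adj q r → r = p)
    (hψ : ∀ z ∈ seg p q, ψ z = pt p)
    (hfix : ∀ a b, (a = b ∨ LatticeAdj a b) → a ≠ q → b ≠ q → ∀ z ∈ seg a b, ψ z = z)
    (hu : u ≠ q) (h : z ∈ blob F u) : ψ z ∈ blob (F.deleteIncidenceSet q) u := by
  obtain ⟨a, b, hr, hab, hz⟩ := h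
  have hreach : ∀ {v}, v ≠ q → F.Reachable u v → (F.deleteIncidenceSet q).Reachable u v :=
    fun hv hr => reachable_deleteIncidenceSet hleaf hr hu hv
  by_cases ha : a = q
  · obtain rfl := ha
    have hzpq : z ∈ seg p a := by
      rcases hab with rfl | h
      · rw [seg, segment_same] at hz
        exact hz ▸ right_mem_segment _ _ _
      · obtain rfl := hleaf b h
        rwa [seg, segment_symm] at hz
    exact hψ z hzpq ▸ pt_mem_blob (hreach hpq.ne (hr.trans hpq.symm.reachable))
  by_cases hb : b = q
  · obtain rfl := hb
    obtain rfl := hleaf a (hab.resolve_left ha).symm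
    exact hψ z hz ▸ pt_mem_blob (hreach ha hr)
  · rw [hfix a b (hab.imp_right fun h => hlat _ _ h) ha hb z hz]
    exact ⟨a, b, hreach ha hr, hab.imp_right fun h => deleteIncidenceSet_adj.2 ⟨h, ha, hb⟩, hz⟩

theorem isCollapse_comp_of_leaf (hlat : ∀ u v, F.Adj u v → LatticeAdj u v) (hpq : F.Adj p q)
    (hleaf : ∀ r, F.Adj q r → r = p)
    (hψ : IsCollapse ψ (fun z w => z ∈ seg p q ∧ w ∈ seg p q))
    (hfix : ∀ a b, (a = b ∨ LatticeAdj a b) → a ≠ q → b ≠ q → ∀ z ∈ seg a b, ψ z = z)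
    (hf : IsCollapse f fun z w =>
      ∃ u, z ∈ blob (F.deleteIncidenceSet q) u ∧ w ∈ blob (F.deleteIncidenceSet q) u) :
    IsCollapse (f ∘ ψ) fun z w => ∃ u, z ∈ blob F u ∧ w ∈ blob F u where
  continuous := hf.continuous.comp hψ.continuous
  surjective := hf.surjective.comp hψ.surjective
  isClosedMap := hf.isClosedMap.comp hψ.isClosedMap
  eq_iff z w := by
    rw [Function.comp_apply, Function.comp_apply, hf.eq_iff]
    constructor
    · have of_apply_eq : ψ z = ψ w → z = w ∨ ∃ u, z ∈ blob F u ∧ w ∈ blob F u := fun h =>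
        ((hψ.eq_iff z w).1 h).imp_right fun h =>
          ⟨p, seg_subset_blob hpq h.1, seg_subset_blob hpq h.2⟩
      rintro (h | ⟨u, hz, hw⟩)
      · exact of_apply_eq h
      by_cases hu : u = q
      · rw [hu, blob_eq_singleton fun _ h => (deleteIncidenceSet_adj.1 h).2.1 rfl] at hz hw
        exact of_apply_eq (hz.trans hw.symm)
      · exact Or.inr ⟨u, mem_blob_of_apply_mem_blob hlat hpq hψ hfix hu hz,
          mem_blob_of_apply_mem_blob hlat hpq hψ hfix hu hw⟩
    · rintro (rfl | ⟨u, hz, hw⟩)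
      · exact Or.inl rfl
      obtain ⟨v, hv, huv⟩ : ∃ v, v ≠ q ∧ F.Reachable u v := by
        by_cases hu : u = q
        exacts [⟨p, hpq.ne, hu ▸ hpq.symm.reachable⟩, ⟨u, hu, .rfl⟩]
      have hψp : ∀ z ∈ seg p q, ψ z = pt p := fun z hz =>
        ((hψ.eq_iff z (pt p)).2 (Or.inr ⟨hz, left_mem_segment _ _ _⟩)).trans
          (hfix p p (Or.inl rfl) hpq.ne hpq.ne _ (left_mem_segment _ _ _))
      rw [blob_eq_of_reachable huv] at hz hw
      exact Or.inr ⟨v, apply_mem_blob hlat hpq hleaf hψp hfix hv hz,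
        apply_mem_blob hlat hpq hleaf hψp hfix hv hw⟩

end Leaf

theorem exists_collapse_forest (F : SimpleGraph (ℤ × ℤ)) (hF : F.IsAcyclic)
    (hlat : ∀ u v, F.Adj u v → LatticeAdj u v) (hfin : F.edgeSet.Finite) :
    ∃ f, IsCollapse f fun z w => ∃ u, z ∈ blob F u ∧ w ∈ blob F u := by
  induction hn : F.edgeSet.ncard using Nat.strong_induction_on generalizing F with
  | _ n ih =>
  by_cases hedge : ∀ a b, ¬ F.Adj a b
  · exact ⟨id, isCollapse_id hedge⟩
  push Not at hedge
  obtain ⟨a, b, hab⟩ := hedge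
  obtain ⟨p, q, hpq, hleaf⟩ := exists_adj_forall_eq_of_isAcyclic hF hfin hab
  have hle : F.deleteIncidenceSet q ≤ F := F.deleteIncidenceSet_le q
  have hcard : (F.deleteIncidenceSet q).edgeSet.ncard < n := hn ▸
    Set.ncard_lt_ncard ⟨edgeSet_mono hle, fun h => (deleteIncidenceSet_adj.1
      ((F.deleteIncidenceSet q).mem_edgeSet.1 (h (F.mem_edgeSet.2 hpq)))).2.2 rfl⟩ hfin
  obtain ⟨f, hf⟩ := ih _ hcard _ (hF.anti hle) (fun u v h => hlat u v (hle h))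
    (hfin.subset (edgeSet_mono hle)) rfl
  obtain ⟨ψ, hψ, hfix⟩ := exists_collapse_edge (hlat p q hpq)
  exact ⟨f ∘ ψ, isCollapse_comp_of_leaf hlat hpq hleaf hψ hfix hf⟩

end GridMap

namespace GridMap

/-- The closed unit cell with lower left corner `p`. -/
def cell (p : ℤ × ℤ) : Set (ℝ × ℝ) := Set.Icc (p.1 : ℝ) (p.1 + 1) ×ˢ Set.Icc (p.2 : ℝ) (p.2 + 1)

/-- The open unit cell with lower left corner `p`. -/
def openCell (p : ℤ × ℤ) : Set (ℝ × ℝ) :=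
  Set.Ioo (p.1 : ℝ) (p.1 + 1) ×ˢ Set.Ioo (p.2 : ℝ) (p.2 + 1)

theorem closure_openCell (p : ℤ × ℤ) : closure (openCell p) = cell p := by
  rw [openCell, closure_prod_eq, closure_Ioo (by simp), closure_Ioo (by simp), cell]

theorem openCell_nonempty (p : ℤ × ℤ) : (openCell p).Nonempty :=
  (Set.nonempty_Ioo.2 (by simp)).prod (Set.nonempty_Ioo.2 (by simp))

theorem mem_cell_floor (z : ℝ × ℝ) : z ∈ cell (⌊z.1⌋, ⌊z.2⌋) :=
  ⟨⟨Int.floor_le _, (Int.lt_floor_add_one _).le⟩, ⟨Int.floor_le _, (Int.lt_floor_add_one _).le⟩⟩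

theorem isClosed_cell (p : ℤ × ℤ) : IsClosed (cell p) := isClosed_Icc.prod isClosed_Icc

theorem finite_setOf_cell_inter_ball_nonempty (z : ℝ × ℝ) :
    {p | (cell p ∩ Metric.ball z 1).Nonempty}.Finite := by
  refine (Set.finite_Icc ((⌊z.1⌋ - 3, ⌊z.2⌋ - 3) : ℤ × ℤ) (⌊z.1⌋ + 3, ⌊z.2⌋ + 3)).subset ?_
  rintro ⟨p₁, p₂⟩ ⟨w, ⟨⟨hw₁, hw₁'⟩, hw₂, hw₂'⟩, hwz⟩
  rw [Metric.mem_ball, Prod.dist_eq, max_lt_iff, Real.dist_eq, Real.dist_eq, abs_lt, abs_lt] at hwz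
  dsimp only at *
  refine ⟨⟨?_, ?_⟩, ⟨?_, ?_⟩⟩ <;> dsimp only <;> rify <;>
    linarith [Int.floor_le z.1, Int.lt_floor_add_one z.1, Int.floor_le z.2,
      Int.lt_floor_add_one z.2, hwz.1.1, hwz.1.2, hwz.2.1, hwz.2.2]

theorem isClosed_biUnion_cell (A : Set (ℤ × ℤ)) : IsClosed (⋃ p ∈ A, cell p) := by
  rw [Set.biUnion_eq_iUnion]
  refine LocallyFinite.isClosed_iUnion (fun z => ?_) fun p => isClosed_cell p
  refine ⟨_, Metric.ball_mem_nhds z one_pos, ?_⟩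
  exact Set.Finite.preimage (f := Subtype.val) Subtype.val_injective.injOn
    (finite_setOf_cell_inter_ball_nonempty z)

theorem Corner.pt_mem_cell {p w : ℤ × ℤ} (h : Corner p w) : pt w ∈ cell p := by
  simp only [cell, pt, Set.mem_prod, Set.mem_Icc]
  norm_cast
  unfold Corner at h
  omega

theorem corner_of_pt_mem_cell {p w : ℤ × ℤ} (h : pt w ∈ cell p) : Corner p w := by
  simp only [cell, pt, Set.mem_prod, Set.mem_Icc] at h
  norm_cast at h
  unfold Corner
  omega

theorem corner_or_corner_of_mem_seg {a b q : ℤ × ℤ} (hab : a = b ∨ LatticeAdj a b) {z : ℝ × ℝ}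
    (hz : z ∈ seg a b) (hq : z ∈ cell q) : Corner q a ∨ Corner q b := by
  rcases mem_seg_cases hab hz with (rfl | rfl) | ⟨i, j, h₁, h₂, he⟩ | ⟨i, j, h₁, h₂, he⟩
  · exact Or.inl (corner_of_pt_mem_cell hq)
  · exact Or.inr (corner_of_pt_mem_cell hq)
  all_goals
    obtain ⟨⟨hq₁, hq₁'⟩, hq₂, hq₂'⟩ := hq
  · have := eq_of_mem_Ioo_of_mem_Icc h₂ ⟨hq₂, hq₂'⟩
    rw [h₁] at hq₁ hq₁'
    norm_cast at hq₁ hq₁'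
    simp only [Sym2.eq_iff, Prod.ext_iff, Corner] at he ⊢
    omega
  · have := eq_of_mem_Ioo_of_mem_Icc h₁ ⟨hq₁, hq₁'⟩
    rw [h₂] at hq₂ hq₂'
    norm_cast at hq₂ hq₂'
    simp only [Sym2.eq_iff, Prod.ext_iff, Corner] at he ⊢
    omega

theorem Across.mem_seg {p q a b : ℤ × ℤ} (h : Across p q a b) {z : ℝ × ℝ} (hp : z ∈ cell p)
    (hq : z ∈ cell q) : z ∈ seg a b := by
  obtain ⟨⟨hp₁, hp₁'⟩, hp₂, hp₂'⟩ := hp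
  obtain ⟨⟨hq₁, hq₁'⟩, hq₂, hq₂'⟩ := hq
  cases h with
  | right i j =>
    push_cast at *
    exact mem_segment_prod.2 ⟨z.2 - j, by linarith, by linarith, by simp [pt]; linarith,
      by simp [pt]⟩
  | up i j =>
    push_cast at *
    exact mem_segment_prod.2 ⟨z.1 - i, by linarith, by linarith, by simp [pt],
      by simp [pt]; linarith⟩

theorem lineMap_pt_ne_pt {u v : ℤ × ℤ} (huv : LatticeAdj u v) {t : ℝ} (ht : t ∈ Set.Ioo (0 : ℝ) 1)
    (w : ℤ × ℤ) : AffineMap.lineMap (pt u) (pt v) t ≠ pt w := by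
  intro h
  have hne : pt u ≠ pt v := fun he => by
    have := pt_injective he
    subst this
    unfold LatticeAdj at huv
    omega
  have hw : pt w ∈ seg u v := by
    rw [← h, seg, segment_eq_image_lineMap]
    exact ⟨t, Set.Ioo_subset_Icc_self ht, rfl⟩
  rcases eq_or_eq_of_pt_mem_seg (Or.inr huv) hw with rfl | rfl
  · exact ((AffineMap.lineMap_eq_left_iff).1 h).elim hne ht.1.ne'
  · exact ((AffineMap.lineMap_eq_right_iff).1 h).elim hne ht.2.ne

theorem sym2_eq_of_lineMap_mem_seg {u v a b : ℤ × ℤ} (huv : LatticeAdj u v)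
    (hab : a = b ∨ LatticeAdj a b) {t : ℝ} (ht : t ∈ Set.Ioo (0 : ℝ) 1)
    (h : AffineMap.lineMap (pt u) (pt v) t ∈ seg a b) : s(a, b) = s(u, v) := by
  have huv' : AffineMap.lineMap (pt u) (pt v) t ∈ seg u v := by
    rw [seg, segment_eq_image_lineMap]
    exact ⟨t, Set.Ioo_subset_Icc_self ht, rfl⟩
  have hne := lineMap_pt_ne_pt huv ht
  generalize (AffineMap.lineMap (pt u) (pt v) t : ℝ × ℝ) = z at *
  rcases mem_seg_cases hab h with (h | h) | ⟨i, j, h₁, h₂, he⟩ | ⟨i, j, h₁, h₂, he⟩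
  · exact absurd h (hne _)
  · exact absurd h (hne _)
  all_goals
    rcases mem_seg_cases (Or.inr huv) huv' with
      (h | h) | ⟨i', j', h₁', h₂', he'⟩ | ⟨i', j', h₁', h₂', he'⟩
    · exact absurd h (hne _)
    · exact absurd h (hne _)
  · obtain rfl : i = i' := by exact_mod_cast h₁.symm.trans h₁'
    rw [he, he', eq_of_mem_Ioo_of_mem_Icc h₂' (Set.Ioo_subset_Icc_self h₂)]
  · exact absurd (h₁ ▸ h₁') (intCast_notMem_Ioo _ _)
  · exact absurd (h₁' ▸ h₁) (intCast_notMem_Ioo _ _)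
  · obtain rfl : j = j' := by exact_mod_cast h₂.symm.trans h₂'
    rw [he, he', eq_of_mem_Ioo_of_mem_Icc h₁' (Set.Ioo_subset_Icc_self h₁)]

variable {X : Type*} (M : GridMap X)

/-- The points of the plane lying on the points of `W` or on the edges of `D`. -/
def skeleton : Set (ℝ × ℝ) := pt '' M.W ∪ {z | ∃ u v, M.D.Adj u v ∧ z ∈ seg u v}

variable {M}

theorem skeleton_cases {z : ℝ × ℝ} (hz : z ∈ M.skeleton) :
    (∃ w, z = pt w) ∨
    (∃ i j : ℤ, z.1 = i ∧ z.2 ∈ Set.Ioo (j : ℝ) (j + 1) ∧ M.D.Adj (i, j) (i, j + 1)) ∨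
    ∃ i j : ℤ, z.1 ∈ Set.Ioo (i : ℝ) (i + 1) ∧ z.2 = j ∧ M.D.Adj (i, j) (i + 1, j) := by
  rcases hz with ⟨w, -, rfl⟩ | ⟨u, v, huv, hz⟩
  · exact Or.inl ⟨w, rfl⟩
  rw [← mem_edgeSet] at huv
  rcases mem_seg_cases (Or.inr (M.lattice _ _ huv)) hz with
    (h | h) | ⟨i, j, h₁, h₂, he⟩ | ⟨i, j, h₁, h₂, he⟩
  · exact Or.inl ⟨_, h⟩
  · exact Or.inl ⟨_, h⟩
  · exact Or.inr (Or.inl ⟨i, j, h₁, h₂, mem_edgeSet _ |>.1 (he ▸ huv)⟩)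
  · exact Or.inr (Or.inr ⟨i, j, h₁, h₂, mem_edgeSet _ |>.1 (he ▸ huv)⟩)

theorem sameFace_of_mem_cell {z : ℝ × ℝ} (hz : z ∉ M.skeleton) {p q : ℤ × ℤ} (hp : z ∈ cell p)
    (hq : z ∈ cell q) : SameFace M.D p q := by
  have step : ∀ {p q a b}, Across p q a b → z ∈ cell p → z ∈ cell q → SameFace M.D p q :=
    fun h hp hq => .rel _ _ ⟨_, _, h, fun hD => hz (Or.inr ⟨_, _, hD, h.mem_seg hp hq⟩)⟩
  have near : ∀ {m n : ℤ} {x : ℝ}, ((m : ℝ) ≤ x ∧ x ≤ m + 1) → ((n : ℝ) ≤ x ∧ x ≤ n + 1) →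
      n = m ∨ n = m + 1 ∨ m = n + 1 := by
    rintro m n x ⟨hm, hm'⟩ ⟨hn, hn'⟩
    have i1 : n ≤ m + 1 := by rify; linarith
    have i2 : m ≤ n + 1 := by rify; linarith
    omega
  obtain ⟨i, j⟩ := p
  obtain ⟨i', j'⟩ := q
  have hr : z ∈ cell (i', j) := ⟨hq.1, hp.2⟩
  refine Relation.EqvGen.trans _ (i', j) _ ?_ ?_
  · rcases near hp.1 hr.1 with h | h | h <;> dsimp only at h <;> subst h
    · exact .refl _
    · exact step (.right _ _) hp hr
    · exact (step (.right _ _) hr hp).symm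
  · rcases near hr.2 hq.2 with h | h | h <;> dsimp only at h <;> subst h
    · exact .refl _
    · exact step (.up _ _) hr hq
    · exact (step (.up _ _) hq hr).symm

theorem notMem_skeleton_of_mem_openCell {p : ℤ × ℤ} {z : ℝ × ℝ} (hz : z ∈ openCell p) :
    z ∉ M.skeleton := by
  obtain ⟨h₁, h₂⟩ := hz
  intro hz
  rcases skeleton_cases hz with ⟨w, rfl⟩ | ⟨i, j, h, -⟩ | ⟨i, j, -, h, -⟩
  · exact intCast_notMem_Ioo _ _ h₁
  · exact intCast_notMem_Ioo _ _ (h ▸ h₁)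
  · exact intCast_notMem_Ioo _ _ (h ▸ h₂)

theorem eq_add_one_of_intCast_mem_Ioo {m n : ℤ} (h : (n : ℝ) ∈ Set.Ioo (m : ℝ) (m + 2)) :
    n = m + 1 := by
  obtain ⟨hm, hm'⟩ := h
  norm_cast at hm hm'
  omega

theorem exists_isPreconnected_of_cellStep {p q : ℤ × ℤ} (h : CellStep M.D p q) :
    ∃ U : Set (ℝ × ℝ), IsPreconnected U ∧ openCell p ⊆ U ∧ openCell q ⊆ U ∧
      Disjoint U M.skeleton := by
  obtain ⟨a, b, hab, hD⟩ := h
  simp only [Set.disjoint_left]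
  cases hab with
  | right i j =>
    refine ⟨Set.Ioo (i : ℝ) (i + 2) ×ˢ Set.Ioo (j : ℝ) (j + 1),
      ((convex_Ioo _ _).prod (convex_Ioo _ _)).isPreconnected,
      Set.prod_mono (Set.Ioo_subset_Ioo le_rfl (by simp)) subset_rfl,
      Set.prod_mono (Set.Ioo_subset_Ioo (by simp) (by push_cast; linarith)) subset_rfl, ?_⟩
    rintro z ⟨h₁, h₂⟩ hz
    rcases skeleton_cases hz with ⟨w, rfl⟩ | ⟨i', j', h, h', hadj⟩ | ⟨i', j', -, h, -⟩
    · exact intCast_notMem_Ioo _ _ h₂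
    · rw [eq_add_one_of_intCast_mem_Ioo (show (i' : ℝ) ∈ _ from h ▸ h₁),
        eq_of_mem_Ioo_of_mem_Icc h₂ (Set.Ioo_subset_Icc_self h')] at hadj
      exact hD hadj
    · exact intCast_notMem_Ioo _ _ (h ▸ h₂)
  | up i j =>
    refine ⟨Set.Ioo (i : ℝ) (i + 1) ×ˢ Set.Ioo (j : ℝ) (j + 2),
      ((convex_Ioo _ _).prod (convex_Ioo _ _)).isPreconnected,
      Set.prod_mono subset_rfl (Set.Ioo_subset_Ioo le_rfl (by simp)),
      Set.prod_mono subset_rfl (Set.Ioo_subset_Ioo (by simp) (by push_cast; linarith)), ?_⟩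
    rintro z ⟨h₁, h₂⟩ hz
    rcases skeleton_cases hz with ⟨w, rfl⟩ | ⟨i', j', h, -⟩ | ⟨i', j', h', h, hadj⟩
    · exact intCast_notMem_Ioo _ _ h₁
    · exact intCast_notMem_Ioo _ _ (h ▸ h₁)
    · rw [eq_add_one_of_intCast_mem_Ioo (show (j' : ℝ) ∈ _ from h ▸ h₂),
        eq_of_mem_Ioo_of_mem_Icc h₁ (Set.Ioo_subset_Icc_self h')] at hadj
      exact hD hadj

end GridMap

namespace GridMap

variable {X : Type*} {M : GridMap X}

theorem lab_eq_of_reachable_mono {u v : ℤ × ℤ} (h : M.mono.Reachable u v) : M.lab u = M.lab v := by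
  obtain ⟨w⟩ := h
  induction w with
  | nil => rfl
  | cons h _ ih => exact h.2.trans ih

theorem mem_of_reachable_mono {u v : ℤ × ℤ} (h : M.mono.Reachable u v) (hu : u ∈ M.W) :
    v ∈ M.W := by
  obtain ⟨w⟩ := h
  induction w with
  | nil => exact hu
  | cons h _ ih => exact ih (mem_right h.1)

theorem joinGraph_reachable_of_le_mono {u v a b : ℤ × ℤ} {F : SimpleGraph (ℤ × ℤ)}
    (hF : F ≤ M.mono) (huv : ¬ F.Adj u v) (ha : M.lab a ∈ ({M.lab u, M.lab v} : Set X))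
    (h : F.Reachable a b) : (M.joinGraph u v).Reachable a b := by
  obtain ⟨w⟩ := h
  induction w with
  | nil => rfl
  | cons hac _ ih =>
    have hc := (hF hac).2 ▸ ha
    refine Reachable.trans (Adj.reachable ⟨(hF hac).1, fun he => huv ?_, ha, hc⟩) (ih hc)
    rwa [← mem_edgeSet, he]

theorem Irreducible.isAcyclic_mono (hM : M.Irreducible) : M.mono.IsAcyclic := by
  rw [isAcyclic_iff_forall_adj_isBridge]
  intro u v huv
  rw [isBridge_iff]
  exact fun hr => hM u v huv.1 (joinGraph_reachable_of_le_mono (deleteEdges_le _)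
    (by simp [deleteEdges_adj]) (Set.mem_insert _ _) hr)

theorem Irreducible.sym2_eq (hM : M.Irreducible) {u v u' v' : ℤ × ℤ} (h : M.D.Adj u v)
    (h' : M.D.Adj u' v') (hne : M.lab u ≠ M.lab v) (hu : M.lab u = M.lab u')
    (hv : M.lab v = M.lab v') : s(u, v) = s(u', v') := by
  by_contra hcon
  have hu' : M.lab u' ∈ ({M.lab u, M.lab v} : Set X) := Or.inl hu.symm
  have hv' : M.lab v' ∈ ({M.lab u, M.lab v} : Set X) := Or.inr hv.symm
  have inside {a b : ℤ × ℤ} := joinGraph_reachable_of_le_mono (a := a) (b := b) (le_refl M.mono)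
    (fun h : M.mono.Adj u v => hne h.2)
  have hfirst := inside (Or.inl rfl) (M.conn u (M.mem_left _ _ h) u' (M.mem_left _ _ h') hu)
  have hlast := inside hv' (M.conn v' (mem_right h') v (mem_right h) hv.symm)
  have hmid : (M.joinGraph u v).Adj u' v' := ⟨h', hcon, hu', hv'⟩
  exact hM u v h (hfirst.trans (hmid.reachable.trans hlast))

theorem eq_or_mem_seg_of_mem_blob {F : SimpleGraph (ℤ × ℤ)} {u : ℤ × ℤ} {z w : ℝ × ℝ}
    (hz : z ∈ blob F u) (hw : w ∈ blob F u) : z = w ∨ ∃ a b, F.Adj a b ∧ z ∈ seg a b := by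
  obtain ⟨a, b, ha, rfl | hab, hz⟩ := hz
  · rw [seg, segment_same, Set.mem_singleton_iff] at hz
    subst hz
    by_cases h : ∃ b, F.Adj a b
    · obtain ⟨b, hb⟩ := h
      exact Or.inr ⟨a, b, hb, left_mem_segment _ _ _⟩
    · push Not at h
      rw [blob_eq_of_reachable ha, blob_eq_singleton h] at hw
      exact Or.inl hw.symm
  · exact Or.inr ⟨a, b, hab, hz⟩

theorem reachable_of_pt_mem_blob {F : SimpleGraph (ℤ × ℤ)}
    (hlat : ∀ u v, F.Adj u v → LatticeAdj u v) {u w : ℤ × ℤ} (h : pt w ∈ blob F u) :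
    F.Reachable u w := by
  obtain ⟨a, b, ha, hab, hz⟩ := h
  rcases eq_or_eq_of_pt_mem_seg (hab.imp_right (hlat _ _)) hz with rfl | rfl
  · exact ha
  · rcases hab with rfl | hab
    · exact ha
    · exact ha.trans hab.reachable

theorem latticeAdj_of_mono_adj (u v : ℤ × ℤ) (h : M.mono.Adj u v) : LatticeAdj u v :=
  M.lattice u v h.1

variable (M) in
/-- A map of the plane contracting every component of `M.mono` to a point and injective
otherwise. -/
structure Collapsing where
  f : ℝ × ℝ → ℝ × ℝ
  isCollapse : IsCollapse f fun z w => ∃ u, z ∈ blob M.mono u ∧ w ∈ blob M.mono u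

theorem Irreducible.nonempty_collapsing (hM : M.Irreducible) : Nonempty M.Collapsing := by
  obtain ⟨f, hf⟩ := exists_collapse_forest M.mono hM.isAcyclic_mono latticeAdj_of_mono_adj
    (finite_edgeSet.subset (edgeSet_mono fun _ _ h => h.1))
  exact ⟨f, hf⟩

namespace Collapsing

variable (C : M.Collapsing) {z w : ℝ × ℝ} {u v : ℤ × ℤ}

theorem eq_or_mem_seg (h : C.f z = C.f w) : z = w ∨ ∃ a b, M.mono.Adj a b ∧ z ∈ seg a b :=
  ((C.isCollapse.eq_iff z w).1 h).elim Or.inl fun ⟨_, hz, hw⟩ => eq_or_mem_seg_of_mem_blob hz hw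

theorem eq_of_notMem_skeleton (h : C.f z = C.f w) (hz : z ∉ M.skeleton) : z = w :=
  (C.eq_or_mem_seg h).resolve_right fun ⟨a, b, hab, hz'⟩ => hz (Or.inr ⟨a, b, hab.1, hz'⟩)

theorem mem_skeleton (h : C.f z = C.f w) (hw : w ∈ M.skeleton) : z ∈ M.skeleton := by
  by_contra hz
  exact hz (C.eq_of_notMem_skeleton h hz ▸ hw)

theorem apply_eq_of_mem_blob (hz : z ∈ blob M.mono u) (hw : w ∈ blob M.mono u) : C.f z = C.f w :=
  (C.isCollapse.eq_iff _ _).2 (Or.inr ⟨u, hz, hw⟩)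

theorem apply_pt_eq_iff (hu : u ∈ M.W) (hv : v ∈ M.W) :
    C.f (pt u) = C.f (pt v) ↔ M.lab u = M.lab v := by
  refine ⟨fun h => ?_, fun h => C.apply_eq_of_mem_blob (pt_mem_blob (.refl _))
    (pt_mem_blob (M.conn u hu v hv h))⟩
  rcases (C.isCollapse.eq_iff _ _).1 h with h | ⟨x, hu, hv⟩
  · rw [pt_injective h]
  · exact lab_eq_of_reachable_mono ((reachable_of_pt_mem_blob latticeAdj_of_mono_adj hu).symm.trans
      (reachable_of_pt_mem_blob latticeAdj_of_mono_adj hv))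

theorem apply_eq_of_mem_seg (h : M.mono.Adj u v) (hz : z ∈ seg u v) : C.f z = C.f (pt u) :=
  C.apply_eq_of_mem_blob (seg_subset_blob h hz) (pt_mem_blob (.refl _))

theorem lineMap_eq_of_apply_eq (h : M.D.Adj u v) (hlab : M.lab u ≠ M.lab v) {t : ℝ}
    (ht : t ∈ Set.Ioo (0 : ℝ) 1) (hw : C.f (AffineMap.lineMap (pt u) (pt v) t) = C.f w) :
    AffineMap.lineMap (pt u) (pt v) t = w := by
  refine (C.eq_or_mem_seg hw).resolve_right fun ⟨a, b, hab, hz⟩ => hlab ?_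
  have := sym2_eq_of_lineMap_mem_seg (M.lattice _ _ h) (Or.inr (M.lattice _ _ hab.1)) ht hz
  rcases Sym2.eq_iff.1 this with ⟨rfl, rfl⟩ | ⟨rfl, rfl⟩
  · exact hab.2
  · exact hab.2.symm

theorem exists_corner {x q : ℤ × ℤ} (hx : x ∈ M.W) (hz : z ∈ cell q) (h : C.f z = C.f (pt x)) :
    ∃ y ∈ M.W, Corner q y ∧ M.lab y = M.lab x := by
  rcases (C.isCollapse.eq_iff _ _).1 h with rfl | ⟨u, ⟨a, b, ha, hab, hz'⟩, hu⟩
  · exact ⟨x, hx, corner_of_pt_mem_cell hz, rfl⟩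
  · have hxa := (reachable_of_pt_mem_blob latticeAdj_of_mono_adj hu).symm.trans ha
    have hxb : M.mono.Reachable x b := by
      rcases hab with rfl | hab
      · exact hxa
      · exact hxa.trans hab.reachable
    rcases corner_or_corner_of_mem_seg (hab.imp_right (latticeAdj_of_mono_adj _ _)) hz' hz
      with hc | hc
    · exact ⟨a, mem_of_reachable_mono hxa hx, hc, (lab_eq_of_reachable_mono hxa).symm⟩
    · exact ⟨b, mem_of_reachable_mono hxb hx, hc, (lab_eq_of_reachable_mono hxb).symm⟩

theorem image_subset_compl {U : Set (ℝ × ℝ)} (hU : Disjoint U M.skeleton) :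
    C.f '' U ⊆ (C.f '' M.skeleton)ᶜ := by
  rintro _ ⟨x, hx, rfl⟩ ⟨y, hy, hxy⟩
  exact Set.disjoint_left.1 hU hx (C.mem_skeleton hxy.symm hy)

theorem connectedComponentIn_eq_of_isPreconnected {U : Set (ℝ × ℝ)} (hU : IsPreconnected U)
    (hd : Disjoint U M.skeleton) (hz : z ∈ U) (hw : w ∈ U) :
    connectedComponentIn (C.f '' M.skeleton)ᶜ (C.f z) =
      connectedComponentIn (C.f '' M.skeleton)ᶜ (C.f w) :=
  connectedComponentIn_eq ((hU.image C.f C.isCollapse.continuous.continuousOn)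
    |>.subset_connectedComponentIn ⟨z, hz, rfl⟩ (C.image_subset_compl hd) ⟨w, hw, rfl⟩)

theorem disjoint_openCell_skeleton (p : ℤ × ℤ) : Disjoint (openCell p) M.skeleton :=
  Set.disjoint_left.2 fun _ => notMem_skeleton_of_mem_openCell

theorem connectedComponentIn_eq_of_sameFace {p q : ℤ × ℤ} (h : SameFace M.D p q)
    (hz : z ∈ openCell p) (hw : w ∈ openCell q) :
    connectedComponentIn (C.f '' M.skeleton)ᶜ (C.f z) =
      connectedComponentIn (C.f '' M.skeleton)ᶜ (C.f w) := by
  induction h generalizing z w with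
  | rel p q h =>
    obtain ⟨U, hU, hp, hq, hd⟩ := exists_isPreconnected_of_cellStep h
    exact C.connectedComponentIn_eq_of_isPreconnected hU hd (hp hz) (hq hw)
  | refl p =>
    exact C.connectedComponentIn_eq_of_isPreconnected
      ((convex_Ioo _ _).prod (convex_Ioo _ _)).isPreconnected (disjoint_openCell_skeleton p) hz hw
  | symm p q _ ih => exact (ih hw hz).symm
  | trans p q r _ _ ih₁ ih₂ =>
    obtain ⟨m, hm⟩ := openCell_nonempty q
    exact (ih₁ hz hm).trans (ih₂ hm hw)

theorem image_openCell_subset {p q : ℤ × ℤ} (h : SameFace M.D p q) (hz : z ∈ openCell p) :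
    C.f '' openCell q ⊆ connectedComponentIn (C.f '' M.skeleton)ᶜ (C.f z) := by
  rintro _ ⟨y, hy, rfl⟩
  rw [C.connectedComponentIn_eq_of_sameFace h hz hy]
  exact mem_connectedComponentIn
    (C.image_subset_compl (disjoint_openCell_skeleton q) (Set.mem_image_of_mem _ hy))

theorem sameFace_of_mem_iUnion_cell {A : Set (ℤ × ℤ)} {x : ℝ × ℝ} (hx : x ∉ C.f '' M.skeleton)
    (hA : x ∈ C.f '' ⋃ q ∈ A, cell q) {B : Set (ℤ × ℤ)} (hB : x ∈ C.f '' ⋃ q ∈ B, cell q) :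
    ∃ q ∈ A, ∃ r ∈ B, SameFace M.D q r := by
  obtain ⟨a, ha, rfl⟩ := hA
  obtain ⟨b, hb, hab⟩ := hB
  have hnot : a ∉ M.skeleton := fun h => hx ⟨a, h, rfl⟩
  obtain rfl := C.eq_of_notMem_skeleton hab.symm hnot
  simp only [Set.mem_iUnion] at ha hb
  obtain ⟨q, hq, haq⟩ := ha
  obtain ⟨r, hr, har⟩ := hb
  exact ⟨q, hq, r, hr, sameFace_of_mem_cell hnot haq har⟩

theorem exists_closure_face_subset {x : ℝ × ℝ} (hx : x ∉ C.f '' M.skeleton) :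
    ∃ p, closure (connectedComponentIn (C.f '' M.skeleton)ᶜ x) ⊆
      C.f '' ⋃ q ∈ {q | SameFace M.D p q}, cell q := by
  obtain ⟨y, rfl⟩ := C.isCollapse.surjective x
  refine ⟨(⌊y.1⌋, ⌊y.2⌋), closure_minimal (fun z hz => ?_)
    (C.isCollapse.isClosedMap _ (isClosed_biUnion_cell _))⟩
  set p : ℤ × ℤ := (⌊y.1⌋, ⌊y.2⌋)
  set A := {q | SameFace M.D p q}
  have hcover : ∀ z, z ∈ C.f '' (⋃ q ∈ A, cell q) ∪ C.f '' (⋃ q ∈ Aᶜ, cell q) := by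
    intro z
    obtain ⟨z, rfl⟩ := C.isCollapse.surjective z
    rw [← Set.image_union, ← Set.biUnion_union, Set.union_compl_self]
    exact ⟨z, Set.mem_biUnion (Set.mem_univ _) (mem_cell_floor z), rfl⟩
  refine (hcover z).resolve_right fun hz' => ?_
  obtain ⟨x, hx', hxA, hxB⟩ := isPreconnected_closed_iff.1
    (isPreconnected_connectedComponentIn (F := (C.f '' M.skeleton)ᶜ) (x := C.f y)) _ _
    (C.isCollapse.isClosedMap _ (isClosed_biUnion_cell A))
    (C.isCollapse.isClosedMap _ (isClosed_biUnion_cell Aᶜ)) (fun z _ => hcover z)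
    ⟨C.f y, mem_connectedComponentIn hx,
      ⟨y, Set.mem_biUnion (Relation.EqvGen.refl p) (mem_cell_floor y), rfl⟩⟩ ⟨z, hz, hz'⟩
  obtain ⟨q, hq, r, hr, hqr⟩ :=
    C.sameFace_of_mem_iUnion_cell (connectedComponentIn_subset _ _ hx') hxA hxB
  exact hr (Relation.EqvGen.trans _ _ _ hq hqr)

end Collapsing

end GridMap

/-- Every plane graph all of whose faces have size at most `k` has a cyclic coloring with `n`
colors. -/
def CyclicColoringBound (k n : ℕ) : Prop :=
  ∀ (r : ℕ) (H : SimpleGraph (Fin r)) (emb : PlaneEmbedding H),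
    emb.MaxFaceSizeLE k → emb.HasCyclicColoring n

namespace GridMap

variable {X ι : Type*} {M : GridMap X}

namespace Collapsing

variable (C : M.Collapsing) {u v u' v' : ℤ × ℤ} {s t : ℝ}

/-- The image of the lattice edge `uv` under the collapsing map, parametrized by `[0, 1]`. -/
noncomputable def arc (u v : ℤ × ℤ) (t : ℝ) : ℝ × ℝ := C.f (AffineMap.lineMap (pt u) (pt v) t)

theorem arc_zero : C.arc u v 0 = C.f (pt u) := by rw [arc, AffineMap.lineMap_apply_zero]

theorem arc_one : C.arc u v 1 = C.f (pt v) := by rw [arc, AffineMap.lineMap_apply_one]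

theorem continuous_arc : Continuous (C.arc u v) :=
  C.isCollapse.continuous.comp AffineMap.lineMap_continuous

theorem image_arc : C.arc u v '' Set.Icc 0 1 = C.f '' seg u v := by
  rw [seg, segment_eq_image_lineMap, Set.image_image]
  rfl

theorem eq_of_arc_eq (h : M.D.Adj u v) (hlab : M.lab u ≠ M.lab v) (hs : s ∈ Set.Ioo (0 : ℝ) 1)
    (hst : C.arc u v s = C.arc u v t) : s = t :=
  AffineMap.lineMap_injective ℝ (fun he => hlab (congrArg M.lab (pt_injective he)))
    (C.lineMap_eq_of_apply_eq h hlab hs hst)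

theorem injOn_arc (h : M.D.Adj u v) (hlab : M.lab u ≠ M.lab v) :
    Set.InjOn (C.arc u v) (Set.Icc 0 1) := by
  have hends : C.arc u v 0 ≠ C.arc u v 1 := by
    rwa [arc_zero, arc_one, ne_eq, C.apply_pt_eq_iff (M.mem_left _ _ h) (mem_right h)]
  intro s hs t ht hst
  rcases Set.eq_endpoints_or_mem_Ioo_of_mem_Icc hs with rfl | rfl | hs
  · rcases Set.eq_endpoints_or_mem_Ioo_of_mem_Icc ht with rfl | rfl | ht
    · rfl
    · exact absurd hst hends
    · exact (C.eq_of_arc_eq h hlab ht hst.symm).symm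
  · rcases Set.eq_endpoints_or_mem_Ioo_of_mem_Icc ht with rfl | rfl | ht
    · exact absurd hst.symm hends
    · rfl
    · exact (C.eq_of_arc_eq h hlab ht hst.symm).symm
  · exact C.eq_of_arc_eq h hlab hs hst

theorem arc_ne_apply_pt (h : M.D.Adj u v) (hlab : M.lab u ≠ M.lab v)
    (ht : t ∈ Set.Ioo (0 : ℝ) 1) (w : ℤ × ℤ) : C.arc u v t ≠ C.f (pt w) := fun he =>
  lineMap_pt_ne_pt (M.lattice _ _ h) ht w (C.lineMap_eq_of_apply_eq h hlab ht he)

theorem sym2_eq_of_arc_eq (h : M.D.Adj u v) (hlab : M.lab u ≠ M.lab v) (h' : M.D.Adj u' v')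
    (hs : s ∈ Set.Ioo (0 : ℝ) 1) (ht : t ∈ Set.Icc (0 : ℝ) 1)
    (hst : C.arc u v s = C.arc u' v' t) : s(u, v) = s(u', v') := by
  refine (sym2_eq_of_lineMap_mem_seg (M.lattice _ _ h) (Or.inr (M.lattice _ _ h')) hs ?_).symm
  rw [C.lineMap_eq_of_apply_eq h hlab hs hst, seg, segment_eq_image_lineMap]
  exact Set.mem_image_of_mem _ ht

end Collapsing

variable (M) in
/-- The points `rep i` represent each label of `M` exactly once. -/
structure IsTransversal (rep : ι → ℤ × ℤ) : Prop where
  mem : ∀ i, rep i ∈ M.W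
  inj : ∀ {i j}, M.lab (rep i) = M.lab (rep j) → i = j
  surj : ∀ w ∈ M.W, ∃ i, M.lab (rep i) = M.lab w

theorem exists_isTransversal : ∃ (r : ℕ) (rep : Fin r → ℤ × ℤ), M.IsTransversal rep := by
  have : Finite (M.lab '' M.W) := M.finite.image _
  let e := Finite.equivFin (M.lab '' M.W)
  choose rep hrep hlab using fun i => (e.symm i).2
  refine ⟨_, rep, hrep, fun {i j} h => e.symm.injective (Subtype.ext ?_), fun w hw =>
    ⟨e ⟨M.lab w, w, hw, rfl⟩, by rw [hlab, Equiv.symm_apply_apply]⟩⟩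
  rw [← hlab, ← hlab, h]

variable (M) in
/-- The graph drawn by `M`, with the labels numbered by representatives. -/
def labelGraph (rep : ι → ℤ × ℤ) : SimpleGraph ι where
  Adj i j := i ≠ j ∧ ∃ u v, M.D.Adj u v ∧ M.lab u = M.lab (rep i) ∧ M.lab v = M.lab (rep j)
  symm := ⟨fun _ _ ⟨hne, u, v, h, hu, hv⟩ => ⟨hne.symm, v, u, h.symm, hv, hu⟩⟩
  loopless := ⟨fun _ h => h.1 rfl⟩

variable {rep : ι → ℤ × ℤ}

variable (M) in
/-- The edge `uv` of `D` represents the edge `e` of `M.labelGraph rep`. -/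
structure Represents (rep : ι → ℤ × ℤ) (e : Sym2 ι) (u v : ℤ × ℤ) : Prop where
  adj : M.D.Adj u v
  lab_ne : M.lab u ≠ M.lab v
  ends : ∃ i j, e = s(i, j) ∧ M.lab u = M.lab (rep i) ∧ M.lab v = M.lab (rep j)

theorem IsTransversal.exists_represents (hrep : M.IsTransversal rep)
    (e : (M.labelGraph rep).edgeSet) : ∃ uv : (ℤ × ℤ) × ℤ × ℤ, M.Represents rep e uv.1 uv.2 := by
  obtain ⟨e, he⟩ := e
  induction e with
  | _ i j =>
    obtain ⟨hne, u, v, h, hu, hv⟩ := he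
    exact ⟨(u, v), h, fun h => hne (hrep.inj (by rw [← hu, ← hv, h])), i, j, rfl, hu, hv⟩

theorem Represents.eq_of_sym2_eq (hrep : M.IsTransversal rep) {e e' : Sym2 ι} {u v u' v' : ℤ × ℤ}
    (he : M.Represents rep e u v) (he' : M.Represents rep e' u' v') (h : s(u, v) = s(u', v')) :
    e = e' := by
  obtain ⟨i, j, rfl, hu, hv⟩ := he.ends
  obtain ⟨i', j', rfl, hu', hv'⟩ := he'.ends
  rw [Sym2.eq_iff]
  rcases Sym2.eq_iff.1 h with ⟨rfl, rfl⟩ | ⟨rfl, rfl⟩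
  · exact Or.inl ⟨hrep.inj (hu.symm.trans hu'), hrep.inj (hv.symm.trans hv')⟩
  · exact Or.inr ⟨hrep.inj (hu.symm.trans hv'), hrep.inj (hv.symm.trans hu')⟩

theorem Represents.sym2_eq (hM : M.Irreducible) {e : Sym2 ι} {u v u' v' : ℤ × ℤ}
    (h : M.Represents rep e u v) (h' : M.Represents rep e u' v') : s(u, v) = s(u', v') := by
  obtain ⟨i, j, rfl, hu, hv⟩ := h.ends
  obtain ⟨i', j', he, hu', hv'⟩ := h'.ends
  rcases Sym2.eq_iff.1 he with ⟨rfl, rfl⟩ | ⟨rfl, rfl⟩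
  · exact hM.sym2_eq h.adj h'.adj h.lab_ne (hu.trans hu'.symm) (hv.trans hv'.symm)
  · rw [hM.sym2_eq h.adj h'.adj.symm h.lab_ne (hu.trans hv'.symm) (hv.trans hu'.symm), Sym2.eq_swap]

namespace IsTransversal

variable (hrep : M.IsTransversal rep) (C : M.Collapsing)

/-- The edge of `D` chosen to draw the edge `e` of `M.labelGraph rep`. -/
noncomputable def ends (e : (M.labelGraph rep).edgeSet) : (ℤ × ℤ) × ℤ × ℤ :=
  (hrep.exists_represents e).choose

theorem represents_ends (e : (M.labelGraph rep).edgeSet) :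
    M.Represents rep e (hrep.ends e).1 (hrep.ends e).2 :=
  (hrep.exists_represents e).choose_spec

theorem exists_arc_ends (e : (M.labelGraph rep).edgeSet) : ∃ i j, (e : Sym2 ι) = s(i, j) ∧
    C.arc (hrep.ends e).1 (hrep.ends e).2 0 = C.f (pt (rep i)) ∧
    C.arc (hrep.ends e).1 (hrep.ends e).2 1 = C.f (pt (rep j)) := by
  have he := hrep.represents_ends e
  obtain ⟨i, j, hij, hu, hv⟩ := he.ends
  refine ⟨i, j, hij, ?_, ?_⟩
  · rw [C.arc_zero]
    exact (C.apply_pt_eq_iff (M.mem_left _ _ he.adj) (hrep.mem _)).2 hu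
  · rw [C.arc_one]
    exact (C.apply_pt_eq_iff (mem_right he.adj) (hrep.mem _)).2 hv

/-- The drawing of `M.labelGraph rep` obtained by collapsing the blobs of `M` to points. -/
noncomputable def planeEmbedding : PlaneEmbedding (M.labelGraph rep) where
  pos i := C.f (pt (rep i))
  inj _ _ h := hrep.inj ((C.apply_pt_eq_iff (hrep.mem _) (hrep.mem _)).1 h)
  arc e := C.arc (hrep.ends e).1 (hrep.ends e).2
  arc_cont _ := C.continuous_arc.continuousOn
  arc_inj e := C.injOn_arc (hrep.represents_ends e).adj (hrep.represents_ends e).lab_ne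
  arc_ends e := hrep.exists_arc_ends C e
  arc_avoid e _ ht := fun ⟨_, hi⟩ =>
    C.arc_ne_apply_pt (hrep.represents_ends e).adj (hrep.represents_ends e).lab_ne ht _ hi.symm
  arc_disjoint e e' hne _ hs _ ht h := hne (Subtype.ext
    ((hrep.represents_ends e).eq_of_sym2_eq hrep (hrep.represents_ends e')
      (C.sym2_eq_of_arc_eq (hrep.represents_ends e).adj (hrep.represents_ends e).lab_ne
        (hrep.represents_ends e').adj hs (Set.Ioo_subset_Icc_self ht) h)))

theorem planeEmbedding_pos (i : ι) : (hrep.planeEmbedding C).pos i = C.f (pt (rep i)) := rfl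

theorem drawing_planeEmbedding_subset :
    (hrep.planeEmbedding C).drawing ⊆ C.f '' M.skeleton := by
  rintro z (⟨i, rfl⟩ | hz)
  · exact ⟨_, Or.inl ⟨_, hrep.mem i, rfl⟩, rfl⟩
  · obtain ⟨e, he⟩ := Set.mem_iUnion.1 hz
    rw [planeEmbedding, C.image_arc] at he
    exact Set.image_mono
      (fun _ h => Or.inr ⟨_, _, (hrep.represents_ends e).adj, h⟩) he

theorem apply_pt_mem_drawing {w : ℤ × ℤ} (hw : w ∈ M.W) :
    C.f (pt w) ∈ (hrep.planeEmbedding C).drawing := by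
  obtain ⟨i, hi⟩ := hrep.surj w hw
  exact Or.inl ⟨i, (C.apply_pt_eq_iff (hrep.mem i) hw).2 hi⟩

theorem image_seg_subset_drawing (hM : M.Irreducible) {u v : ℤ × ℤ} (huv : M.D.Adj u v)
    (hlab : M.lab u ≠ M.lab v) : C.f '' seg u v ⊆ (hrep.planeEmbedding C).drawing := by
  obtain ⟨i, hi⟩ := hrep.surj u (M.mem_left _ _ huv)
  obtain ⟨j, hj⟩ := hrep.surj v (mem_right huv)
  have hij : i ≠ j := fun h => hlab (by rw [← hi, ← hj, h])
  let e : (M.labelGraph rep).edgeSet := ⟨s(i, j), hij, u, v, huv, hi.symm, hj.symm⟩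
  have he : M.Represents rep e u v := ⟨huv, hlab, i, j, rfl, hi.symm, hj.symm⟩
  have hseg : seg u v = seg (hrep.ends e).1 (hrep.ends e).2 := by
    rcases Sym2.eq_iff.1 (he.sym2_eq hM (hrep.represents_ends e)) with ⟨h, h'⟩ | ⟨h, h'⟩
    · rw [← h, ← h']
    · rw [← h, ← h', seg, segment_symm]
  rw [hseg, ← C.image_arc]
  exact fun _ hz => Or.inr (Set.mem_iUnion.2 ⟨e, hz⟩)

theorem drawing_planeEmbedding (hM : M.Irreducible) :
    (hrep.planeEmbedding C).drawing = C.f '' M.skeleton := by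
  refine (hrep.drawing_planeEmbedding_subset C).antisymm ?_
  rintro _ ⟨z, ⟨w, hw, rfl⟩ | ⟨u, v, huv, hz⟩, rfl⟩
  · exact hrep.apply_pt_mem_drawing C hw
  by_cases hlab : M.lab u = M.lab v
  · rw [C.apply_eq_of_mem_seg ⟨huv, hlab⟩ hz]
    exact hrep.apply_pt_mem_drawing C (M.mem_left _ _ huv)
  · exact hrep.image_seg_subset_drawing C hM huv hlab (Set.mem_image_of_mem _ hz)

theorem maxFaceSizeLE (hM : M.Irreducible) {k : ℕ} (hk : ∀ p, (M.touched p).ncard ≤ k) :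
    (hrep.planeEmbedding C).MaxFaceSizeLE k := by
  rintro F ⟨x, hx, rfl⟩
  rw [hrep.drawing_planeEmbedding C hM] at hx ⊢
  obtain ⟨p, hp⟩ := C.exists_closure_face_subset hx
  refine (Set.ncard_le_ncard_of_injOn (fun i => M.lab (rep i)) (fun i hi => ?_)
    (fun i _ j _ h => hrep.inj h) (finite_touched p)).trans (hk p)
  obtain ⟨z, hz, hzi⟩ := hp hi
  simp only [Set.mem_iUnion] at hz
  obtain ⟨q, hq, hzq⟩ := hz
  obtain ⟨w, hw, hcor, hl⟩ := C.exists_corner (hrep.mem i) hzq hzi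
  exact ⟨q, hq, w, hw, hcor, hl⟩

theorem incidentFace_of_mem_touched {i : ι} {p : ℤ × ℤ} {z : ℝ × ℝ} (hz : z ∈ openCell p)
    (hi : M.lab (rep i) ∈ M.touched p) : (hrep.planeEmbedding C).IncidentFace i
      (connectedComponentIn (C.f '' M.skeleton)ᶜ (C.f z)) := by
  obtain ⟨q, hq, w, hw, hcor, hl⟩ := hi
  rw [PlaneEmbedding.IncidentFace, planeEmbedding_pos,
    (C.apply_pt_eq_iff (hrep.mem i) hw).2 hl.symm]
  refine closure_mono (C.image_openCell_subset hq hz)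
    (image_closure_subset_closure_image C.isCollapse.continuous ⟨pt w, ?_, rfl⟩)
  rw [closure_openCell]
  exact hcor.pt_mem_cell

theorem exists_isFace_incidentFace (hM : M.Irreducible) (p : ℤ × ℤ) :
    ∃ F, (hrep.planeEmbedding C).IsFace F ∧
      ∀ i, M.lab (rep i) ∈ M.touched p → (hrep.planeEmbedding C).IncidentFace i F := by
  obtain ⟨z, hz⟩ := openCell_nonempty p
  refine ⟨_, ⟨C.f z, ?_, rfl⟩, fun i hi => ?_⟩
  · rw [hrep.drawing_planeEmbedding C hM]
    rintro ⟨y, hy, hyz⟩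
    exact notMem_skeleton_of_mem_openCell hz (C.mem_skeleton hyz.symm hy)
  · rw [hrep.drawing_planeEmbedding C hM]
    exact hrep.incidentFace_of_mem_touched C hz hi

end IsTransversal

theorem Irreducible.colorable {k n : ℕ} (hcyc : CyclicColoringBound k n) (hn : 0 < n)
    (hM : M.Irreducible) (hk : ∀ p, (M.touched p).ncard ≤ k) : M.Colorable n := by
  obtain ⟨C⟩ := hM.nonempty_collapsing
  obtain ⟨r, rep, hrep⟩ := M.exists_isTransversal
  obtain ⟨c, hc, hcc⟩ := hcyc r _ (hrep.planeEmbedding C) (hrep.maxFaceSizeLE C hM hk)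
  have hinj : Function.Injective fun i => M.lab (rep i) := fun _ _ h => hrep.inj h
  refine ⟨Function.extend (fun i => M.lab (rep i)) (fun i => ⟨c i, hc i⟩) fun _ => ⟨0, hn⟩,
    fun p x hx y hy hxy => ?_⟩
  obtain ⟨F, hF, hinc⟩ := hrep.exists_isFace_incidentFace C hM p
  have exists_rep : ∀ x ∈ M.touched p, ∃ i, M.lab (rep i) = x := by
    rintro _ ⟨_, _, w, hw, _, rfl⟩
    exact hrep.surj w hw
  obtain ⟨i, rfl⟩ := exists_rep x hx
  obtain ⟨j, rfl⟩ := exists_rep y hy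
  simp only [hinj.extend_apply, Fin.mk.injEq] at hxy
  by_contra hne
  exact hcc F hF i j (fun h => hne (by rw [h])) (hinc i hx) (hinc j hy) hxy

theorem colorable_of_cyclicColoringBound {k n : ℕ} (hcyc : CyclicColoringBound k n) (hn : 0 < n)
    (M : GridMap X) (hM : ∀ p, (M.touched p).ncard ≤ k) : M.Colorable n :=
  colorable_of_forall_irreducible (fun _ hirr hk => hirr.colorable hcyc hn hk) M hM

end GridMap

/-! ### Extending labels -/

theorem exists_parent {V : Type*} {Γ : SimpleGraph V} {A : Set V}
    (h : ∀ v, ∃ u ∈ A, Γ.Reachable v u) :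
    ∃ (d : V → ℕ) (p : V → V), (∀ v, d v = 0 ↔ v ∈ A) ∧
      ∀ v, d v ≠ 0 → Γ.Adj v (p v) ∧ d v = d (p v) + 1 := by
  classical
  have exists_walk : ∀ v, ∃ n, ∃ u ∈ A, ∃ w : Γ.Walk v u, w.length = n := fun v => by
    obtain ⟨u, hu, ⟨w⟩⟩ := h v
    exact ⟨_, u, hu, w, rfl⟩
  let d : V → ℕ := fun v => Nat.find (exists_walk v)
  have d_le : ∀ {v u}, u ∈ A → ∀ w : Γ.Walk v u, d v ≤ w.length := fun hu w =>
    Nat.find_min' (exists_walk _) ⟨_, hu, w, rfl⟩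
  have d_eq_zero : ∀ v, d v = 0 ↔ v ∈ A := fun v => by
    refine ⟨fun hv => ?_, fun hv => Nat.le_zero.1 (d_le hv .nil)⟩
    obtain ⟨u, hu, w, hw⟩ := Nat.find_spec (exists_walk v)
    exact w.eq_of_length_eq_zero (hw.trans hv) ▸ hu
  have exists_adj : ∀ v, ∃ u, d v ≠ 0 → Γ.Adj v u ∧ d v = d u + 1 := fun v => by
    by_cases hv : d v = 0
    · exact ⟨v, fun h => absurd hv h⟩
    obtain ⟨u, hu, w, hw⟩ := Nat.find_spec (exists_walk v)
    cases w with
    | nil => exact absurd ((d_eq_zero v).2 hu) hv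
    | @cons _ x _ hx w =>
      obtain ⟨u', hu', w', hw'⟩ := Nat.find_spec (exists_walk x)
      refine ⟨x, fun _ => ⟨hx, le_antisymm ?_ ?_⟩⟩
      · exact (d_le hu' (.cons hx w')).trans_eq (by rw [Walk.length_cons, hw'])
      · exact (Nat.add_le_add_right (d_le hu w) 1).trans_eq hw
  choose p hp using exists_adj
  exact ⟨d, p, d_eq_zero, hp⟩

/-- Every vertex takes the label of a nearest vertex of `A`. -/
theorem exists_label_extension {V X : Type*} {Γ : SimpleGraph V} {A : Set V}
    (h : ∀ v, ∃ u ∈ A, Γ.Reachable v u) (l₀ : V → X) :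
    ∃ l : V → X, (∀ v ∈ A, l v = l₀ v) ∧
      ∀ v, ∃ u ∈ A, l u = l v ∧ (sameLabel Γ l).Reachable v u := by
  obtain ⟨d, p, d_eq_zero, hp⟩ := exists_parent h
  let l : V → X := fun v => l₀ (p^[d v] v)
  have l_parent : ∀ v, d v ≠ 0 → l v = l (p v) := fun v hv => by
    change l₀ (p^[d v] v) = l₀ (p^[d (p v)] (p v))
    rw [(hp v hv).2, Function.iterate_succ_apply]
  refine ⟨l, fun v hv => by simp [l, (d_eq_zero v).2 hv], fun v => ?_⟩
  induction hn : d v generalizing v with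
  | zero => exact ⟨v, (d_eq_zero v).1 hn, rfl, .refl v⟩
  | succ n ih =>
    have hv : d v ≠ 0 := by omega
    obtain ⟨u, hu, hlu, hreach⟩ := ih (p v) (by have := (hp v hv).2; omega)
    have hadj : (sameLabel Γ l).Adj v (p v) := ⟨(hp v hv).1, l_parent v hv⟩
    exact ⟨u, hu, hlu.trans (l_parent v hv).symm, hadj.reachable.trans hreach⟩

/-! ### Lattice-connected sets around squares -/

namespace GridMap

/-- The graph of the integer lattice, restricted to the points of `A`. -/
def latticeOn (A : Set (ℤ × ℤ)) : SimpleGraph (ℤ × ℤ) where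
  Adj u v := LatticeAdj u v ∧ u ∈ A ∧ v ∈ A
  symm := ⟨fun _ _ h => ⟨h.1.symm, h.2.symm⟩⟩
  loopless := ⟨fun _ h => by have := h.1; unfold LatticeAdj at this; omega⟩

theorem latticeOn_le_sameLabel {X : Type*} {A B : Set (ℤ × ℤ)} (hAB : A ⊆ B)
    {l : ℤ × ℤ → X} {x : X} (hl : ∀ w ∈ A, l w = x) :
    latticeOn A ≤ sameLabel (latticeOn B) l :=
  fun _ _ h => ⟨⟨h.1, hAB h.2.1, hAB h.2.2⟩, (hl _ h.2.1).trans (hl _ h.2.2).symm⟩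

/-- `A` is connected by lattice edges. -/
def IsLatticeConnected (A : Set (ℤ × ℤ)) : Prop := ∀ u ∈ A, ∀ v ∈ A, (latticeOn A).Reachable u v

/-- The lattice points of the closed square with lower left corner `o` and side `m`. -/
def InSquare (o : ℤ × ℤ) (m : ℤ) (w : ℤ × ℤ) : Prop :=
  (o.1 ≤ w.1 ∧ w.1 ≤ o.1 + m) ∧ (o.2 ≤ w.2 ∧ w.2 ≤ o.2 + m)

/-- The lattice points of the open square with lower left corner `o` and side `m`. -/
def InOpenSquare (o : ℤ × ℤ) (m : ℤ) (w : ℤ × ℤ) : Prop :=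
  (o.1 < w.1 ∧ w.1 < o.1 + m) ∧ (o.2 < w.2 ∧ w.2 < o.2 + m)

/-- The lattice points of the boundary of the square with lower left corner `o` and side `m`. -/
def ring (o : ℤ × ℤ) (m : ℤ) : Set (ℤ × ℤ) := {w | InSquare o m w ∧ ¬ InOpenSquare o m w}

/-- The unit cells, named by their lower left corners, of the square with lower left corner `o` and
side `m`. -/
def CellIn (o : ℤ × ℤ) (m : ℤ) (p : ℤ × ℤ) : Prop :=
  (o.1 ≤ p.1 ∧ p.1 < o.1 + m) ∧ (o.2 ≤ p.2 ∧ p.2 < o.2 + m)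

theorem mem_ring {o w : ℤ × ℤ} {m : ℤ} : w ∈ ring o m ↔ InSquare o m w ∧ ¬ InOpenSquare o m w :=
  Iff.rfl

theorem InOpenSquare.inSquare {o w : ℤ × ℤ} {m : ℤ} (h : InOpenSquare o m w) : InSquare o m w :=
  ⟨⟨h.1.1.le, h.1.2.le⟩, h.2.1.le, h.2.2.le⟩

theorem CellIn.inSquare_of_corner {o p w : ℤ × ℤ} {m : ℤ} (h : CellIn o m p) (hw : Corner p w) :
    InSquare o m w := by
  simp only [CellIn, InSquare, Corner] at *
  omega

theorem not_inOpenSquare_of_corner {o p w : ℤ × ℤ} {m : ℤ} (h : ¬ CellIn o m p)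
    (hw : Corner p w) : ¬ InOpenSquare o m w := by
  simp only [CellIn, InOpenSquare, Corner] at *
  omega

theorem mem_ring_of_across {o p q a b : ℤ × ℤ} {m : ℤ} (h : Across p q a b)
    (hpq : ¬ (CellIn o m p ↔ CellIn o m q)) : a ∈ ring o m ∧ b ∈ ring o m := by
  rw [across_iff] at h
  simp only [CellIn, mem_ring, InSquare, InOpenSquare] at *
  omega

theorem isLatticeConnected_ring (o : ℤ × ℤ) (m : ℤ) : IsLatticeConnected (ring o m) := by
  suffices ∀ u ∈ ring o m, (latticeOn (ring o m)).Reachable o u from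
    fun u hu v hv => (this u hu).symm.trans (this v hv)
  obtain ⟨a, b⟩ := o
  have horizontal : ∀ y, y = b ∨ y = b + m → 0 ≤ m → ∀ n : ℕ, (n : ℤ) ≤ m →
      (latticeOn (ring (a, b) m)).Reachable (a, y) (a + n, y) := by
    intro y hy hm n
    induction n with
    | zero => intro _; simp
    | succ n ih =>
      intro hn
      push_cast at hn
      refine (ih (by omega)).trans (Adj.reachable ⟨?_, ?_, ?_⟩) <;>
        simp only [LatticeAdj, mem_ring, InSquare, InOpenSquare, Nat.cast_add,
          Nat.cast_one, true_and] <;> omega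
  have vertical : ∀ x, x = a ∨ x = a + m → 0 ≤ m → ∀ n : ℕ, (n : ℤ) ≤ m →
      (latticeOn (ring (a, b) m)).Reachable (x, b) (x, b + n) := by
    intro x hx hm n
    induction n with
    | zero => intro _; simp
    | succ n ih =>
      intro hn
      push_cast at hn
      refine (ih (by omega)).trans (Adj.reachable ⟨?_, ?_, ?_⟩) <;>
        simp only [LatticeAdj, mem_ring, InSquare, InOpenSquare, Nat.cast_add,
          Nat.cast_one, true_and] <;> omega
  rintro ⟨x, y⟩ ⟨⟨⟨h1, h2⟩, h3, h4⟩, h5⟩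
  simp only [InOpenSquare] at h1 h2 h3 h4 h5
  obtain ⟨i, rfl⟩ : ∃ i : ℕ, x = a + i := ⟨(x - a).toNat, by omega⟩
  obtain ⟨j, rfl⟩ : ∃ j : ℕ, y = b + j := ⟨(y - b).toNat, by omega⟩
  by_cases hj : (j : ℤ) = 0 ∨ (j : ℤ) = m
  · exact (vertical a (Or.inl rfl) (by omega) j (by omega)).trans
      (horizontal (b + j) (by omega) (by omega) i (by omega))
  · exact (horizontal b (Or.inl rfl) (by omega) i (by omega)).trans
      (vertical (a + i) (by omega) (by omega) j (by omega))

theorem CellIn.sameFace {D : SimpleGraph (ℤ × ℤ)} {o : ℤ × ℤ} {m : ℤ}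
    (hD : ∀ u v, D.Adj u v → ¬ InOpenSquare o m u) {p : ℤ × ℤ} (hp : CellIn o m p) :
    SameFace D o p := by
  have step : ∀ {p q a b}, Across p q a b → CellIn o m p → CellIn o m q → SameFace D p q := by
    refine fun {p q a b} h hp hq => .rel _ _ ⟨a, b, h, fun hab => ?_⟩
    have ha := hD _ _ hab
    have hb := hD _ _ hab.symm
    rw [across_iff] at h
    simp only [CellIn, InOpenSquare] at *
    omega
  have horizontal : ∀ i : ℕ, (i : ℤ) < m → SameFace D o (o.1 + i, o.2) := by
    intro i
    induction i with
    | zero => intro _; rw [Nat.cast_zero, add_zero]; exact .refl _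
    | succ i ih =>
      intro hi
      push_cast at hi ⊢
      rw [← add_assoc]
      refine (ih (by omega)).trans _ _ _ (step (.right _ _) ?_ ?_) <;> simp only [CellIn] <;> omega
  have vertical : ∀ x, o.1 ≤ x → x < o.1 + m → ∀ j : ℕ, (j : ℤ) < m →
      SameFace D (x, o.2) (x, o.2 + j) := by
    intro x hx hx' j
    induction j with
    | zero => intro _; rw [Nat.cast_zero, add_zero]; exact .refl _
    | succ j ih =>
      intro hj
      push_cast at hj ⊢
      rw [← add_assoc]
      refine (ih (by omega)).trans _ _ _ (step (.up _ _) ?_ ?_) <;> simp only [CellIn] <;> omega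
  obtain ⟨x, y⟩ := p
  obtain ⟨⟨h1, h2⟩, h3, h4⟩ := hp
  dsimp only at h1 h2 h3 h4
  obtain ⟨i, rfl⟩ : ∃ i : ℕ, x = o.1 + i := ⟨(x - o.1).toNat, by omega⟩
  obtain ⟨j, rfl⟩ : ∃ j : ℕ, y = o.2 + j := ⟨(y - o.2).toNat, by omega⟩
  exact (horizontal i (by omega)).trans _ _ _ (vertical _ h1 h2 j (by omega))

theorem exists_bounding_square {A : Set (ℤ × ℤ)} (hA : A.Finite) :
    ∃ (o : ℤ × ℤ) (m : ℤ), ∀ w ∈ A, InOpenSquare o m w := by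
  obtain ⟨R, hR⟩ := (hA.image fun w : ℤ × ℤ => |w.1| + |w.2|).bddAbove
  refine ⟨(-R - 1, -R - 1), 2 * R + 2, fun w hw => ?_⟩
  have hwR : |w.1| + |w.2| ≤ R := hR ⟨w, hw, rfl⟩
  simp only [InOpenSquare]
  grind

theorem finite_setOf_inSquare (o : ℤ × ℤ) (m : ℤ) : {w | InSquare o m w}.Finite :=
  (Set.finite_Icc o (o.1 + m, o.2 + m)).subset fun _ h => ⟨⟨h.1.1, h.2.1⟩, h.1.2, h.2.2⟩

theorem setOf_corner_eq (p : ℤ × ℤ) : {w | Corner p w} =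
    (({p, (p.1 + 1, p.2), (p.1, p.2 + 1), (p.1 + 1, p.2 + 1)} : Finset (ℤ × ℤ)) :
      Set (ℤ × ℤ)) := by
  ext w
  simp only [Set.mem_ofPred_eq, Corner, Finset.coe_insert, Finset.coe_singleton,
    Set.mem_insert_iff, Set.mem_singleton_iff, Prod.ext_iff]
  omega

theorem ncard_setOf_corner_le (p : ℤ × ℤ) : {w | Corner p w}.ncard ≤ 4 := by
  rw [setOf_corner_eq, Set.ncard_coe_finset]
  exact Finset.card_le_four

end GridMap

/-! ### Squares surrounded by lattice-connected sets -/

namespace GridMap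

/-- Disjoint finite lattice-connected sets `V s` and disjoint lattice squares of the same side `m`
whose interiors avoid the sets `V s`, and each of which meets some of them. -/
structure SquareLayout (S T : Type*) where
  V : S → Set (ℤ × ℤ)
  o : T → ℤ × ℤ
  m : ℤ
  finite : ∀ s, (V s).Finite
  conn : ∀ s, IsLatticeConnected (V s)
  eq_of_mem : ∀ s s' w, w ∈ V s → w ∈ V s' → s = s'
  one_le : 1 ≤ m
  eq_of_inSquare : ∀ t t' w, InSquare (o t) m w → InSquare (o t') m w → t = t'
  avoid : ∀ s t, ∀ w ∈ V s, ¬ InOpenSquare (o t) m w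
  exists_mem_ring : ∀ t, ∃ s, ∃ w ∈ V s, w ∈ ring (o t) m

namespace SquareLayout

variable {S T : Type*} (L : SquareLayout S T) {s : S} {t : T} {p u v w : ℤ × ℤ}

/-- The indices of the sets `V s` meeting the square `t`. -/
def meeting (t : T) : Set S := {s | ∃ w ∈ L.V s, w ∈ ring (L.o t) L.m}

/-- The lattice edges along the boundaries of the squares. -/
def ringGraph : SimpleGraph (ℤ × ℤ) := ⨆ t, latticeOn (ring (L.o t) L.m)

/-- The points whose labels are prescribed; the other points of the rings are to take over the
label of one of these. -/
def anchors : Set (ℤ × ℤ) := {w | (∃ s, w ∈ L.V s) ∨ ∀ t, w ∉ ring (L.o t) L.m}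

theorem exists_anchor_reachable (w : ℤ × ℤ) : ∃ u ∈ L.anchors, L.ringGraph.Reachable w u := by
  by_cases h : ∃ t, w ∈ ring (L.o t) L.m
  · obtain ⟨t, ht⟩ := h
    obtain ⟨s, u, hu, hut⟩ := L.exists_mem_ring t
    exact ⟨u, Or.inl ⟨s, hu⟩, (isLatticeConnected_ring _ _ w ht u hut).mono
      (le_iSup (fun t => latticeOn (ring (L.o t) L.m)) t)⟩
  · exact ⟨w, Or.inr (not_exists.1 h), .refl w⟩

theorem mem_ring_of_reachable (h : L.ringGraph.Reachable u v) (hu : u ∈ ring (L.o t) L.m) :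
    v ∈ ring (L.o t) L.m := by
  obtain ⟨r⟩ := h
  induction r with
  | nil => exact hu
  | cons h _ ih =>
    obtain ⟨t', ht'⟩ := iSup_adj.1 h
    obtain rfl := L.eq_of_inSquare t t' _ hu.1 ht'.2.1.1
    exact ih ht'.2.2

variable [Finite S] [Finite T]

theorem exists_box : ∃ (o : ℤ × ℤ) (m : ℤ), (∀ s, ∀ w ∈ L.V s, InOpenSquare o m w) ∧
    ∀ t w, InSquare (L.o t) L.m w → InOpenSquare o m w := by
  obtain ⟨o, m, h⟩ := exists_bounding_square ((Set.finite_iUnion L.finite).union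
    (Set.finite_iUnion fun t => finite_setOf_inSquare (L.o t) L.m))
  exact ⟨o, m, fun s w hw => h w (Or.inl (Set.mem_iUnion.2 ⟨s, hw⟩)),
    fun t w hw => h w (Or.inr (Set.mem_iUnion.2 ⟨t, hw⟩))⟩

/-- The lower left corner of a square, the box, around the whole layout. -/
noncomputable def boxCorner : ℤ × ℤ := L.exists_box.choose

/-- The side of the box. -/
noncomputable def boxSide : ℤ := L.exists_box.choose_spec.choose

theorem inOpenSquare_box_of_mem (h : w ∈ L.V s) : InOpenSquare L.boxCorner L.boxSide w :=
  L.exists_box.choose_spec.choose_spec.1 s w h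

theorem inOpenSquare_box_of_inSquare (h : InSquare (L.o t) L.m w) :
    InOpenSquare L.boxCorner L.boxSide w :=
  L.exists_box.choose_spec.choose_spec.2 t w h

/-- The boundary of the box. -/
noncomputable def frame : Set (ℤ × ℤ) := ring L.boxCorner L.boxSide

theorem notMem_of_mem_frame (h : w ∈ L.frame) (s : S) : w ∉ L.V s :=
  fun hw => h.2 (L.inOpenSquare_box_of_mem hw)

theorem notMem_ring_of_mem_frame (h : w ∈ L.frame) (t : T) : w ∉ ring (L.o t) L.m :=
  fun hw => h.2 (L.inOpenSquare_box_of_inSquare hw.1)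

/-- The points of the box outside the open squares. -/
noncomputable def points : Set (ℤ × ℤ) :=
  {w | InSquare L.boxCorner L.boxSide w ∧ ∀ t, ¬ InOpenSquare (L.o t) L.m w}

theorem V_subset_points (s : S) : L.V s ⊆ L.points := fun w hw =>
  ⟨(L.inOpenSquare_box_of_mem hw).inSquare, fun t => L.avoid s t w hw⟩

theorem ring_subset_points (t : T) : ring (L.o t) L.m ⊆ L.points := fun w hw => by
  refine ⟨(L.inOpenSquare_box_of_inSquare hw.1).inSquare, fun t' ht' => ?_⟩
  obtain rfl := L.eq_of_inSquare t t' w hw.1 ht'.inSquare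
  exact hw.2 ht'

theorem frame_subset_points : L.frame ⊆ L.points := fun _ hw =>
  ⟨hw.1, fun _ ht => hw.2 (L.inOpenSquare_box_of_inSquare ht.inSquare)⟩

open Classical in
/-- The label `inl s` on `V s`, one common label `inr none` on the frame, and a separate label
`inr (some w)` for each further point `w`. -/
noncomputable def anchorLabel (w : ℤ × ℤ) : S ⊕ Option (ℤ × ℤ) :=
  if h : ∃ s, w ∈ L.V s then Sum.inl h.choose
  else if w ∈ L.frame then Sum.inr none else Sum.inr (some w)

theorem anchorLabel_of_mem (h : w ∈ L.V s) : L.anchorLabel w = Sum.inl s := by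
  have hex : ∃ s, w ∈ L.V s := ⟨s, h⟩
  rw [anchorLabel, dif_pos hex, L.eq_of_mem _ _ _ hex.choose_spec h]

theorem anchorLabel_of_mem_frame (h : w ∈ L.frame) : L.anchorLabel w = Sum.inr none := by
  rw [anchorLabel, dif_neg (not_exists.2 (L.notMem_of_mem_frame h)), if_pos h]

theorem anchorLabel_cases (w : ℤ × ℤ) : (∃ s, w ∈ L.V s ∧ L.anchorLabel w = Sum.inl s) ∨
    (w ∈ L.frame ∧ L.anchorLabel w = Sum.inr none) ∨ L.anchorLabel w = Sum.inr (some w) := by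
  by_cases hV : ∃ s, w ∈ L.V s
  · obtain ⟨s, hs⟩ := hV
    exact Or.inl ⟨s, hs, L.anchorLabel_of_mem hs⟩
  by_cases hframe : w ∈ L.frame
  · exact Or.inr (Or.inl ⟨hframe, L.anchorLabel_of_mem_frame hframe⟩)
  · exact Or.inr (Or.inr (by rw [anchorLabel, dif_neg hV, if_neg hframe]))

theorem eq_or_mem_of_anchorLabel_eq (h : L.anchorLabel u = L.anchorLabel v) :
    u = v ∨ (∃ s, u ∈ L.V s ∧ v ∈ L.V s) ∨ (u ∈ L.frame ∧ v ∈ L.frame) := by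
  rcases L.anchorLabel_cases u with ⟨s, hu, hlu⟩ | ⟨hu, hlu⟩ | hlu <;>
    rcases L.anchorLabel_cases v with ⟨s', hv, hlv⟩ | ⟨hv, hlv⟩ | hlv <;>
    rw [hlu, hlv] at h <;> cases h
  · exact Or.inr (Or.inl ⟨s, hu, hv⟩)
  · exact Or.inr (Or.inr ⟨hu, hv⟩)
  · exact Or.inl rfl

/-- An extension of the labels of the anchors to all points, along the rings. -/
noncomputable def label : ℤ × ℤ → S ⊕ Option (ℤ × ℤ) :=
  (exists_label_extension L.exists_anchor_reachable L.anchorLabel).choose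

theorem label_of_mem_anchors (h : w ∈ L.anchors) : L.label w = L.anchorLabel w :=
  (exists_label_extension L.exists_anchor_reachable L.anchorLabel).choose_spec.1 w h

theorem exists_anchor (w : ℤ × ℤ) :
    ∃ u ∈ L.anchors, L.label u = L.label w ∧ (sameLabel L.ringGraph L.label).Reachable w u :=
  (exists_label_extension L.exists_anchor_reachable L.anchorLabel).choose_spec.2 w

theorem label_of_mem (h : w ∈ L.V s) : L.label w = Sum.inl s := by
  rw [L.label_of_mem_anchors (Or.inl ⟨s, h⟩), L.anchorLabel_of_mem h]

theorem label_of_mem_frame (h : w ∈ L.frame) : L.label w = Sum.inr none := by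
  rw [L.label_of_mem_anchors (Or.inr (L.notMem_ring_of_mem_frame h)), L.anchorLabel_of_mem_frame h]

theorem exists_label_of_mem_ring (h : w ∈ ring (L.o t) L.m) :
    ∃ s ∈ L.meeting t, L.label w = Sum.inl s := by
  obtain ⟨u, hu, hlabel, hreach⟩ := L.exists_anchor w
  have hut := L.mem_ring_of_reachable (hreach.mono fun _ _ (hab : _ ∧ _) => hab.1) h
  obtain ⟨s, hs⟩ := hu.resolve_right fun hu => hu t hut
  exact ⟨s, ⟨u, hs, hut⟩, hlabel.symm.trans (L.label_of_mem hs)⟩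

theorem reachable_of_label_eq (h : L.label u = L.label v) :
    (sameLabel (latticeOn L.points) L.label).Reachable u v := by
  have hle : sameLabel L.ringGraph L.label ≤ sameLabel (latticeOn L.points) L.label := by
    refine fun a b hab => ⟨?_, hab.2⟩
    obtain ⟨t, ht⟩ := iSup_adj.1 hab.1
    exact ⟨ht.1, L.ring_subset_points t ht.2.1, L.ring_subset_points t ht.2.2⟩
  obtain ⟨u', hu', hlu, hreachu⟩ := L.exists_anchor u
  obtain ⟨v', hv', hlv, hreachv⟩ := L.exists_anchor v
  refine (hreachu.mono hle).trans (Reachable.trans ?_ (hreachv.mono hle).symm)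
  have heq : L.anchorLabel u' = L.anchorLabel v' := by
    rw [← L.label_of_mem_anchors hu', ← L.label_of_mem_anchors hv', hlu, hlv, h]
  rcases L.eq_or_mem_of_anchorLabel_eq heq with rfl | ⟨s, hu, hv⟩ | ⟨hu, hv⟩
  · rfl
  · exact (L.conn s _ hu _ hv).mono
      (latticeOn_le_sameLabel (L.V_subset_points s) fun _ => L.label_of_mem)
  · exact (isLatticeConnected_ring _ _ _ hu _ hv).mono
      (latticeOn_le_sameLabel L.frame_subset_points fun _ => L.label_of_mem_frame)

/-- The grid of all points outside the open squares, with the sets `V s` among its blobs. Its faces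
are the open squares, the outside of the box, and unit cells. -/
noncomputable def gridMap : GridMap (S ⊕ Option (ℤ × ℤ)) where
  W := L.points
  D := latticeOn L.points
  lab := L.label
  finite := (finite_setOf_inSquare _ _).subset fun _ h => h.1
  lattice _ _ h := h.1
  mem_left _ _ h := h.2.1
  conn _ _ _ _ h := L.reachable_of_label_eq h

theorem cellIn_iff_of_cellStep {o : ℤ × ℤ} {m : ℤ} (hring : ring o m ⊆ L.points) {q : ℤ × ℤ}
    (h : CellStep L.gridMap.D p q) : CellIn o m p ↔ CellIn o m q := by
  obtain ⟨a, b, hpq, hab⟩ := h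
  by_contra hne
  obtain ⟨ha, hb⟩ := mem_ring_of_across hpq hne
  exact hab ⟨hpq.latticeAdj, hring ha, hring hb⟩

theorem touched_subset_of_cellIn (hp : CellIn (L.o t) L.m p) :
    L.gridMap.touched p ⊆ Sum.inl '' L.meeting t := by
  rintro _ ⟨q, hpq, w, hw, hcor, rfl⟩
  have hq : CellIn (L.o t) L.m q := (hpq.apply_eq (f := CellIn (L.o t) L.m) fun p q h =>
    propext (L.cellIn_iff_of_cellStep (L.ring_subset_points t) h)).mp hp
  obtain ⟨s, hs, hlabel⟩ := L.exists_label_of_mem_ring ⟨hq.inSquare_of_corner hcor, hw.2 t⟩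
  exact ⟨s, hs, hlabel.symm⟩

theorem touched_subset_of_not_cellIn_box (hp : ¬ CellIn L.boxCorner L.boxSide p) :
    L.gridMap.touched p ⊆ {Sum.inr none} := by
  rintro _ ⟨q, hpq, w, hw, hcor, rfl⟩
  have hq : ¬ CellIn L.boxCorner L.boxSide q :=
    (hpq.apply_eq (f := fun p => ¬ CellIn L.boxCorner L.boxSide p) fun p q h =>
      propext (not_congr (L.cellIn_iff_of_cellStep L.frame_subset_points h))).mp hp
  exact L.label_of_mem_frame ⟨hw.1, not_inOpenSquare_of_corner hq hcor⟩

theorem eq_of_sameFace (hp : CellIn L.boxCorner L.boxSide p) (hpt : ∀ t, ¬ CellIn (L.o t) L.m p)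
    {q : ℤ × ℤ} (hpq : SameFace L.gridMap.D p q) : q = p := by
  have corner_mem : ∀ w, Corner p w → w ∈ L.points := fun w hw =>
    ⟨hp.inSquare_of_corner hw, fun t => not_inOpenSquare_of_corner (hpt t) hw⟩
  refine (hpq.apply_eq (f := fun r => r = p) fun q r h => propext ?_).mp rfl
  obtain ⟨a, b, hqr, hab⟩ := h
  constructor
  · rintro rfl
    exact absurd ⟨hqr.latticeAdj, corner_mem a hqr.corner.1, corner_mem b hqr.corner.2.1⟩ hab
  · rintro rfl
    exact absurd ⟨hqr.latticeAdj, corner_mem a hqr.corner.2.2.1, corner_mem b hqr.corner.2.2.2⟩ hab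

theorem ncard_touched_le_four (hp : CellIn L.boxCorner L.boxSide p)
    (hpt : ∀ t, ¬ CellIn (L.o t) L.m p) : (L.gridMap.touched p).ncard ≤ 4 := by
  have hfin : {w | Corner p w}.Finite := by rw [setOf_corner_eq]; exact Finset.finite_toSet _
  have hsub : L.gridMap.touched p ⊆ L.label '' {w | Corner p w} := by
    rintro _ ⟨q, hpq, w, -, hcor, rfl⟩
    exact ⟨w, L.eq_of_sameFace hp hpt hpq ▸ hcor, rfl⟩
  exact (Set.ncard_le_ncard hsub (hfin.image _)).trans
    ((Set.ncard_image_le hfin).trans (ncard_setOf_corner_le p))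

theorem ncard_touched_le {k : ℕ} (hk : 4 ≤ k) (hcard : ∀ t, (L.meeting t).ncard ≤ k)
    (p : ℤ × ℤ) : (L.gridMap.touched p).ncard ≤ k := by
  by_cases hpt : ∃ t, CellIn (L.o t) L.m p
  · obtain ⟨t, ht⟩ := hpt
    exact (Set.ncard_le_ncard (L.touched_subset_of_cellIn ht) (Set.toFinite _)).trans
      ((Set.ncard_image_le (Set.toFinite _)).trans (hcard t))
  by_cases hbox : CellIn L.boxCorner L.boxSide p
  · exact (L.ncard_touched_le_four hbox (not_exists.1 hpt)).trans hk
  · have hle := Set.ncard_le_ncard (L.touched_subset_of_not_cellIn_box hbox)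
      (Set.finite_singleton _)
    rw [Set.ncard_singleton] at hle
    omega

theorem inl_mem_touched (h : s ∈ L.meeting t) : Sum.inl s ∈ L.gridMap.touched (L.o t) := by
  obtain ⟨w, hw, hwt⟩ := h
  have hm := L.one_le
  have avoid : ∀ u v, L.gridMap.D.Adj u v → ¬ InOpenSquare (L.o t) L.m u := fun u v huv =>
    huv.2.1.2 t
  -- This is a cell of the square with corner `w`.
  refine ⟨(min w.1 ((L.o t).1 + L.m - 1), min w.2 ((L.o t).2 + L.m - 1)),
    CellIn.sameFace avoid ?_, w, L.V_subset_points s hw, ?_,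
    L.label_of_mem hw⟩
  · simp only [CellIn, mem_ring, InSquare] at *
    omega
  · simp only [Corner, mem_ring, InSquare] at *
    omega

theorem exists_coloring {k n : ℕ} (hcyc : CyclicColoringBound k n) (hk : 4 ≤ k) (hn : 0 < n)
    (hcard : ∀ t, (L.meeting t).ncard ≤ k) :
    ∃ c : S → Fin n, ∀ t, Set.InjOn c (L.meeting t) := by
  obtain ⟨c, hc⟩ :=
    colorable_of_cyclicColoringBound hcyc hn L.gridMap (L.ncard_touched_le hk hcard)
  exact ⟨fun s => c (Sum.inl s), fun t s hs s' hs' h => Sum.inl_injective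
    (hc (L.o t) (L.inl_mem_touched hs) (L.inl_mem_touched hs') h)⟩

end SquareLayout

end GridMap

/-! ### Squares surrounded by continua -/

namespace GridMap

/-- The closed square with lower left corner `o` and side `m`. -/
def square (o : ℤ × ℤ) (m : ℤ) : Set (ℝ × ℝ) :=
  Set.Icc (o.1 : ℝ) (o.1 + m) ×ˢ Set.Icc (o.2 : ℝ) (o.2 + m)

/-- The open square with lower left corner `o` and side `m`. -/
def openSquare (o : ℤ × ℤ) (m : ℤ) : Set (ℝ × ℝ) :=
  Set.Ioo (o.1 : ℝ) (o.1 + m) ×ˢ Set.Ioo (o.2 : ℝ) (o.2 + m)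

theorem mem_cell {p : ℤ × ℤ} {z : ℝ × ℝ} : z ∈ cell p ↔
    ((p.1 : ℝ) ≤ z.1 ∧ z.1 ≤ p.1 + 1) ∧ ((p.2 : ℝ) ≤ z.2 ∧ z.2 ≤ p.2 + 1) := Iff.rfl

theorem mem_square {o : ℤ × ℤ} {m : ℤ} {z : ℝ × ℝ} : z ∈ square o m ↔
    ((o.1 : ℝ) ≤ z.1 ∧ z.1 ≤ o.1 + m) ∧ ((o.2 : ℝ) ≤ z.2 ∧ z.2 ≤ o.2 + m) := Iff.rfl

theorem isCompact_square (o : ℤ × ℤ) (m : ℤ) : IsCompact (square o m) :=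
  isCompact_Icc.prod isCompact_Icc

theorem isOpen_openSquare (o : ℤ × ℤ) (m : ℤ) : IsOpen (openSquare o m) :=
  isOpen_Ioo.prod isOpen_Ioo

theorem openSquare_subset_square (o : ℤ × ℤ) (m : ℤ) : openSquare o m ⊆ square o m :=
  Set.prod_mono Set.Ioo_subset_Icc_self Set.Ioo_subset_Icc_self

theorem pt_mem_square {o w : ℤ × ℤ} {m : ℤ} : pt w ∈ square o m ↔ InSquare o m w := by
  rw [mem_square, InSquare]
  simp only [pt]
  norm_cast

theorem CellIn.cell_subset {o p : ℤ × ℤ} {m : ℤ} (h : CellIn o m p) : cell p ⊆ square o m := by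
  obtain ⟨⟨h₁, h₂⟩, h₃, h₄⟩ := h
  refine Set.prod_mono (Set.Icc_subset_Icc (mod_cast h₁) ?_)
    (Set.Icc_subset_Icc (mod_cast h₃) ?_) <;>
  · norm_cast

theorem exists_corner_inSquare {o q : ℤ × ℤ} {m : ℤ} {z : ℝ × ℝ} (hm : 0 ≤ m) (hq : z ∈ cell q)
    (hz : z ∈ square o m) : ∃ w, Corner q w ∧ InSquare o m w := by
  rw [mem_cell] at hq
  rw [mem_square] at hz
  have h₁ : q.1 ≤ o.1 + m := by rify; linarith
  have h₂ : o.1 ≤ q.1 + 1 := by rify; linarith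
  have h₃ : q.2 ≤ o.2 + m := by rify; linarith
  have h₄ : o.2 ≤ q.2 + 1 := by rify; linarith
  refine ⟨(max q.1 o.1, max q.2 o.2), ?_, ?_⟩ <;> simp only [Corner, InSquare] <;> omega

theorem exists_common_corner {p q : ℤ × ℤ} {z : ℝ × ℝ} (hp : z ∈ cell p) (hq : z ∈ cell q) :
    ∃ w, Corner p w ∧ Corner q w := by
  rw [mem_cell] at hp hq
  have h₁ : q.1 ≤ p.1 + 1 := by rify; linarith
  have h₂ : p.1 ≤ q.1 + 1 := by rify; linarith
  have h₃ : q.2 ≤ p.2 + 1 := by rify; linarith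
  have h₄ : p.2 ≤ q.2 + 1 := by rify; linarith
  refine ⟨(max p.1 q.1, max p.2 q.2), ?_, ?_⟩ <;> simp only [Corner] <;> omega

theorem dist_pt_le_one_of_corner {q w : ℤ × ℤ} (h : Corner q w) {z : ℝ × ℝ} (hz : z ∈ cell q) :
    dist z (pt w) ≤ 1 := by
  rw [mem_cell] at hz
  obtain ⟨⟨h₁, h₂⟩, h₃, h₄⟩ := hz
  rw [Prod.dist_eq, max_le_iff, Real.dist_eq, Real.dist_eq, abs_le, abs_le]
  simp only [pt]
  rcases h with ⟨h | h, h' | h'⟩ <;> rw [h, h'] <;> push_cast <;>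
    exact ⟨⟨by linarith, by linarith⟩, by linarith, by linarith⟩

/-- If `z` lies on the left or lower side of the square, take the cell to the left or below. -/
theorem exists_mem_cell_not_cellIn {o : ℤ × ℤ} {m : ℤ} {z : ℝ × ℝ} (hz : z ∉ openSquare o m) :
    ∃ q, z ∈ cell q ∧ ¬ CellIn o m q := by
  by_cases h : CellIn o m (⌊z.1⌋, ⌊z.2⌋)
  swap
  · exact ⟨_, mem_cell_floor z, h⟩
  have hzm := h.cell_subset (mem_cell_floor z)
  have hright : z.1 < o.1 + m := mod_cast Int.floor_lt.1 h.1.2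
  have htop : z.2 < o.2 + m := mod_cast Int.floor_lt.1 h.2.2
  by_cases hleft : z.1 = o.1
  · refine ⟨(o.1 - 1, ⌊z.2⌋), mem_cell.2 ⟨?_, (mem_cell_floor z).2⟩, fun h' => ?_⟩
    · rw [hleft]
      push_cast
      constructor <;> linarith
    · have := h'.1.1
      dsimp only at this
      omega
  by_cases hbottom : z.2 = o.2
  · refine ⟨(⌊z.1⌋, o.2 - 1), mem_cell.2 ⟨(mem_cell_floor z).1, ?_⟩, fun h' => ?_⟩
    · rw [hbottom]
      push_cast
      constructor <;> linarith
    · have := h'.2.1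
      dsimp only at this
      omega
  · exact absurd ⟨⟨lt_of_le_of_ne hzm.1.1 (Ne.symm hleft), hright⟩,
      lt_of_le_of_ne hzm.2.1 (Ne.symm hbottom), htop⟩ hz

/-- The corners of the cells of `B`. -/
def corners (B : Set (ℤ × ℤ)) : Set (ℤ × ℤ) := {w | ∃ q ∈ B, Corner q w}

theorem reachable_of_corner {B : Set (ℤ × ℤ)} {q v w : ℤ × ℤ} (hq : q ∈ B) (hv : Corner q v)
    (hw : Corner q w) : (latticeOn (corners B)).Reachable v w := by
  have hm : Corner q (w.1, v.2) := ⟨hw.1, hv.2⟩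
  have reachable : ∀ a b, Corner q a → Corner q b → a = b ∨ LatticeAdj a b →
      (latticeOn (corners B)).Reachable a b := by
    rintro a b ha hb (rfl | hab)
    · rfl
    · exact Adj.reachable ⟨hab, ⟨q, hq, ha⟩, q, hq, hb⟩
  obtain ⟨hv₁, hv₂⟩ := hv
  obtain ⟨hw₁, hw₂⟩ := hw
  refine (reachable _ _ ⟨hv₁, hv₂⟩ hm ?_).trans (reachable _ _ hm ⟨hw₁, hw₂⟩ ?_) <;>
  · simp only [LatticeAdj, Prod.ext_iff, true_and, and_true]
    omega

/-- Otherwise the cells whose corners can be reached from `u` and the remaining cells would cover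
`A` by two disjoint closed sets. -/
theorem isLatticeConnected_corners {A : Set (ℝ × ℝ)} (hA : IsPreconnected A) {B : Set (ℤ × ℤ)}
    (hB : ∀ q ∈ B, (cell q ∩ A).Nonempty) (hcov : ∀ z ∈ A, ∃ q ∈ B, z ∈ cell q) :
    IsLatticeConnected (corners B) := by
  rintro u ⟨p, hp, hu⟩ v ⟨r, hr, hv⟩
  let C : Set (ℤ × ℤ) := {q ∈ B | ∀ w, Corner q w → (latticeOn (corners B)).Reachable u w}
  by_contra hunreach
  have hpC : p ∈ C := ⟨hp, fun w hw => reachable_of_corner hp hu hw⟩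
  have hrC : r ∈ B \ C := ⟨hr, fun h => hunreach (h.2 v hv)⟩
  have meets : ∀ D ⊆ B, ∀ q ∈ D, (A ∩ ⋃ x ∈ D, cell x).Nonempty := by
    intro D hD q hq
    obtain ⟨z, hz, hzA⟩ := hB q (hD hq)
    exact ⟨z, hzA, Set.mem_biUnion hq hz⟩
  have covered : A ⊆ (⋃ x ∈ C, cell x) ∪ ⋃ x ∈ B \ C, cell x := by
    rw [← Set.biUnion_union, Set.union_sdiff_cancel (Set.sep_subset _ _)]
    intro z hz
    obtain ⟨q, hq, hzq⟩ := hcov z hz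
    exact Set.mem_biUnion hq hzq
  obtain ⟨z, -, hz, hz'⟩ := isPreconnected_closed_iff.1 hA _ _ (isClosed_biUnion_cell C)
    (isClosed_biUnion_cell (B \ C)) covered (meets C (Set.sep_subset _ _) p hpC)
    (meets _ Set.sdiff_subset r hrC)
  simp only [Set.mem_iUnion, exists_prop] at hz hz'
  obtain ⟨q, hq, hzq⟩ := hz
  obtain ⟨q', hq', hzq'⟩ := hz'
  obtain ⟨w, hw, hw'⟩ := exists_common_corner hzq hzq'
  exact hq'.2 ⟨hq'.1, fun x hx => (hq.2 w hw).trans (reachable_of_corner hq'.1 hw' hx)⟩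

theorem finite_of_forall_exists_dist_pt_le {A : Set (ℝ × ℝ)} (hA : Bornology.IsBounded A)
    {V : Set (ℤ × ℤ)} {r : ℝ} (hV : ∀ w ∈ V, ∃ z ∈ A, dist z (pt w) ≤ r) : V.Finite := by
  obtain ⟨ρ, hρ⟩ := hA.subset_closedBall 0
  obtain ⟨N, hN⟩ := exists_int_gt (ρ + r)
  refine (Set.finite_Icc ((-N, -N) : ℤ × ℤ) (N, N)).subset fun w hw => ?_
  obtain ⟨z, hz, hzw⟩ := hV w hw
  have hw0 : dist (pt w) 0 ≤ N := by
    linarith [dist_triangle_left (pt w) 0 z, Metric.mem_closedBall.1 (hρ hz)]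
  rw [Prod.dist_eq, max_le_iff, Real.dist_eq, Real.dist_eq, abs_le, abs_le] at hw0
  simp only [pt, Prod.fst_zero, Prod.snd_zero, sub_zero] at hw0
  norm_cast at hw0
  exact ⟨⟨hw0.1.1, hw0.2.1⟩, hw0.1.2, hw0.2.2⟩

/-- Disjoint continua `A s` in the plane and disjoint lattice squares of the same side `m` whose
interiors avoid the continua, and each of which meets some of them. -/
structure ContinuaLayout (S T : Type*) where
  A : S → Set (ℝ × ℝ)
  o : T → ℤ × ℤ
  m : ℤ
  isCompact : ∀ s, IsCompact (A s)
  isPreconnected : ∀ s, IsPreconnected (A s)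
  disjoint : ∀ s s', s ≠ s' → Disjoint (A s) (A s')
  one_le : 1 ≤ m
  eq_of_mem_square : ∀ t t' z, z ∈ square (o t) m → z ∈ square (o t') m → t = t'
  avoid : ∀ s t, ∀ z ∈ A s, z ∉ openSquare (o t) m
  exists_nonempty : ∀ t, ∃ s, (A s ∩ square (o t) m).Nonempty

namespace ContinuaLayout

variable {S T : Type*} (L : ContinuaLayout S T) {s : S} {t : T}

/-- The indices of the continua meeting the square `t`. -/
def meeting (t : T) : Set S := {s | (L.A s ∩ square (L.o t) L.m).Nonempty}

/-- The continua are far from each other, and from the squares that they do not meet; then they may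
be replaced by the unit cells around them. -/
structure IsSpread : Prop where
  dist_continua : ∀ s s', s ≠ s' → ∀ z ∈ L.A s, ∀ z' ∈ L.A s', 4 < dist z z'
  dist_square : ∀ s t, s ∉ L.meeting t → ∀ z ∈ L.A s, ∀ z' ∈ square (L.o t) L.m, 4 < dist z z'

/-- The cells that meet `A s` and lie in none of the squares. -/
def cells (s : S) : Set (ℤ × ℤ) :=
  {q | (cell q ∩ L.A s).Nonempty ∧ ∀ t, ¬ CellIn (L.o t) L.m q}

theorem exists_mem_cells {z : ℝ × ℝ} (hz : z ∈ L.A s) : ∃ q ∈ L.cells s, z ∈ cell q := by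
  by_cases h : ∃ t, z ∈ square (L.o t) L.m
  · obtain ⟨t, ht⟩ := h
    obtain ⟨q, hzq, hq⟩ := exists_mem_cell_not_cellIn (L.avoid s t z hz)
    refine ⟨q, ⟨⟨z, hzq, hz⟩, fun t' ht' => hq ?_⟩, hzq⟩
    rwa [L.eq_of_mem_square t t' z ht (ht'.cell_subset hzq)]
  · exact ⟨_, ⟨⟨z, mem_cell_floor z, hz⟩,
      fun t ht => h ⟨t, ht.cell_subset (mem_cell_floor z)⟩⟩, mem_cell_floor z⟩

theorem exists_dist_pt_le_one {w : ℤ × ℤ} (hw : w ∈ corners (L.cells s)) :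
    ∃ z ∈ L.A s, dist z (pt w) ≤ 1 := by
  obtain ⟨q, ⟨⟨z, hz, hzA⟩, -⟩, hw⟩ := hw
  exact ⟨z, hzA, dist_pt_le_one_of_corner hw hz⟩

theorem not_inOpenSquare_of_mem_corners {w : ℤ × ℤ} (hw : w ∈ corners (L.cells s)) :
    ¬ InOpenSquare (L.o t) L.m w := by
  obtain ⟨q, hq, hw⟩ := hw
  exact not_inOpenSquare_of_corner (hq.2 t) hw

theorem exists_mem_ring_of_mem_meeting (h : s ∈ L.meeting t) :
    ∃ w ∈ corners (L.cells s), w ∈ ring (L.o t) L.m := by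
  obtain ⟨z, hz, hzt⟩ := h
  obtain ⟨q, hq, hzq⟩ := L.exists_mem_cells hz
  obtain ⟨w, hqw, hwt⟩ := exists_corner_inSquare (zero_le_one.trans L.one_le) hzq hzt
  exact ⟨w, ⟨q, hq, hqw⟩, hwt, L.not_inOpenSquare_of_mem_corners ⟨q, hq, hqw⟩⟩

variable {L}

namespace IsSpread

variable (hL : L.IsSpread)
include hL

theorem eq_of_mem_corners {s' : S} {w : ℤ × ℤ} (hw : w ∈ corners (L.cells s))
    (hw' : w ∈ corners (L.cells s')) : s = s' := by
  by_contra hss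
  obtain ⟨z, hz, hzw⟩ := L.exists_dist_pt_le_one hw
  obtain ⟨z', hz', hzw'⟩ := L.exists_dist_pt_le_one hw'
  linarith [hL.dist_continua s s' hss z hz z' hz', dist_triangle_right z z' (pt w)]

theorem mem_meeting_of_mem_ring {w : ℤ × ℤ} (hw : w ∈ corners (L.cells s))
    (hwt : w ∈ ring (L.o t) L.m) : s ∈ L.meeting t := by
  by_contra h
  obtain ⟨z, hz, hzw⟩ := L.exists_dist_pt_le_one hw
  linarith [hL.dist_square s t h z hz (pt w) (pt_mem_square.2 hwt.1)]

/-- The lattice layout obtained by replacing each continuum by the corners of the cells around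
it. -/
def squareLayout : SquareLayout S T where
  V s := corners (L.cells s)
  o := L.o
  m := L.m
  finite s := finite_of_forall_exists_dist_pt_le (L.isCompact s).isBounded
    fun _ => L.exists_dist_pt_le_one
  conn s := isLatticeConnected_corners (L.isPreconnected s) (fun _ hq => hq.1)
    fun _ => L.exists_mem_cells
  eq_of_mem _ _ _ := hL.eq_of_mem_corners
  one_le := L.one_le
  eq_of_inSquare t t' w h h' :=
    L.eq_of_mem_square t t' (pt w) (pt_mem_square.2 h) (pt_mem_square.2 h')
  avoid _ _ _ := L.not_inOpenSquare_of_mem_corners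
  exists_mem_ring t :=
    (L.exists_nonempty t).imp fun _ => L.exists_mem_ring_of_mem_meeting

theorem meeting_squareLayout : hL.squareLayout.meeting t = L.meeting t :=
  Set.ext fun _ => ⟨fun ⟨_, hw, hwt⟩ => hL.mem_meeting_of_mem_ring hw hwt,
    L.exists_mem_ring_of_mem_meeting⟩

end IsSpread

end ContinuaLayout

end GridMap

/-! ### Dilations -/

namespace GridMap

theorem smul_mem_square {n : ℕ} (hn : 0 < n) {o : ℤ × ℤ} {m : ℤ} {z : ℝ × ℝ} :
    (n : ℝ) • z ∈ square (n * o.1, n * o.2) (n * m) ↔ z ∈ square o m := by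
  have hn' : (0 : ℝ) < n := mod_cast hn
  simp only [mem_square, Prod.smul_fst, Prod.smul_snd, smul_eq_mul, Int.cast_mul, Int.cast_natCast,
    ← mul_add, mul_le_mul_iff_right₀ hn']

theorem smul_mem_openSquare {n : ℕ} (hn : 0 < n) {o : ℤ × ℤ} {m : ℤ} {z : ℝ × ℝ} :
    (n : ℝ) • z ∈ openSquare (n * o.1, n * o.2) (n * m) ↔ z ∈ openSquare o m := by
  have hn' : (0 : ℝ) < n := mod_cast hn
  simp only [openSquare, Set.mem_prod, Set.mem_Ioo, Prod.smul_fst, Prod.smul_snd, smul_eq_mul,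
    Int.cast_mul, Int.cast_natCast, ← mul_add, mul_lt_mul_iff_right₀ hn']

theorem exists_natCast_smul_eq {n : ℕ} (hn : 0 < n) (z : ℝ × ℝ) : ∃ y : ℝ × ℝ, (n : ℝ) • y = z :=
  ⟨(n : ℝ)⁻¹ • z, smul_inv_smul₀ (by positivity) z⟩

theorem eventually_lt_dist_smul {E : Type*} [SeminormedAddCommGroup E] [NormedSpace ℝ E]
    {A B : Set E} (hA : IsCompact A) (hB : IsClosed B) (hAB : Disjoint A B) (r : ℝ) :
    ∀ᶠ n : ℕ in Filter.atTop, ∀ z ∈ A, ∀ z' ∈ B, r < dist ((n : ℝ) • z) ((n : ℝ) • z') := by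
  obtain ⟨δ, hδ, hd⟩ := Metric.exists_pos_forall_lt_edist hA hB hAB
  have hδ' : (0 : ℝ) < δ := hδ
  filter_upwards [(tendsto_natCast_atTop_atTop (R := ℝ)).eventually_gt_atTop (r / δ),
    Filter.eventually_gt_atTop 0] with n hn hn0 z hz z' hz'
  have hzz' := hd z hz z' hz'
  rw [edist_nndist, ENNReal.coe_lt_coe, ← NNReal.coe_lt_coe, coe_nndist] at hzz'
  have hn0' : (0 : ℝ) < n := mod_cast hn0
  rw [dist_smul₀, Real.norm_of_nonneg hn0'.le]
  rw [div_lt_iff₀ hδ'] at hn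
  exact hn.trans (mul_lt_mul_of_pos_left hzz' hn0')

namespace ContinuaLayout

variable {S T : Type*} (L : ContinuaLayout S T) {s : S} {t : T} {n : ℕ}

theorem smul_inter_square_nonempty (hn : 0 < n) :
    ((fun z => (n : ℝ) • z) '' L.A s ∩
      square (n * (L.o t).1, n * (L.o t).2) (n * L.m)).Nonempty ↔ s ∈ L.meeting t := by
  constructor
  · rintro ⟨_, ⟨z, hz, rfl⟩, hzt⟩
    exact ⟨z, hz, (smul_mem_square hn).1 hzt⟩
  · rintro ⟨z, hz, hzt⟩
    exact ⟨_, ⟨z, hz, rfl⟩, (smul_mem_square hn).2 hzt⟩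

/-- The image of the layout under `z ↦ n • z`. -/
def dilate (hn : 0 < n) : ContinuaLayout S T where
  A s := (fun z => (n : ℝ) • z) '' L.A s
  o t := (n * (L.o t).1, n * (L.o t).2)
  m := n * L.m
  isCompact s := (L.isCompact s).image (continuous_const_smul _)
  isPreconnected s := (L.isPreconnected s).image _ (continuous_const_smul _).continuousOn
  disjoint s s' h :=
    (Set.disjoint_image_iff (smul_right_injective _ (by positivity))).2 (L.disjoint s s' h)
  one_le := one_le_mul_of_one_le_of_one_le (mod_cast hn) L.one_le
  eq_of_mem_square t t' z h h' := by
    obtain ⟨y, rfl⟩ := exists_natCast_smul_eq hn z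
    exact L.eq_of_mem_square t t' y ((smul_mem_square hn).1 h) ((smul_mem_square hn).1 h')
  avoid s t z hz h := by
    obtain ⟨y, hy, rfl⟩ := hz
    exact L.avoid s t y hy ((smul_mem_openSquare hn).1 h)
  exists_nonempty t := (L.exists_nonempty t).imp fun _ => (L.smul_inter_square_nonempty hn).2

theorem meeting_dilate (hn : 0 < n) : (L.dilate hn).meeting t = L.meeting t :=
  Set.ext fun _ => L.smul_inter_square_nonempty hn

variable [Finite S] [Finite T]

theorem exists_isSpread_dilate : ∃ (n : ℕ) (hn : 0 < n), (L.dilate hn).IsSpread := by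
  have continua : ∀ᶠ n : ℕ in Filter.atTop, ∀ s s', s ≠ s' → ∀ z ∈ L.A s, ∀ z' ∈ L.A s',
      4 < dist ((n : ℝ) • z) ((n : ℝ) • z') := by
    simp only [Filter.eventually_all]
    exact fun s s' h =>
      eventually_lt_dist_smul (L.isCompact s) (L.isCompact s').isClosed (L.disjoint s s' h) 4
  have squares : ∀ᶠ n : ℕ in Filter.atTop, ∀ s t, s ∉ L.meeting t →
      ∀ z ∈ L.A s, ∀ z' ∈ square (L.o t) L.m, 4 < dist ((n : ℝ) • z) ((n : ℝ) • z') := by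
    simp only [Filter.eventually_all]
    exact fun s t h => eventually_lt_dist_smul (L.isCompact s) (isCompact_square _ _).isClosed
      (Set.disjoint_iff_inter_eq_empty.2 (Set.not_nonempty_iff_eq_empty.1 h)) 4
  obtain ⟨n, hn, hn', hn0⟩ := (continua.and (squares.and (Filter.eventually_gt_atTop 0))).exists
  refine ⟨n, hn0, ⟨?_, ?_⟩⟩
  · rintro s s' h _ ⟨z, hz, rfl⟩ _ ⟨z', hz', rfl⟩
    exact hn s s' h z hz z' hz'
  · rintro s t h _ ⟨z, hz, rfl⟩ z' hz'
    obtain ⟨y, rfl⟩ := exists_natCast_smul_eq hn0 z'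
    rw [meeting_dilate] at h
    exact hn' s t h z hz y ((smul_mem_square hn0).1 hz')

theorem exists_coloring {k n : ℕ} (hcyc : CyclicColoringBound k n) (hk : 4 ≤ k) (hn : 0 < n)
    (hcard : ∀ t, (L.meeting t).ncard ≤ k) :
    ∃ c : S → Fin n, ∀ t, Set.InjOn c (L.meeting t) := by
  obtain ⟨r, hr, hL⟩ := L.exists_isSpread_dilate
  have hmeet : ∀ t, hL.squareLayout.meeting t = L.meeting t := fun t =>
    hL.meeting_squareLayout.trans (L.meeting_dilate hr)
  simpa only [hmeet] using hL.squareLayout.exists_coloring hcyc hk hn fun t => by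
    simpa only [hmeet] using hcard t

end ContinuaLayout

end GridMap

/-! ### Stars -/

theorem exists_first_hit {X : Type*} [TopologicalSpace X] {γ : ℝ → X}
    (hγ : ContinuousOn γ (Set.Icc 0 1)) {Q O : Set X} (hQ : IsClosed Q) (hO : IsOpen O)
    (hOQ : O ⊆ Q) (h0 : γ 0 ∉ Q) (h1 : γ 1 ∈ O) :
    ∃ τ ∈ Set.Ico (0 : ℝ) 1, γ τ ∈ Q ∧ ∀ a ∈ Set.Icc 0 τ, γ a ∉ O := by
  obtain ⟨τ, hτ, hmin⟩ := (isCompact_Icc.of_isClosed_subset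
    (hγ.preimage_isClosed_of_isClosed isClosed_Icc hQ) Set.inter_subset_left).exists_isLeast
    ⟨1, Set.right_mem_Icc.2 zero_le_one, hOQ h1⟩
  have hτ0 : 0 ≠ τ := by
    rintro rfl
    exact h0 hτ.2
  have avoid : ∀ a ∈ Set.Icc 0 τ, γ a ∉ O := by
    have hcont : ContinuousOn γ (closure (Set.Ico 0 τ)) := by
      rw [closure_Ico hτ0]
      exact hγ.mono (Set.Icc_subset_Icc_right hτ.1.2)
    have himage := hcont.image_closure
    rw [closure_Ico hτ0] at himage
    intro a ha
    refine closure_minimal ?_ hO.isClosed_compl (himage ⟨a, ha, rfl⟩)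
    rintro _ ⟨b, hb, rfl⟩ hbO
    exact absurd (hmin ⟨⟨hb.1, hb.2.le.trans hτ.1.2⟩, hOQ hbO⟩) (not_le.2 hb.2)
  refine ⟨τ, ⟨hτ.1.1, lt_of_le_of_ne hτ.1.2 ?_⟩, hτ.2, avoid⟩
  rintro rfl
  exact avoid 1 (Set.right_mem_Icc.2 hτ.1.1) h1

namespace GridMap

/-- The lower left corner of a lattice square of side `3` around `z`. -/
noncomputable def squareCorner (z : ℝ × ℝ) : ℤ × ℤ := (⌊z.1⌋ - 1, ⌊z.2⌋ - 1)

theorem mem_openSquare_squareCorner (z : ℝ × ℝ) : z ∈ openSquare (squareCorner z) 3 := by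
  refine ⟨⟨?_, ?_⟩, ?_, ?_⟩ <;> simp only [squareCorner] <;> push_cast <;>
    linarith [Int.floor_le z.1, Int.lt_floor_add_one z.1, Int.floor_le z.2,
      Int.lt_floor_add_one z.2]

theorem dist_le_two_of_mem_square {z w : ℝ × ℝ} (h : w ∈ square (squareCorner z) 3) :
    dist w z ≤ 2 := by
  rw [mem_square] at h
  simp only [squareCorner] at h
  push_cast at h
  rw [Prod.dist_eq, max_le_iff, Real.dist_eq, Real.dist_eq, abs_le, abs_le]
  refine ⟨⟨?_, ?_⟩, ?_, ?_⟩ <;>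
    linarith [Int.floor_le z.1, Int.lt_floor_add_one z.1, Int.floor_le z.2,
      Int.lt_floor_add_one z.2]

/-- Stars drawn in the plane: for `rel s t`, the path `leg s t` on `[0, 1]` joins `center s` to
`tip t`. The star `s` without its tips lies in `body s`, and the bodies are disjoint from each
other and from the tips; distinct stars may share tips. -/
structure StarSystem (S T : Type*) where
  rel : S → T → Prop
  center : S → ℝ × ℝ
  tip : T → ℝ × ℝ
  leg : S → T → ℝ → ℝ × ℝ
  body : S → Set (ℝ × ℝ)
  continuousOn_leg : ∀ s t, rel s t → ContinuousOn (leg s t) (Set.Icc 0 1)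
  leg_zero : ∀ s t, rel s t → leg s t 0 = center s
  leg_one : ∀ s t, rel s t → leg s t 1 = tip t
  center_mem_body : ∀ s, center s ∈ body s
  leg_mem_body : ∀ s t, rel s t → ∀ a ∈ Set.Ico (0 : ℝ) 1, leg s t a ∈ body s
  disjoint_body : ∀ s s', s ≠ s' → Disjoint (body s) (body s')
  tip_notMem_body : ∀ s t, tip t ∉ body s
  tip_injective : Function.Injective tip
  exists_rel : ∀ t, ∃ s, rel s t

namespace StarSystem

variable {S T : Type*} (F : StarSystem S T) {s : S} {t : T}

/-- Every tip is far from the other tips, the centers, and the legs that do not end in it. -/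
structure IsSpread : Prop where
  dist_center : ∀ s t, 2 < dist (F.center s) (F.tip t)
  dist_leg : ∀ s t t', F.rel s t' → t ≠ t' → ∀ a ∈ Set.Icc (0 : ℝ) 1,
    2 < dist (F.leg s t' a) (F.tip t)
  dist_tip : ∀ t t', t ≠ t' → 4 < dist (F.tip t) (F.tip t')

/-- The square that takes the place of the tip `t`. -/
def tipSquare (t : T) : Set (ℝ × ℝ) := square (squareCorner (F.tip t)) 3

variable {F}

namespace IsSpread

variable (hF : F.IsSpread)
include hF

theorem center_notMem_tipSquare (s : S) (t : T) : F.center s ∉ F.tipSquare t := fun h =>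
  not_lt.2 (dist_le_two_of_mem_square h) (hF.dist_center s t)

theorem eq_of_leg_mem_tipSquare {t' : T} (h : F.rel s t') {a : ℝ} (ha : a ∈ Set.Icc (0 : ℝ) 1)
    (hmem : F.leg s t' a ∈ F.tipSquare t) : t = t' := by
  by_contra htt
  exact not_lt.2 (dist_le_two_of_mem_square hmem) (hF.dist_leg s t t' h htt a ha)

theorem eq_of_mem_tipSquare {t' : T} {z : ℝ × ℝ} (h : z ∈ F.tipSquare t)
    (h' : z ∈ F.tipSquare t') : t = t' := by
  by_contra htt
  linarith [hF.dist_tip t t' htt, dist_triangle_left (F.tip t) (F.tip t') z,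
    dist_le_two_of_mem_square h, dist_le_two_of_mem_square h']

theorem exists_hit (h : F.rel s t) : ∃ τ ∈ Set.Ico (0 : ℝ) 1, F.leg s t τ ∈ F.tipSquare t ∧
    ∀ a ∈ Set.Icc 0 τ, F.leg s t a ∉ openSquare (squareCorner (F.tip t)) 3 := by
  refine exists_first_hit (F.continuousOn_leg s t h) (isCompact_square _ _).isClosed
    (isOpen_openSquare _ _) (openSquare_subset_square _ _) ?_ ?_
  · rw [F.leg_zero s t h]
    exact hF.center_notMem_tipSquare s t
  · rw [F.leg_one s t h]
    exact mem_openSquare_squareCorner _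

/-- The time at which a leg is cut off. -/
noncomputable def hit (h : F.rel s t) : ℝ := (hF.exists_hit h).choose

theorem hit_mem_Ico (h : F.rel s t) : hF.hit h ∈ Set.Ico (0 : ℝ) 1 :=
  (hF.exists_hit h).choose_spec.1

theorem leg_hit_mem_tipSquare (h : F.rel s t) : F.leg s t (hF.hit h) ∈ F.tipSquare t :=
  (hF.exists_hit h).choose_spec.2.1

theorem leg_notMem_openSquare (h : F.rel s t) {a : ℝ} (ha : a ∈ Set.Icc 0 (hF.hit h)) :
    F.leg s t a ∉ openSquare (squareCorner (F.tip t)) 3 :=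
  (hF.exists_hit h).choose_spec.2.2 a ha

theorem Icc_hit_subset (h : F.rel s t) : Set.Icc 0 (hF.hit h) ⊆ Set.Icc 0 1 :=
  Set.Icc_subset_Icc_right (hF.hit_mem_Ico h).2.le

theorem continuousOn_leg_hit (h : F.rel s t) :
    ContinuousOn (F.leg s t) (Set.Icc 0 (hF.hit h)) :=
  (F.continuousOn_leg s t h).mono (hF.Icc_hit_subset h)

/-- The star `s` with each leg cut off where it reaches the square of its tip. -/
def truncation (s : S) : Set (ℝ × ℝ) :=
  insert (F.center s) (⋃ t, ⋃ h : F.rel s t, F.leg s t '' Set.Icc 0 (hF.hit h))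

theorem mem_truncation {z : ℝ × ℝ} : z ∈ hF.truncation s ↔
    z = F.center s ∨ ∃ (t : T) (h : F.rel s t), ∃ a ∈ Set.Icc 0 (hF.hit h), F.leg s t a = z := by
  simp only [truncation, Set.mem_insert_iff, Set.mem_iUnion, Set.mem_image]

theorem isCompact_truncation [Finite T] (s : S) : IsCompact (hF.truncation s) :=
  (isCompact_iUnion fun _ => isCompact_iUnion fun h =>
    isCompact_Icc.image_of_continuousOn (hF.continuousOn_leg_hit h)).insert _

theorem isPreconnected_truncation (s : S) : IsPreconnected (hF.truncation s) := by
  refine isPreconnected_of_forall (F.center s) fun z hz => ?_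
  rcases hF.mem_truncation.1 hz with rfl | ⟨t, h, a, ha, rfl⟩
  · exact ⟨{F.center s}, Set.singleton_subset_iff.2 hz, rfl, rfl, isPreconnected_singleton⟩
  · refine ⟨F.leg s t '' Set.Icc 0 (hF.hit h), ?_,
      ⟨0, Set.left_mem_Icc.2 (hF.hit_mem_Ico h).1, F.leg_zero s t h⟩, ⟨a, ha, rfl⟩,
      isPreconnected_Icc.image _ (hF.continuousOn_leg_hit h)⟩
    rintro _ ⟨b, hb, rfl⟩
    exact hF.mem_truncation.2 (Or.inr ⟨t, h, b, hb, rfl⟩)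

theorem truncation_subset_body (s : S) : hF.truncation s ⊆ F.body s := by
  intro z hz
  rcases hF.mem_truncation.1 hz with rfl | ⟨t, h, a, ha, rfl⟩
  · exact F.center_mem_body s
  · exact F.leg_mem_body s t h a ⟨ha.1, ha.2.trans_lt (hF.hit_mem_Ico h).2⟩

theorem truncation_notMem_openSquare {z : ℝ × ℝ} (hz : z ∈ hF.truncation s) :
    z ∉ openSquare (squareCorner (F.tip t)) 3 := by
  intro hzt
  rcases hF.mem_truncation.1 hz with rfl | ⟨t', h, a, ha, rfl⟩
  · exact hF.center_notMem_tipSquare s t (openSquare_subset_square _ _ hzt)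
  · obtain rfl := hF.eq_of_leg_mem_tipSquare h (hF.Icc_hit_subset h ha)
      (openSquare_subset_square _ _ hzt)
    exact hF.leg_notMem_openSquare h ha hzt

theorem truncation_inter_tipSquare_nonempty :
    (hF.truncation s ∩ F.tipSquare t).Nonempty ↔ F.rel s t := by
  constructor
  · rintro ⟨z, hz, hzt⟩
    rcases hF.mem_truncation.1 hz with rfl | ⟨t', h, a, ha, rfl⟩
    · exact absurd hzt (hF.center_notMem_tipSquare s t)
    · rwa [hF.eq_of_leg_mem_tipSquare h (hF.Icc_hit_subset h ha) hzt]
  · exact fun h => ⟨_, hF.mem_truncation.2 (Or.inr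
      ⟨t, h, hF.hit h, Set.right_mem_Icc.2 (hF.hit_mem_Ico h).1, rfl⟩),
      hF.leg_hit_mem_tipSquare h⟩

/-- The truncated stars together with the squares of the tips. -/
noncomputable def continuaLayout [Finite T] : ContinuaLayout S T where
  A := hF.truncation
  o t := squareCorner (F.tip t)
  m := 3
  isCompact := hF.isCompact_truncation
  isPreconnected := hF.isPreconnected_truncation
  disjoint s s' h := (F.disjoint_body s s' h).mono (hF.truncation_subset_body s)
    (hF.truncation_subset_body s')
  one_le := by norm_num
  eq_of_mem_square _ _ _ := hF.eq_of_mem_tipSquare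
  avoid _ _ _ := hF.truncation_notMem_openSquare
  exists_nonempty t := (F.exists_rel t).imp fun _ => hF.truncation_inter_tipSquare_nonempty.2

theorem meeting_continuaLayout [Finite T] : hF.continuaLayout.meeting t = {s | F.rel s t} :=
  Set.ext fun _ => hF.truncation_inter_tipSquare_nonempty

end IsSpread

variable (F) {n : ℕ}

/-- The image of the stars under `z ↦ n • z`. -/
def dilate (hn : 0 < n) : StarSystem S T where
  rel := F.rel
  center s := (n : ℝ) • F.center s
  tip t := (n : ℝ) • F.tip t
  leg s t a := (n : ℝ) • F.leg s t a
  body s := (fun z => (n : ℝ) • z) '' F.body s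
  continuousOn_leg s t h := (continuous_const_smul (n : ℝ)).comp_continuousOn
    (F.continuousOn_leg s t h)
  leg_zero s t h := by rw [F.leg_zero s t h]
  leg_one s t h := by rw [F.leg_one s t h]
  center_mem_body s := ⟨_, F.center_mem_body s, rfl⟩
  leg_mem_body s t h a ha := ⟨_, F.leg_mem_body s t h a ha, rfl⟩
  disjoint_body s s' h :=
    (Set.disjoint_image_iff (smul_right_injective _ (by positivity))).2 (F.disjoint_body s s' h)
  tip_notMem_body s t h := F.tip_notMem_body s t <|
    (smul_right_injective (ℝ × ℝ) (r := (n : ℝ)) (by positivity)).mem_set_image.1 h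
  tip_injective := (smul_right_injective _ (by positivity)).comp F.tip_injective
  exists_rel := F.exists_rel

theorem tip_notMem_leg {t' : T} (h : F.rel s t') (htt : t ≠ t') :
    F.tip t ∉ F.leg s t' '' Set.Icc 0 1 := by
  rintro ⟨a, ha, hat⟩
  rcases ha.2.lt_or_eq with ha1 | rfl
  · exact F.tip_notMem_body s t (hat ▸ F.leg_mem_body s t' h a ⟨ha.1, ha1⟩)
  · rw [F.leg_one s t' h] at hat
    exact htt (F.tip_injective hat.symm)

variable [Finite S] [Finite T]

theorem exists_isSpread_dilate : ∃ (n : ℕ) (hn : 0 < n), (F.dilate hn).IsSpread := by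
  have centers : ∀ᶠ n : ℕ in Filter.atTop, ∀ s t, ∀ z ∈ ({F.center s} : Set (ℝ × ℝ)),
      ∀ z' ∈ ({F.tip t} : Set (ℝ × ℝ)), 2 < dist ((n : ℝ) • z) ((n : ℝ) • z') := by
    simp only [Filter.eventually_all]
    exact fun s t => eventually_lt_dist_smul isCompact_singleton isClosed_singleton
      (Set.disjoint_singleton.2
        (ne_of_mem_of_not_mem (F.center_mem_body s) (F.tip_notMem_body s t))) 2
  have legs : ∀ᶠ n : ℕ in Filter.atTop, ∀ s t t', F.rel s t' → t ≠ t' →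
      ∀ z ∈ F.leg s t' '' Set.Icc 0 1, ∀ z' ∈ ({F.tip t} : Set (ℝ × ℝ)),
      2 < dist ((n : ℝ) • z) ((n : ℝ) • z') := by
    simp only [Filter.eventually_all]
    exact fun s t t' h htt => eventually_lt_dist_smul
      (isCompact_Icc.image_of_continuousOn (F.continuousOn_leg s t' h)) isClosed_singleton
      (Set.disjoint_singleton_right.2 (F.tip_notMem_leg h htt)) 2
  have tips : ∀ᶠ n : ℕ in Filter.atTop, ∀ t t', t ≠ t' → ∀ z ∈ ({F.tip t} : Set (ℝ × ℝ)),
      ∀ z' ∈ ({F.tip t'} : Set (ℝ × ℝ)), 4 < dist ((n : ℝ) • z) ((n : ℝ) • z') := by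
    simp only [Filter.eventually_all]
    exact fun t t' h => eventually_lt_dist_smul isCompact_singleton isClosed_singleton
      (Set.disjoint_singleton.2 (F.tip_injective.ne h)) 4
  obtain ⟨n, hcenters, hlegs, htips, hn⟩ :=
    (centers.and (legs.and (tips.and (Filter.eventually_gt_atTop 0)))).exists
  exact ⟨n, hn, fun s t => hcenters s t _ rfl _ rfl,
    fun s t t' h htt a ha => hlegs s t t' h htt _ ⟨a, ha, rfl⟩ _ rfl,
    fun t t' h => htips t t' h _ rfl _ rfl⟩

theorem exists_coloring {k n : ℕ} (hcyc : CyclicColoringBound k n) (hk : 4 ≤ k) (hn : 0 < n)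
    (hcard : ∀ t, {s | F.rel s t}.ncard ≤ k) :
    ∃ c : S → Fin n, ∀ t, Set.InjOn c {s | F.rel s t} := by
  obtain ⟨r, hr, hF⟩ := F.exists_isSpread_dilate
  have hmeet : ∀ t, hF.continuaLayout.meeting t = {s | F.rel s t} := fun _ =>
    hF.meeting_continuaLayout
  simpa only [hmeet] using hF.continuaLayout.exists_coloring hcyc hk hn fun t => by
    simpa only [hmeet] using hcard t

end StarSystem

end GridMap

/-! ### Independent sets in plane graphs -/

namespace PlaneEmbedding

variable {V : Type*} {G : SimpleGraph V} (emb : PlaneEmbedding G) {I : Set V} {u v : V}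

/-- The drawing of the star of `v`, without the neighbors of `v`. -/
def star (v : V) : Set (ℝ × ℝ) :=
  {z | z = emb.pos v ∨
    ∃ e : G.edgeSet, v ∈ (e : Sym2 V) ∧ ∃ a ∈ Set.Ioo (0 : ℝ) 1, emb.arc e a = z}

theorem exists_directed_arc (h : G.Adj u v) : ∃ γ : ℝ → ℝ × ℝ, ContinuousOn γ (Set.Icc 0 1) ∧
    γ 0 = emb.pos u ∧ γ 1 = emb.pos v ∧ ∀ a ∈ Set.Ico (0 : ℝ) 1, γ a ∈ emb.star u := by
  have interior : ∀ a ∈ Set.Ioo (0 : ℝ) 1, emb.arc ⟨s(u, v), h⟩ a ∈ emb.star u := fun a ha =>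
    Or.inr ⟨_, Sym2.mem_mk_left u v, a, ha, rfl⟩
  obtain ⟨x, y, hxy, h0, h1⟩ := emb.arc_ends ⟨s(u, v), h⟩
  rcases Sym2.eq_iff.1 hxy with ⟨rfl, rfl⟩ | ⟨rfl, rfl⟩
  · refine ⟨_, emb.arc_cont _, h0, h1, fun a ha => ?_⟩
    rcases ha.1.eq_or_lt with rfl | ha0
    · exact Or.inl h0
    · exact interior a ⟨ha0, ha.2⟩
  · refine ⟨fun a => emb.arc ⟨s(u, v), h⟩ (1 - a), ?_, by simpa using h1, by simpa using h0,
      fun a ha => ?_⟩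
    · exact (emb.arc_cont _).comp (by fun_prop)
        fun a ha => ⟨by linarith [ha.2], by linarith [ha.1]⟩
    · rcases ha.1.eq_or_lt with rfl | ha0
      · exact Or.inl (by simpa using h1)
      · exact interior (1 - a) ⟨by linarith [ha.2], by linarith⟩

theorem disjoint_star (huv : u ≠ v) (hadj : ¬ G.Adj u v) : Disjoint (emb.star u) (emb.star v) := by
  rw [Set.disjoint_left]
  rintro z (rfl | ⟨e, he, a, ha, rfl⟩) (hz | ⟨f, hf, b, hb, hz⟩)
  · exact huv (emb.inj hz)
  · exact emb.arc_avoid f b hb ⟨_, hz.symm⟩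
  · exact emb.arc_avoid e a ha ⟨_, hz.symm⟩
  · by_cases hef : e = f
    · subst hef
      refine hadj (G.mem_edgeSet.1 ?_)
      rw [← (Sym2.mem_and_mem_iff huv).1 ⟨he, hf⟩]
      exact e.2
    · exact emb.arc_disjoint e f hef a ha b hb hz.symm

theorem pos_notMem_star (huv : u ≠ v) : emb.pos v ∉ emb.star u := by
  rintro (hz | ⟨e, -, a, ha, hz⟩)
  · exact huv (emb.inj hz).symm
  · exact emb.arc_avoid e a ha ⟨_, hz.symm⟩

include emb

theorem exists_starSystem (hI : G.IsIndepSet I) :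
    ∃ F : GridMap.StarSystem I {v | ∃ u ∈ I, G.Adj u v},
      F.rel = fun (u : I) (v : {v | ∃ u ∈ I, G.Adj u v}) => G.Adj u v := by
  have legs : ∀ (u : I) (v : {v | ∃ u ∈ I, G.Adj u v}), G.Adj u v → ∃ γ : ℝ → ℝ × ℝ,
      ContinuousOn γ (Set.Icc 0 1) ∧ γ 0 = emb.pos u ∧ γ 1 = emb.pos v ∧
        ∀ a ∈ Set.Ico (0 : ℝ) 1, γ a ∈ emb.star u := fun _ _ => emb.exists_directed_arc
  choose! γ hγ hγ0 hγ1 hγstar using legs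
  exact ⟨{
    rel := fun u v => G.Adj u v
    center := fun u => emb.pos u
    tip := fun v => emb.pos v
    leg := γ
    body := fun u => emb.star u
    continuousOn_leg := hγ
    leg_zero := hγ0
    leg_one := hγ1
    center_mem_body := fun u => Or.inl rfl
    leg_mem_body := hγstar
    disjoint_body := fun u v huv => emb.disjoint_star (Subtype.coe_ne_coe.2 huv)
      (hI u.2 v.2 (Subtype.coe_ne_coe.2 huv))
    tip_notMem_body := by
      rintro u ⟨v, w, hw, hwv⟩
      refine emb.pos_notMem_star ?_
      rintro rfl
      exact hI hw u.2 hwv.ne hwv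
    tip_injective := emb.inj.comp Subtype.val_injective
    exists_rel := fun ⟨_, u, hu, huv⟩ => ⟨⟨u, hu⟩, huv⟩ }, rfl⟩

theorem exists_coloring_of_isIndepSet [Finite V] {k n : ℕ} (hcyc : CyclicColoringBound k n)
    (hk : 4 ≤ k) (hn : 0 < n) (hI : G.IsIndepSet I)
    (hcard : ∀ v, {u | G.Adj v u ∧ u ∈ I}.ncard ≤ k) :
    ∃ c : V → Fin n, ∀ v, Set.InjOn c {u | G.Adj v u ∧ u ∈ I} := by
  classical
  obtain ⟨F, hF⟩ := emb.exists_starSystem hI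
  obtain ⟨c, hc⟩ := F.exists_coloring hcyc hk hn fun v => by
    refine le_trans ?_ (hcard v)
    simp only [hF]
    exact Set.ncard_le_ncard_of_injOn Subtype.val (fun u hu => ⟨Adj.symm hu, u.2⟩)
      Subtype.val_injective.injOn (Set.toFinite _)
  refine ⟨fun v => if h : v ∈ I then c ⟨v, h⟩ else ⟨0, hn⟩, ?_⟩
  rintro w u ⟨hwu, hu⟩ v ⟨hwv, hv⟩ huv
  simp only [hu, hv, dif_pos] at huv
  simp only [hF] at hc
  exact congrArg Subtype.val (hc ⟨w, u, hu, hwu.symm⟩ hwu.symm hwv.symm huv)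

end PlaneEmbedding

/-! ### Frugal colorings -/

section Frugal

variable {V α β : Type*} {G : SimpleGraph V} {k n : ℕ}

theorem isFrugalColoring_comp_iff {f : α → β} (hf : Function.Injective f) {c : V → α} :
    G.IsFrugalColoring k (f ∘ c) ↔ G.IsFrugalColoring k c := by
  refine and_congr (forall₂_congr fun u v => by simp only [Function.comp_apply, hf.ne_iff])
    (forall_congr' fun v => ⟨fun h a => ?_, fun h b => ?_⟩)
  · simpa only [Function.comp_apply, hf.eq_iff] using h (f a)
  · by_cases hb : ∃ a, f a = b
    · obtain ⟨a, rfl⟩ := hb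
      simpa only [Function.comp_apply, hf.eq_iff] using h a
    · have hempty : {u | u ∈ G.neighborSet v ∧ (f ∘ c) u = b} = ∅ :=
        Set.eq_empty_of_forall_notMem fun u hu => hb ⟨c u, hu.2⟩
      rw [hempty, Set.ncard_empty]
      exact Nat.zero_le k

theorem frugalChromaticNumber_le_card [Fintype α] {c : V → α} (hc : G.IsFrugalColoring k c) :
    G.frugalChromaticNumber k ≤ Fintype.card α :=
  Nat.sInf_le ⟨fun v => Fintype.equivFin α (c v), fun _ => Fin.is_lt _,
    (isFrugalColoring_comp_iff
      (Fin.val_injective.comp (Fintype.equivFin α).injective)).2 hc⟩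

theorem frugalChromaticNumber_bot_le_one : (⊥ : SimpleGraph V).frugalChromaticNumber k ≤ 1 := by
  have h : (⊥ : SimpleGraph V).IsFrugalColoring k fun _ => () :=
    ⟨fun _ _ h => h.elim, fun v a => by simp⟩
  simpa using frugalChromaticNumber_le_card h

variable [Finite V]

theorem isFrugalColoring_of_injective (hk : 1 ≤ k) {c : V → α} (hc : Function.Injective c) :
    G.IsFrugalColoring k c := by
  refine ⟨fun u v huv => hc.ne huv.ne, fun v a => le_trans ?_ hk⟩
  exact Set.ncard_le_one_iff_subsingleton.2 fun u hu w hw => hc (hu.2.trans hw.2.symm)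

theorem exists_isFrugalColoring (hk : 1 ≤ k) :
    ∃ c : V → Fin (G.frugalChromaticNumber k), G.IsFrugalColoring k c := by
  obtain ⟨m, ⟨e⟩⟩ := Finite.exists_equiv_fin V
  obtain ⟨c, hc, hfrugal⟩ := Nat.sInf_mem
    (s := {n : ℕ | ∃ c : V → ℕ, (∀ v, c v < n) ∧ G.IsFrugalColoring k c})
    ⟨m, fun v => e v, fun v => (e v).2,
      isFrugalColoring_of_injective hk (Fin.val_injective.comp e.injective)⟩
  exact ⟨fun v => ⟨c v, hc v⟩, (isFrugalColoring_comp_iff Fin.val_injective).1 hfrugal⟩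

theorem isFrugalColoring_one_iff {c : V → α} :
    G.IsFrugalColoring 1 c ↔ ∀ u v, G.square.Adj u v → c u ≠ c v := by
  simp only [IsFrugalColoring, square, fromRel_adj, Set.ncard_le_one (Set.toFinite _),
    mem_neighborSet, Set.mem_ofPred_eq]
  constructor
  · rintro ⟨hproper, hfrugal⟩ u v ⟨huv, (h | ⟨w, h, h'⟩) | (h | ⟨w, h, h'⟩)⟩ hc
    · exact hproper u v h hc
    · exact huv (hfrugal w (c v) u ⟨h.symm, hc⟩ v ⟨h', rfl⟩)
    · exact hproper v u h hc.symm
    · exact huv (hfrugal w (c v) u ⟨h', hc⟩ v ⟨h.symm, rfl⟩)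
  · refine fun h => ⟨fun u v huv => h u v ⟨huv.ne, Or.inl (Or.inl huv)⟩,
      fun w a u hu v hv => ?_⟩
    by_contra huv
    exact h u v ⟨huv, Or.inl (Or.inr ⟨w, hu.1.symm, hv.1⟩)⟩ (hu.2.trans hv.2.symm)

theorem chromaticNumber_square :
    G.square.chromaticNumber = (G.frugalChromaticNumber 1 : ℕ∞) := by
  refine le_antisymm ?_ (le_chromaticNumber_iff_colorable.2 fun n ⟨C⟩ => ?_)
  · obtain ⟨c, hc⟩ := exists_isFrugalColoring (G := G) le_rfl
    exact Colorable.chromaticNumber_le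
      ⟨Coloring.mk c fun {u v} h => isFrugalColoring_one_iff.1 hc u v h⟩
  · have hle : G.frugalChromaticNumber 1 ≤ Fintype.card (Fin n) :=
      frugalChromaticNumber_le_card (c := C) (isFrugalColoring_one_iff.2 fun _ _ h => C.valid h)
    rw [Fintype.card_fin] at hle
    exact_mod_cast hle

theorem frugalChromaticNumber_one_le_mul (hcyc : CyclicColoringBound k n) (hk : 4 ≤ k) (hn : 0 < n)
    (hG : G.IsPlanar) : G.frugalChromaticNumber 1 ≤ G.frugalChromaticNumber k * n := by
  obtain ⟨emb⟩ := hG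
  obtain ⟨c, hproper, hfrugal⟩ := exists_isFrugalColoring (G := G) (k := k) (by omega)
  have hclass : ∀ i, ∃ d : V → Fin n, ∀ w, Set.InjOn d {u | G.Adj w u ∧ c u = i} := fun i =>
    emb.exists_coloring_of_isIndepSet (I := {v | c v = i}) hcyc hk hn
      (fun u hu v hv _ h => hproper u v h (hu.trans hv.symm)) fun v => hfrugal v i
  choose d hd using hclass
  have hcd : G.IsFrugalColoring 1 fun v => (c v, d (c v) v) := by
    refine ⟨fun u v huv h => hproper u v huv (congrArg Prod.fst h), fun w a => ?_⟩
    refine Set.ncard_le_one_iff_subsingleton.2 ?_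
    rintro u ⟨hu, rfl⟩ v ⟨hv, hvu⟩
    obtain ⟨hc, hd'⟩ := Prod.ext_iff.1 hvu
    dsimp only at hc hd'
    rw [hc] at hd'
    exact hd (c u) w ⟨hu, rfl⟩ ⟨hv, hc⟩ hd'.symm
  simpa using frugalChromaticNumber_le_card hcd

end Frugal

theorem cyclic_implies_wegner_general {V : Type*} [Fintype V] {G : SimpleGraph V}
    [DecidableRel G.Adj] {k : ℕ} (hk : 4 ≤ k) (hcyc : CyclicColoringBound k (3 * k / 2))
    (hG : G.IsPlanar)
    (hchi : G.frugalChromaticNumber k ≤ (G.maxDegree - 1) / k + 3) :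
    G.square.chromaticNumber = (G.frugalChromaticNumber 1 : ℕ∞) ∧
    G.frugalChromaticNumber 1 ≤ 3 * G.maxDegree / 2 + 9 * k / 2 - 1 := by
  refine ⟨chromaticNumber_square, ?_⟩
  rcases Nat.eq_zero_or_pos G.maxDegree with hΔ | hΔ
  · obtain rfl := maxDegree_eq_zero_iff.1 hΔ
    exact frugalChromaticNumber_bot_le_one.trans (by omega)
  · have hclasses : G.frugalChromaticNumber 1 ≤ G.frugalChromaticNumber k * (3 * k / 2) :=
      frugalChromaticNumber_one_le_mul hcyc hk (by omega) hG
    have hq : (G.maxDegree - 1) / k * k ≤ G.maxDegree - 1 := Nat.div_mul_le_self _ _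
    have hdouble : 2 * G.frugalChromaticNumber 1 ≤ 3 * (G.maxDegree - 1) + 9 * k := calc
      2 * G.frugalChromaticNumber 1
          ≤ G.frugalChromaticNumber k * (2 * (3 * k / 2)) := by linarith
      _ ≤ ((G.maxDegree - 1) / k + 3) * (3 * k) :=
        Nat.mul_le_mul hchi (Nat.mul_div_le (3 * k) 2)
      _ ≤ 3 * (G.maxDegree - 1) + 9 * k := by linarith
    omega

/-- If `k ≥ 4` is even and every plane graph with all faces of size at most `k` has a
cyclic colouring with at most `(3/2)k` colours, then every planar graph `G` with
`χ_k(G) ≤ ⌊(Δ(G) - 1)/k⌋ + 3` satisfies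
`χ(G²) = χ_1(G) ≤ ⌊(3/2)Δ(G)⌋ + (9/2)k - 1`. -/
theorem cyclic_implies_wegner (k : ℕ) (hk4 : 4 ≤ k) (hke : Even k)
    (hcyc : ∀ (n : ℕ) (H : SimpleGraph (Fin n)) (emb : PlaneEmbedding H),
      emb.MaxFaceSizeLE k → emb.HasCyclicColoring (3 * k / 2))
    {V : Type} [Fintype V] (G : SimpleGraph V) [DecidableRel G.Adj]
    (hG : G.IsPlanar)
    (hchi : G.frugalChromaticNumber k ≤ (G.maxDegree - 1) / k + 3) :
    G.square.chromaticNumber = (G.frugalChromaticNumber 1 : ℕ∞) ∧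
    G.frugalChromaticNumber 1 ≤ 3 * G.maxDegree / 2 + 9 * k / 2 - 1 :=
  cyclic_implies_wegner_general hk4 hcyc hG hchi
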